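/- Let p be a prime and let ℤ/p act smoothly (by diffeomorphisms) on the standard smooth sphere S^n with n odd, and suppose the fixed point set (S^n)^{ℤ/p} is homeomorphic to a sphere S^k of odd dimension k. Then S^n admits a nowhere-vanishing equivariant vector field, i.e. a continuous section v of the tangent bundle of S^n with v(x) ≠ 0 for all x and d(g·)_x(v(x)) = v(g·x) for every g ∈ ℤ/p and x ∈ S^n, where d(g·)_x denotes the differential at x of the diffeomorphism given by the action of g. -/

import Mathlib

open Set unitInterval

namespace PaperTC

variable {G X : Type*}

/-- The orbit of `x` under the action `act`. -/
def orbit (act : G → X → X) (x : X) : Set X := {y | ∃ g, act g x = y}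

/-- The fixed point set of the action `act`. -/
def fixedSet (act : G → X → X) : Set X := {x | ∀ g, act g x = x}

/-- The fixed point set of a subset `S` of the acting group. -/
def fixedSetOf (act : G → X → X) (S : Set G) : Set X := {x | ∀ g ∈ S, act g x = x}

/-- `minCover P` is the least `k ≥ 1` satisfying `P k`, as an element of `ℕ∞`
(equal to `∞` if there is no such `k`). -/
noncomputable def minCover (P : ℕ → Prop) : ℕ∞ :=
  sInf {k : ℕ∞ | ∃ m : ℕ, k = m ∧ 1 ≤ m ∧ P m}

section Plain

variable (Y : Type*) [TopologicalSpace Y]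

/-- `Y × Y` can be covered by `k` open sets each admitting a motion planner. -/
def TCcover (k : ℕ) : Prop :=
  ∃ U : Fin k → Set (Y × Y),
    (∀ i, IsOpen (U i)) ∧ (⋃ i, U i) = univ ∧
    ∀ i, ∃ s : Y × Y → C(I, Y),
      ContinuousOn s (U i) ∧ ∀ p ∈ U i, s p 0 = p.1 ∧ s p 1 = p.2

/-- Topological complexity (non-reduced, possibly infinite). -/
noncomputable def TC : ℕ∞ := minCover (TCcover Y)

/-- `Y` can be covered by `k` open sets, each of which can be deformed within `Y`
to a point. -/
def catCover (k : ℕ) : Prop :=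
  ∃ U : Fin k → Set Y,
    (∀ i, IsOpen (U i)) ∧ (⋃ i, U i) = univ ∧
    ∀ i, ∃ H : Y × I → Y,
      ContinuousOn H (U i ×ˢ (univ : Set I)) ∧ (∀ x ∈ U i, H (x, 0) = x) ∧
      ∃ y₀, ∀ x ∈ U i, H (x, 1) = y₀

/-- Non-reduced Lusternik–Schnirelmann category. -/
noncomputable def cat : ℕ∞ := minCover (catCover Y)

end Plain

section Equivariant

variable [TopologicalSpace X] (act : G → X → X)

/-- `X × X` can be covered by `k` invariant open sets each admitting an
equivariant motion planner. -/
def eqTCcover (k : ℕ) : Prop :=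
  ∃ U : Fin k → Set (X × X),
    (∀ i, IsOpen (U i)) ∧ (⋃ i, U i) = univ ∧
    ∀ i, (∀ g p, p ∈ U i → (act g p.1, act g p.2) ∈ U i) ∧
      ∃ s : X × X → C(I, X),
        ContinuousOn s (U i) ∧
        (∀ p ∈ U i, s p 0 = p.1 ∧ s p 1 = p.2) ∧
        (∀ g p, p ∈ U i → ∀ t : I, s (act g p.1, act g p.2) t = act g (s p t))

/-- Equivariant topological complexity `TC_G` of Colman and Grant. -/
noncomputable def eqTC : ℕ∞ := minCover (eqTCcover act)

/-- `X × X` can be covered by `k` `(G × G)`-invariant open sets, each admitting a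
`(G × G)`-equivariant section of `π^G : P X ×_{X/G} P X → X × X`; such a section is
recorded by a pair of paths `s₁ p`, `s₂ p`, with the orbit of the endpoint of the first
equal to the orbit of the starting point of the second. -/
def invTCcover (k : ℕ) : Prop :=
  ∃ U : Fin k → Set (X × X),
    (∀ i, IsOpen (U i)) ∧ (⋃ i, U i) = univ ∧
    ∀ i, (∀ g₁ g₂ : G, ∀ p, p ∈ U i → (act g₁ p.1, act g₂ p.2) ∈ U i) ∧
      ∃ s₁ s₂ : X × X → C(I, X),
        ContinuousOn s₁ (U i) ∧ ContinuousOn s₂ (U i) ∧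
        (∀ p ∈ U i, s₁ p 0 = p.1 ∧ s₂ p 1 = p.2 ∧
          orbit act (s₁ p 1) = orbit act (s₂ p 0)) ∧
        (∀ g₁ g₂ : G, ∀ p, p ∈ U i → ∀ t : I,
          s₁ (act g₁ p.1, act g₂ p.2) t = act g₁ (s₁ p t) ∧
          s₂ (act g₁ p.1, act g₂ p.2) t = act g₂ (s₂ p t))

/-- Invariant topological complexity `TC^G` of Lubawski and Marzantowicz. -/
noncomputable def invTC : ℕ∞ := minCover (invTCcover act)

/-- The invariant open set `U` is `G`-compressible into `A`: the inclusion `U ↪ X` is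
`G`-equivariantly homotopic to a `G`-map with values in `A`. -/
def GCompressible (A : Set X) (U : Set X) : Prop :=
  (∀ g x, x ∈ U → act g x ∈ U) ∧
  ∃ H : X × I → X,
    ContinuousOn H (U ×ˢ (univ : Set I)) ∧ (∀ x ∈ U, H (x, 0) = x) ∧
    (∀ g x, x ∈ U → ∀ t : I, H (act g x, t) = act g (H (x, t))) ∧
    (∀ x ∈ U, H (x, 1) ∈ A)

/-- A `G`-categorical set: compressible into a single orbit. -/
def GCategorical (U : Set X) : Prop :=
  ∃ x₀ : X, GCompressible act (orbit act x₀) U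

/-- `X` can be covered by `k` open `G`-categorical sets. -/
def catGCover (k : ℕ) : Prop :=
  ∃ U : Fin k → Set X,
    (∀ i, IsOpen (U i)) ∧ (⋃ i, U i) = univ ∧ ∀ i, GCategorical act (U i)

/-- Equivariant Lusternik–Schnirelmann category `cat_G`. -/
noncomputable def catG : ℕ∞ := minCover (catGCover act)

/-- `X` can be covered by `k` open sets `G`-compressible into `{star}`. -/
def pointedCatGCover (star : X) (k : ℕ) : Prop :=
  ∃ U : Fin k → Set X,
    (∀ i, IsOpen (U i)) ∧ (⋃ i, U i) = univ ∧
    ∀ i, GCompressible act {star} (U i)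

/-- The pointed equivariant category `_{{⋆}}cat_G(X)`. -/
noncomputable def pointedCatG (star : X) : ℕ∞ := minCover (pointedCatGCover act star)

/-- `X` is `G`-contractible: the identity is `G`-homotopic to a map with values in a
single orbit. -/
def GContractible : Prop :=
  ∃ H : X × I → X,
    Continuous H ∧ (∀ x, H (x, 0) = x) ∧
    (∀ g x, ∀ t : I, H (act g x, t) = act g (H (x, t))) ∧
    ∃ x₀ : X, ∀ x, H (x, 1) ∈ orbit act x₀

end Equivariant

/-- The orbit space `X/G` with the quotient topology. -/
abbrev OrbitSpace (act : G → X → X) : Type _ := Quot (fun x y => ∃ g, act g x = y)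

end PaperTC
namespace PaperTC

/-- The unit sphere `S^n ⊆ ℝ^{n+1}` (with the Euclidean metric). -/
abbrev Sph (n : ℕ) : Set (EuclideanSpace ℝ (Fin (n + 1))) := Metric.sphere 0 1

/-- The action of `G` on the unit sphere `S^n` obtained by restricting an orthogonal
representation of `G` on `ℝ^{n+1}`. -/
noncomputable def sphereAct {G : Type*} [Monoid G] {n : ℕ}
    (ρ : G →* (EuclideanSpace ℝ (Fin (n + 1)) ≃ₗᵢ[ℝ] EuclideanSpace ℝ (Fin (n + 1)))) :
    G → ↥(Sph n) → ↥(Sph n) := fun g x =>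
  ⟨ρ g x, mem_sphere_zero_iff_norm.mpr (by
    rw [(ρ g).norm_map]; exact mem_sphere_zero_iff_norm.mp x.2)⟩

end PaperTC

open PaperTC Manifold

/-!
The displacements `φ x - x` of a small fixed-point-free self-map `φ` of the fixed set `F`, averaged
over the group, give an equivariant field that does not vanish on `F`: the differential of each
group element almost fixes a short chord of `F`. In the stereographic chart from a fixed point, a
generic equivariant perturbation off `F` has only nondegenerate zeros, and the action is free at
them. The orbit of a zero can be moved off `F` up to the orbit of any other zero: near a point of
`F` the action is linear in a suitable chart, and some translate of a given target is not separated
from the moving zero by `F`. Zeros of opposite sign can therefore be cancelled in pairs of orbits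
until all remaining zeros have the same sign. Their number is, up to sign, the degree of the field
relative to a nowhere-vanishing field with the same behaviour at infinity, built from a complex
structure on `ℝⁿ⁺¹`; this degree is zero, so no zero remains.
-/

namespace EquivariantVectorField

open Topology Filter MeasureTheory Metric
open scoped ContDiff

/-! ### Degree -/

section Degree

variable {H : Type*} [NormedAddCommGroup H]

lemma exists_contDiff_cutoff [NormedSpace ℝ H] [FiniteDimensional ℝ H] {C O : Set H}
    (hC : IsCompact C) (hO : IsOpen O) (hCO : C ⊆ O) :
    ∃ χ : H → ℝ, ContDiff ℝ 1 χ ∧ (∀ x, χ x ∈ Icc 0 1) ∧ HasCompactSupport χ ∧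
      tsupport χ ⊆ O ∧ ∀ᶠ x in 𝓝ˢ C, χ x = 1 := by
  obtain ⟨T, hT, hCT, hTO⟩ := exists_compact_between hC hO hCO
  obtain ⟨χ, hone, hzero, hIcc⟩ := exists_contMDiffMap_one_nhds_of_subset_interior
    (n := (1 : ℕ∞)) 𝓘(ℝ, H) hC.isClosed hCT
  have hsupp : Function.support χ ⊆ T := fun x hx => by_contra fun hxT => hx (hzero x hxT)
  exact ⟨χ, mod_cast χ.contMDiff.contDiff, hIcc, .of_support_subset_isCompact hT hsupp,
    (closure_minimal hsupp hT.isClosed).trans hTO, hone⟩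

lemma bijective_id_add_of_lipschitzWith [NormedSpace ℝ H] [CompleteSpace H] {u : H → H}
    {c : NNReal} (hc : c < 1) (hu : LipschitzWith c u) : Function.Bijective fun x => x + u x := by
  have happrox : ApproximatesLinearOn (fun x => x + u x)
      ((ContinuousLinearEquiv.refl ℝ H : H ≃L[ℝ] H) : H →L[ℝ] H) univ c := by
    rw [ApproximatesLinearOn.approximatesLinearOn_iff_lipschitzOnWith, lipschitzOnWith_univ]
    convert hu using 1
    ext x; simp
  have hlt : Subsingleton H ∨ c < ‖((ContinuousLinearEquiv.refl ℝ H).symm : H →L[ℝ] H)‖₊⁻¹ := by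
    refine (subsingleton_or_nontrivial H).imp_right fun (_ : Nontrivial H) => ?_
    have : ‖((ContinuousLinearEquiv.refl ℝ H).symm : H →L[ℝ] H)‖₊ = 1 :=
      NNReal.eq (ContinuousLinearMap.norm_id (𝕜 := ℝ) (E := H))
    simpa [this] using hc
  exact ⟨injOn_univ.1 (happrox.injOn hlt), happrox.surjective hlt⟩

lemma bijective_smul_add_of_lipschitzWith [NormedSpace ℝ H] [CompleteSpace H] {u : H → H}
    {c : NNReal} {a : ℝ} (ha : c < a) (hu : LipschitzWith c u) :
    Function.Bijective fun x => a • x + u x := by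
  have ha0 : 0 < a := c.coe_nonneg.trans_lt ha
  have hlt : ‖a⁻¹‖₊ * c < 1 := by
    rw [← NNReal.coe_lt_coe, NNReal.coe_mul, coe_nnnorm, norm_inv, Real.norm_of_nonneg ha0.le,
      inv_mul_lt_iff₀ ha0]
    simpa using ha
  convert (MulAction.bijective₀ ha0.ne').comp
    (bijective_id_add_of_lipschitzWith hlt ((lipschitzWith_smul a⁻¹).comp hu)) using 1
  ext x
  simp [smul_smul, ha0.ne']

/-- The functions `g a x` that are polynomial in the real parameter `a`, with coefficients
continuous in `x`. -/
def polynomialFamilies (H : Type*) [TopologicalSpace H] : Subalgebra ℝ (ℝ → H → ℝ) where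
  carrier := {g | ∃ p : Polynomial C(H, ℝ), ∀ a x, g a x = p.eval (ContinuousMap.const H a) x}
  mul_mem' := by rintro _ _ ⟨p, hp⟩ ⟨q, hq⟩; exact ⟨p * q, by simp [hp, hq]⟩
  add_mem' := by rintro _ _ ⟨p, hp⟩ ⟨q, hq⟩; exact ⟨p + q, by simp [hp, hq]⟩
  algebraMap_mem' r := ⟨Polynomial.C (ContinuousMap.const H r), by simp⟩

namespace polynomialFamilies

lemma const_mem {X : Type*} [TopologicalSpace X] {c : X → ℝ} (hc : Continuous c) :
    (fun _ x => c x) ∈ polynomialFamilies X :=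
  ⟨Polynomial.C ⟨c, hc⟩, by simp⟩

lemma param_mem {X : Type*} [TopologicalSpace X] : (fun a _ => a) ∈ polynomialFamilies X :=
  ⟨Polynomial.X, by simp⟩

lemma eval_mem {X : Type*} [TopologicalSpace X] {f : ℝ → X → ℝ} (hf : f ∈ polynomialFamilies X)
    (q : Polynomial ℝ) : (fun a x => q.eval (f a x)) ∈ polynomialFamilies X := by
  convert (Polynomial.aeval (⟨f, hf⟩ : polynomialFamilies X) q).2 using 1
  ext a x
  simp [Polynomial.aeval_def, Polynomial.eval₂_eq_sum_range, Polynomial.eval_eq_sum_range]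

lemma det_mem [NormedSpace ℝ H] [FiniteDimensional ℝ H] {A : H → H →L[ℝ] H} (hA : Continuous A) :
    (fun a x => (a • ContinuousLinearMap.id ℝ H + A x).det) ∈ polynomialFamilies H := by
  let b := Module.finBasis ℝ H
  have hdet : (fun a x => (a • ContinuousLinearMap.id ℝ H + A x).det) =
      ∑ τ : Equiv.Perm (Fin (Module.finrank ℝ H)), ((Equiv.Perm.sign τ : ℤ) : ℝ) •
        ∏ i, ((1 : Matrix _ _ ℝ) (τ i) i • (fun a _ => a) +
          fun _ x => LinearMap.toMatrix b b (A x : H →ₗ[ℝ] H) (τ i) i) := by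
    ext a x
    rw [ContinuousLinearMap.det, ← LinearMap.det_toMatrix b, Matrix.det_apply']
    simp [mul_comm]
  rw [hdet]
  refine sum_mem fun τ _ => Subalgebra.smul_mem _ (prod_mem fun i _ => add_mem
    (Subalgebra.smul_mem _ param_mem _) (const_mem ?_)) _
  simp only [LinearMap.toMatrix_apply]
  exact (LinearMap.continuous_of_finiteDimensional (b.coord (τ i))).comp (hA.clm_apply
    continuous_const)

lemma norm_smul_add_sq_mem [InnerProductSpace ℝ H] {w : H → H} (hw : Continuous w) :
    (fun a x => ‖a • x + w x‖ ^ 2) ∈ polynomialFamilies H := by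
  have hexpand : (fun a x => ‖a • x + w x‖ ^ 2) = (fun (a : ℝ) (_ : H) => a) *
      ((fun a _ => a) * (fun _ x => ‖x‖ ^ 2) + fun _ x => 2 * inner ℝ x (w x)) +
        fun _ x => ‖w x‖ ^ 2 := by
    ext a x
    simp only [norm_add_sq_real, real_inner_smul_left, norm_smul, mul_pow, Real.norm_eq_abs,
      sq_abs, Pi.add_apply, Pi.mul_apply]
    ring
  rw [hexpand]
  exact add_mem (mul_mem param_mem (add_mem (mul_mem param_mem (const_mem (by fun_prop)))
    (const_mem (by fun_prop)))) (const_mem (by fun_prop))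

end polynomialFamilies

lemma integrableOn_ball_of_continuous {X E : Type*} [MetricSpace X] [ProperSpace X]
    [MeasurableSpace X] [OpensMeasurableSpace X] {μ : Measure X}
    [IsFiniteMeasureOnCompacts μ] [NormedAddCommGroup E] {g : X → E} (hg : Continuous g) (x : X)
    (R : ℝ) : IntegrableOn g (ball x R) μ :=
  (hg.continuousOn.integrableOn_compact (isCompact_closedBall x R)).mono_set
    ball_subset_closedBall

lemma exists_polynomial_setIntegral_eq {X : Type*} [MetricSpace X] [ProperSpace X]
    [MeasurableSpace X] [OpensMeasurableSpace X] {μ : Measure X} [IsFiniteMeasureOnCompacts μ]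
    {g : ℝ → X → ℝ} (hg : g ∈ polynomialFamilies X) (c : X) (R : ℝ) :
    ∃ q : Polynomial ℝ, ∀ a, ∫ x in ball c R, g a x ∂μ = q.eval a := by
  obtain ⟨p, hp⟩ := hg
  refine ⟨∑ k ∈ Finset.range (p.natDegree + 1),
    Polynomial.C (∫ x in ball c R, p.coeff k x ∂μ) * Polynomial.X ^ k, fun a => ?_⟩
  simp only [Polynomial.eval_finsetSum, hp, Polynomial.eval_eq_sum_range (p := p),
    ContinuousMap.coe_sum, Finset.sum_apply, ContinuousMap.mul_apply, ContinuousMap.pow_apply,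
    ContinuousMap.const_apply]
  rw [integral_finsetSum _ fun i _ => integrableOn_ball_of_continuous (by fun_prop) c R]
  simp [integral_mul_const]

lemma continuous_det_fderiv [NormedSpace ℝ H] {f : H → H} (hf : ContDiff ℝ 1 f) :
    Continuous fun x => (fderiv ℝ f x).det :=
  ContinuousLinearMap.continuous_det.comp (hf.continuous_fderiv one_ne_zero)

variable [InnerProductSpace ℝ H] [FiniteDimensional ℝ H]

lemma eventually_forall_closedBall_det_pos {u : H → H} (hu : ContDiff ℝ 1 u) (R : ℝ) :
    ∀ᶠ a : ℝ in atTop, ∀ x ∈ closedBall (0 : H) R,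
      0 < (a • ContinuousLinearMap.id ℝ H + fderiv ℝ u x).det := by
  have hsmall : ∀ᶠ t in 𝓝 (0 : ℝ), ∀ x ∈ closedBall (0 : H) R,
      0 < (ContinuousLinearMap.id ℝ H + t • fderiv ℝ u x).det := by
    refine (isCompact_closedBall (0 : H) R).eventually_forall_of_forall_eventually fun x _ => ?_
    have hcont : Continuous fun z : ℝ × H =>
        (ContinuousLinearMap.id ℝ H + z.1 • fderiv ℝ u z.2).det := by
      have := hu.continuous_fderiv one_ne_zero
      exact ContinuousLinearMap.continuous_det.comp (by fun_prop)
    exact hcont.continuousAt.eventually_const_lt (by simp [ContinuousLinearMap.det])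
  filter_upwards [tendsto_inv_atTop_zero.eventually hsmall, eventually_gt_atTop 0]
    with a hpos ha x hx
  have hfactor : a • ContinuousLinearMap.id ℝ H + fderiv ℝ u x =
      a • (ContinuousLinearMap.id ℝ H + a⁻¹ • fderiv ℝ u x) := by
    rw [smul_add, smul_smul, mul_inv_cancel₀ ha.ne', one_smul]
  have := hpos x hx
  rw [hfactor]
  simp only [ContinuousLinearMap.det, ContinuousLinearMap.toLinearMap_smul,
    LinearMap.det_smul] at this ⊢
  positivity

section Integral

variable [MeasurableSpace H] [BorelSpace H]

lemma eventually_setIntegral_det_eq_setIntegral_image {u : H → H} (hu : ContDiff ℝ 1 u)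
    (hus : HasCompactSupport u) (R : ℝ) (φ : H → ℝ) :
    ∀ᶠ a : ℝ in atTop, (Function.Bijective fun x => a • x + u x) ∧
      ∫ x in ball (0 : H) R, (a • ContinuousLinearMap.id ℝ H + fderiv ℝ u x).det *
        φ (a • x + u x) = ∫ y in (fun x => a • x + u x) '' ball (0 : H) R, φ y := by
  obtain ⟨C, hC⟩ := hu.lipschitzWith_of_hasCompactSupport hus one_ne_zero
  filter_upwards [eventually_forall_closedBall_det_pos hu R, eventually_gt_atTop (C : ℝ)]
    with a hdet haC
  have hbij := bijective_smul_add_of_lipschitzWith haC hC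
  have hder : ∀ x ∈ ball (0 : H) R, HasFDerivWithinAt (fun x => a • x + u x)
      (a • ContinuousLinearMap.id ℝ H + fderiv ℝ u x) (ball 0 R) x := fun x _ =>
    (((hasFDerivAt_id x).const_smul a).add
      (hu.differentiable one_ne_zero x).hasFDerivAt).hasFDerivWithinAt
  refine ⟨hbij, ?_⟩
  rw [integral_image_eq_integral_abs_det_fderiv_smul volume measurableSet_ball hder
    hbij.1.injOn]
  refine setIntegral_congr_fun measurableSet_ball fun x hx => ?_
  simp only [abs_of_pos (hdet x (ball_subset_closedBall hx)), smul_eq_mul]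

-- For large `a` the maps `a • x + u x` and `a • x + v x` are bijections agreeing off the ball, so
-- they have the same image of the ball and the change of variables formula equates the two
-- integrals. Both are polynomials in `a`, so they still agree at `a = 0`.
lemma setIntegral_det_fderiv_mul_eval_eq_of_hasCompactSupport {u v : H → H} {R : ℝ}
    (hu : ContDiff ℝ 1 u) (hus : HasCompactSupport u) (hv : ContDiff ℝ 1 v)
    (hvs : HasCompactSupport v) (huv : ∀ x ∉ ball (0 : H) R, u x = v x) (q : Polynomial ℝ) :
    ∫ x in ball (0 : H) R, (fderiv ℝ u x).det * q.eval (‖u x‖ ^ 2) =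
      ∫ x in ball (0 : H) R, (fderiv ℝ v x).det * q.eval (‖v x‖ ^ 2) := by
  have hpoly : ∀ w : H → H, ContDiff ℝ 1 w → ∃ Q : Polynomial ℝ, ∀ a,
      ∫ x in ball (0 : H) R, (a • ContinuousLinearMap.id ℝ H + fderiv ℝ w x).det *
        q.eval (‖a • x + w x‖ ^ 2) = Q.eval a := fun w hw =>
    exists_polynomial_setIntegral_eq (mul_mem
      (polynomialFamilies.det_mem (hw.continuous_fderiv one_ne_zero))
      (polynomialFamilies.eval_mem (polynomialFamilies.norm_smul_add_sq_mem hw.continuous) q)) 0 R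
  obtain ⟨U, hU⟩ := hpoly u hu
  obtain ⟨V, hV⟩ := hpoly v hv
  have hlarge : ∀ᶠ a in atTop, U.eval a = V.eval a := by
    filter_upwards [eventually_setIntegral_det_eq_setIntegral_image hu hus R fun y =>
      q.eval (‖y‖ ^ 2), eventually_setIntegral_det_eq_setIntegral_image hv hvs R fun y =>
      q.eval (‖y‖ ^ 2)] with a hua hva
    have himage : (fun x => a • x + u x) '' ball (0 : H) R =
        (fun x => a • x + v x) '' ball (0 : H) R := by
      refine compl_injective ?_
      rw [← image_compl_eq hua.1, ← image_compl_eq hva.1]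
      exact image_congr fun x hx => by rw [huv x hx]
    rw [← hU, ← hV, hua.2, hva.2, himage]
  have hUV : U = V := by
    obtain ⟨a₀, ha₀⟩ := eventually_atTop.1 hlarge
    exact Polynomial.eq_of_infinite_eval_eq _ _ ((Ici_infinite a₀).mono ha₀)
  have hzero := (hU 0).trans ((congrArg (Polynomial.eval 0) hUV).trans (hV 0).symm)
  simpa using hzero

lemma setIntegral_det_fderiv_mul_eval_eq {u v : H → H} {R : ℝ} (hu : ContDiff ℝ 1 u)
    (hv : ContDiff ℝ 1 v) (huv : ∀ x ∉ ball (0 : H) R, u x = v x) (q : Polynomial ℝ) :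
    ∫ x in ball (0 : H) R, (fderiv ℝ u x).det * q.eval (‖u x‖ ^ 2) =
      ∫ x in ball (0 : H) R, (fderiv ℝ v x).det * q.eval (‖v x‖ ^ 2) := by
  obtain ⟨χ, hχ, -, hχs, -, hχ1⟩ := exists_contDiff_cutoff
    (isCompact_closedBall (0 : H) R) isOpen_univ (subset_univ _)
  have hcut : ∀ w : H → H, ∫ x in ball (0 : H) R, (fderiv ℝ (fun x => χ x • w x) x).det *
      q.eval (‖χ x • w x‖ ^ 2) =
      ∫ x in ball (0 : H) R, (fderiv ℝ w x).det * q.eval (‖w x‖ ^ 2) := by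
    refine fun w => setIntegral_congr_fun measurableSet_ball fun x hx => ?_
    have heq : (fun x => χ x • w x) =ᶠ[𝓝 x] w := by
      filter_upwards [hχ1.filter_mono (nhds_le_nhdsSet (ball_subset_closedBall hx))] with y hy
      rw [hy, one_smul]
    simp only [heq.fderiv_eq, heq.self_of_nhds]
  rw [← hcut u, ← hcut v]
  exact setIntegral_det_fderiv_mul_eval_eq_of_hasCompactSupport (hχ.smul hu) hχs.smul_right
    (hχ.smul hv) hχs.smul_right (fun x hx => by simp [huv x hx]) q

lemma abs_setIntegral_mul_sub_le {X : Type*} [MetricSpace X] [ProperSpace X]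
    [MeasurableSpace X] [OpensMeasurableSpace X] {μ : Measure X} [IsFiniteMeasureOnCompacts μ]
    {d φ ψ : X → ℝ} (hd : Continuous d) (hφ : Continuous φ) (hψ : Continuous ψ) {c : X}
    {R ε : ℝ} (h : ∀ x ∈ ball c R, |φ x - ψ x| ≤ ε) :
    |(∫ x in ball c R, d x * φ x ∂μ) - ∫ x in ball c R, d x * ψ x ∂μ| ≤
      (∫ x in ball c R, |d x| ∂μ) * ε := by
  have hint : ∀ g : X → ℝ, Continuous g → IntegrableOn g (ball c R) μ := fun g hg =>
    integrableOn_ball_of_continuous hg c R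
  rw [← integral_sub (hint _ (by fun_prop)) (hint _ (by fun_prop)), ← integral_mul_const,
    ← Real.norm_eq_abs]
  refine norm_integral_le_of_norm_le (hint _ (by fun_prop))
    ((ae_restrict_iff' measurableSet_ball).2 (.of_forall fun x hx => ?_))
  rw [← mul_sub, norm_mul, Real.norm_eq_abs, Real.norm_eq_abs]
  exact mul_le_mul_of_nonneg_left (h x hx) (abs_nonneg _)

lemma setIntegral_det_fderiv_mul_comp_norm_sq_eq {u v : H → H} {R : ℝ} (hu : ContDiff ℝ 1 u)
    (hv : ContDiff ℝ 1 v) (huv : ∀ x ∉ ball (0 : H) R, u x = v x) {ψ : ℝ → ℝ}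
    (hψ : Continuous ψ) :
    ∫ x in ball (0 : H) R, (fderiv ℝ u x).det * ψ (‖u x‖ ^ 2) =
      ∫ x in ball (0 : H) R, (fderiv ℝ v x).det * ψ (‖v x‖ ^ 2) := by
  have huc := hu.continuous
  have hvc := hv.continuous
  have hK := isCompact_closedBall (0 : H) R
  obtain ⟨Mu, hMu⟩ := hK.exists_bound_of_continuousOn (huc.norm.pow 2).continuousOn
  obtain ⟨Mv, hMv⟩ := hK.exists_bound_of_continuousOn (hvc.norm.pow 2).continuousOn
  have hu_mem : ∀ x ∈ ball (0 : H) R, ‖u x‖ ^ 2 ∈ Icc 0 (max Mu Mv) := fun x hx =>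
    ⟨by positivity, (le_abs_self _).trans ((hMu x (ball_subset_closedBall hx)).trans
      (le_max_left _ _))⟩
  have hv_mem : ∀ x ∈ ball (0 : H) R, ‖v x‖ ^ 2 ∈ Icc 0 (max Mu Mv) := fun x hx =>
    ⟨by positivity, (le_abs_self _).trans ((hMv x (ball_subset_closedBall hx)).trans
      (le_max_right _ _))⟩
  set Iu : ℝ := ∫ x in ball (0 : H) R, |(fderiv ℝ u x).det|
  set Iv : ℝ := ∫ x in ball (0 : H) R, |(fderiv ℝ v x).det|
  have : 0 ≤ Iu := integral_nonneg fun x => abs_nonneg _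
  have : 0 ≤ Iv := integral_nonneg fun x => abs_nonneg _
  refine eq_of_forall_dist_le fun ε hε => ?_
  obtain ⟨q, hq⟩ := exists_polynomial_near_of_continuousOn 0 (max Mu Mv) ψ hψ.continuousOn
    (ε / (Iu + Iv + 1)) (by positivity)
  have hqu := abs_setIntegral_mul_sub_le (μ := volume) (continuous_det_fderiv hu)
    (by fun_prop) (by fun_prop) fun x hx => (hq _ (hu_mem x hx)).le
  have hqv := abs_setIntegral_mul_sub_le (μ := volume) (continuous_det_fderiv hv)
    (by fun_prop) (by fun_prop) fun x hx => (hq _ (hv_mem x hx)).le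
  rw [setIntegral_det_fderiv_mul_eval_eq hu hv huv q] at hqu
  have hsum : Iu * (ε / (Iu + Iv + 1)) + Iv * (ε / (Iu + Iv + 1)) ≤ ε := by
    rw [← add_mul, mul_div_assoc', div_le_iff₀ (by positivity)]
    nlinarith
  rw [Real.dist_eq]
  rw [abs_le] at hqu hqv ⊢
  constructor <;> linarith [hqu.1, hqu.2, hqv.1, hqv.2]

end Integral

lemma exists_pos_forall_le_norm_sq {X E : Type*} [TopologicalSpace X]
    [NormedAddCommGroup E] {K : Set X} (hK : IsCompact K) {f : X → E} (hf : Continuous f)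
    (h0 : ∀ x ∈ K, f x ≠ 0) : ∃ δ > 0, ∀ x ∈ K, δ ≤ ‖f x‖ ^ 2 := by
  rcases K.eq_empty_or_nonempty with rfl | hne
  · exact ⟨1, one_pos, by simp⟩
  obtain ⟨x₀, hx₀, hmin⟩ := hK.exists_isMinOn hne (hf.norm.pow 2).continuousOn
  have := norm_pos_iff.2 (h0 x₀ hx₀)
  exact ⟨‖f x₀‖ ^ 2, by positivity, fun x hx => hmin hx⟩

-- The integral of `τ * det (Df) * ψ(‖f‖²)`, with `ψ` supported near `0`, is positive if `f` has a
-- zero, while the same integral for `f₁` vanishes.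
lemma ne_zero_of_forall_zero_det_pos {f f₁ : H → H} {R τ : ℝ} (hf : ContDiff ℝ 1 f)
    (hf₁ : ContDiff ℝ 1 f₁) (hff₁ : ∀ x ∉ ball (0 : H) R, f x = f₁ x) (hf₁0 : ∀ x, f₁ x ≠ 0)
    (hpos : ∀ x, f x = 0 → 0 < τ * (fderiv ℝ f x).det) : ∀ x, f x ≠ 0 := by
  borelize H
  intro z hz
  have hzB : z ∈ ball (0 : H) R := by_contra fun hn => hf₁0 z (hff₁ z hn ▸ hz)
  have hK := isCompact_closedBall (0 : H) R
  have hfc := hf.continuous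
  have hdet := continuous_det_fderiv hf
  obtain ⟨δ₁, hδ₁, hle₁⟩ := exists_pos_forall_le_norm_sq hK hf₁.continuous
    fun x _ => hf₁0 x
  obtain ⟨δ₂, hδ₂, hle₂⟩ := exists_pos_forall_le_norm_sq (hK.inter_right
    (isClosed_le (f := fun x => τ * (fderiv ℝ f x).det) (by fun_prop) continuous_const)) hfc
    fun x hx h0 => (hpos x h0).not_ge hx.2
  have hδ : 0 < min δ₁ δ₂ := lt_min hδ₁ hδ₂
  let ψ : ℝ → ℝ := fun s => max 0 (min δ₁ δ₂ - s)
  have hψ : Continuous ψ := by fun_prop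
  have hψ_zero : ∀ s, min δ₁ δ₂ ≤ s → ψ s = 0 := fun s hs => max_eq_left (by linarith)
  have hint : Continuous fun x => τ * (fderiv ℝ f x).det * ψ (‖f x‖ ^ 2) := by fun_prop
  have hnonneg : ∀ x ∈ ball (0 : H) R, 0 ≤ τ * (fderiv ℝ f x).det * ψ (‖f x‖ ^ 2) := by
    intro x hx
    rcases lt_or_ge 0 (τ * (fderiv ℝ f x).det) with hlt | hge
    · exact mul_nonneg hlt.le (le_max_left _ _)
    · rw [hψ_zero _ ((min_le_right _ _).trans (hle₂ x ⟨ball_subset_closedBall hx, hge⟩)),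
        mul_zero]
  have hf_pos : 0 < ∫ x in ball (0 : H) R, τ * (fderiv ℝ f x).det * ψ (‖f x‖ ^ 2) := by
    rw [setIntegral_pos_iff_support_of_nonneg_ae
      ((ae_restrict_iff' measurableSet_ball).2 (.of_forall hnonneg))
      (integrableOn_ball_of_continuous hint 0 R)]
    refine (hint.isOpen_support.inter isOpen_ball).measure_pos volume ⟨z, ?_, hzB⟩
    have hψz : ψ (‖f z‖ ^ 2) = min δ₁ δ₂ := by simp [ψ, hz, hδ.le]
    rw [Function.mem_support, hψz]
    exact (mul_pos (hpos z hz) hδ).ne'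
  have hf₁_zero : ∫ x in ball (0 : H) R, (fderiv ℝ f₁ x).det * ψ (‖f₁ x‖ ^ 2) = 0 := by
    refine setIntegral_eq_zero_of_forall_eq_zero fun x hx => ?_
    rw [hψ_zero _ ((min_le_left _ _).trans (hle₁ x (ball_subset_closedBall hx))), mul_zero]
  simp only [mul_assoc, integral_const_mul] at hf_pos
  rw [setIntegral_det_fderiv_mul_comp_norm_sq_eq hf hf₁ hff₁ hψ, hf₁_zero, mul_zero] at hf_pos
  exact hf_pos.false

end Degree

/-! ### Polygonal paths of invertible operators -/

section PolygonalPaths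

variable {R S : Type*} [Ring R] [Algebra ℝ R] [Ring S] [Algebra ℝ S]

/-- The segment from `A` to `B` consists of invertible elements. -/
def SegmentInUnits (A B : R) : Prop := ∀ X ∈ segment ℝ A B, IsUnit X

/-- `A` and `B` are joined by a polygonal path of invertible elements. -/
def PolygonallyJoined : R → R → Prop := Relation.ReflTransGen SegmentInUnits

lemma SegmentInUnits.isUnit_add_smul_sub {A B : R} (h : SegmentInUnits A B) {t : ℝ}
    (ht : t ∈ Icc (0 : ℝ) 1) : IsUnit (A + t • (B - A)) :=
  h _ (segment_eq_image' ℝ A B ▸ mem_image_of_mem _ ht)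

lemma SegmentInUnits.map {A B : R} (h : SegmentInUnits A B) (φ : R →ₗ[ℝ] S)
    (hφ : ∀ X, IsUnit X → IsUnit (φ X)) : SegmentInUnits (φ A) (φ B) := by
  rw [SegmentInUnits, ← φ.coe_toAffineMap, ← image_segment]
  rintro _ ⟨X, hX, rfl⟩
  exact hφ X (h X hX)

namespace PolygonallyJoined

variable {A B C D : R}

@[refl]
lemma refl (A : R) : PolygonallyJoined A A := Relation.ReflTransGen.refl

lemma trans (h : PolygonallyJoined A B) (h' : PolygonallyJoined B C) : PolygonallyJoined A C :=
  Relation.ReflTransGen.trans h h'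

lemma map (h : PolygonallyJoined A B) (φ : R →ₗ[ℝ] S) (hφ : ∀ X, IsUnit X → IsUnit (φ X)) :
    PolygonallyJoined (φ A) (φ B) :=
  Relation.ReflTransGen.lift φ (fun _ _ hs => hs.map φ hφ) _ _ h

lemma mul (h : PolygonallyJoined A B) (h' : PolygonallyJoined C D) (hB : IsUnit B)
    (hC : IsUnit C) : PolygonallyJoined (A * C) (B * D) :=
  (h.map (LinearMap.mulRight ℝ C) fun _ hX => hX.mul hC).trans
    (h'.map (LinearMap.mulLeft ℝ B) fun _ hX => hB.mul hX)

lemma mul_dichotomy {r : R} (hr : r * r = 1) (hC : IsUnit C)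
    (hA : PolygonallyJoined A 1 ∨ PolygonallyJoined A r)
    (hC' : PolygonallyJoined C 1 ∨ PolygonallyJoined C r) :
    PolygonallyJoined (A * C) 1 ∨ PolygonallyJoined (A * C) r := by
  have hru : IsUnit r := ⟨⟨r, r, hr, hr⟩, rfl⟩
  rcases hA with hA | hA <;> rcases hC' with hC' | hC'
  · exact .inl (by simpa using hA.mul hC' isUnit_one hC)
  · exact .inr (by simpa using hA.mul hC' isUnit_one hC)
  · exact .inr (by simpa using hA.mul hC' hru hC)
  · exact .inl (by simpa [hr] using hA.mul hC' hru hC)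

end PolygonallyJoined

end PolygonalPaths

section MatrixPaths

open Matrix

variable {n : Type*} [DecidableEq n]

lemma diagonal_mulSingle_eq_one_add_vecMulVec (j : n) (d : ℝ) :
    diagonal (Pi.mulSingle j d) = 1 + vecMulVec (Pi.single j 1) (Pi.single j (d - 1)) := by
  ext a b
  simp only [diagonal_apply, Matrix.add_apply, one_apply, vecMulVec_apply, Pi.mulSingle_apply,
    Pi.single_apply]
  split_ifs <;> simp_all

variable [Fintype n]

lemma det_one_add_vecMulVec (u v : n → ℝ) : (1 + vecMulVec u v).det = 1 + v ⬝ᵥ u := by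
  rw [vecMulVec_eq Unit, det_one_add_replicateCol_mul_replicateRow]

lemma isUnit_one_add_vecMulVec {u v : n → ℝ} (h : 1 + v ⬝ᵥ u ≠ 0) :
    IsUnit (1 + vecMulVec u v) := by
  rwa [isUnit_iff_isUnit_det, det_one_add_vecMulVec, isUnit_iff_ne_zero]

lemma ne_zero_of_mem_segment {a b c : ℝ} (h : 0 < a * b) (hc : c ∈ segment ℝ a b) : c ≠ 0 := by
  rintro rfl
  rw [segment_eq_uIcc, mem_uIcc] at hc
  rcases pos_and_pos_or_neg_and_neg_of_mul_pos h with ⟨ha, hb⟩ | ⟨ha, hb⟩ <;>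
    rcases hc with hc | hc <;> linarith

lemma segmentInUnits_one_add_vecMulVec_right {u v w : n → ℝ}
    (h : 0 < (1 + v ⬝ᵥ u) * (1 + w ⬝ᵥ u)) :
    SegmentInUnits (1 + vecMulVec u v) (1 + vecMulVec u w) := by
  rintro _ ⟨s, t, hs, ht, hst, rfl⟩
  have hcomb : s • (1 + vecMulVec u v) + t • (1 + vecMulVec u w) =
      1 + vecMulVec u (s • v + t • w) := by
    rw [vecMulVec_add, vecMulVec_smul, vecMulVec_smul, eq_sub_of_add_eq hst]
    module
  refine hcomb ▸ isUnit_one_add_vecMulVec (ne_zero_of_mem_segment h ⟨s, t, hs, ht, hst, ?_⟩)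
  simp only [smul_eq_mul, add_dotProduct, smul_dotProduct]
  linear_combination hst

lemma segmentInUnits_one_add_vecMulVec_left {u v w : n → ℝ}
    (h : 0 < (1 + w ⬝ᵥ u) * (1 + w ⬝ᵥ v)) :
    SegmentInUnits (1 + vecMulVec u w) (1 + vecMulVec v w) := by
  have := segmentInUnits_one_add_vecMulVec_right (u := w) (v := u) (w := v)
    (by simpa only [dotProduct_comm] using h)
  simpa using this.map (transposeLinearEquiv n n ℝ ℝ).toLinearMap
    fun X hX => by simpa [isUnit_iff_isUnit_det] using hX

lemma polygonallyJoined_one_add_vecMulVec_one {u v : n → ℝ} (h : 0 < 1 + v ⬝ᵥ u) :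
    PolygonallyJoined (1 + vecMulVec u v) 1 := by
  have hseg : SegmentInUnits (1 + vecMulVec u v) (1 + vecMulVec u 0) :=
    segmentInUnits_one_add_vecMulVec_right (by simpa using h)
  rw [vecMulVec_zero, add_zero] at hseg
  exact .single hseg

lemma polygonallyJoined_diagonal_mulSingle_neg (i j : n) {d : ℝ} (hd : d < 0) :
    PolygonallyJoined (diagonal (Pi.mulSingle j d)) (diagonal (Pi.mulSingle i (-1))) := by
  set w : n → ℝ := Pi.single j (-2) + Pi.single i (-2)
  have hwj : 1 + w ⬝ᵥ Pi.single j 1 < 0 := by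
    simp only [w, add_dotProduct, single_dotProduct, Pi.single_apply]
    split_ifs <;> norm_num
  have hwi : 1 + w ⬝ᵥ Pi.single i 1 < 0 := by
    simp only [w, add_dotProduct, single_dotProduct, Pi.single_apply]
    split_ifs <;> norm_num
  rw [diagonal_mulSingle_eq_one_add_vecMulVec, diagonal_mulSingle_eq_one_add_vecMulVec]
  refine .head (segmentInUnits_one_add_vecMulVec_right (w := w) ?_)
    (.head (segmentInUnits_one_add_vecMulVec_left (v := Pi.single i 1) ?_)
      (.single (segmentInUnits_one_add_vecMulVec_right ?_)))
  · exact mul_pos_of_neg_of_neg (by simpa using hd) hwj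
  · exact mul_pos_of_neg_of_neg hwj hwi
  · exact mul_pos_of_neg_of_neg hwi (by simp)

lemma mul_dichotomy {i : n} {A B : Matrix n n ℝ} (hB : B.det ≠ 0)
    (hA : PolygonallyJoined A 1 ∨ PolygonallyJoined A (diagonal (Pi.mulSingle i (-1))))
    (hB' : PolygonallyJoined B 1 ∨ PolygonallyJoined B (diagonal (Pi.mulSingle i (-1)))) :
    PolygonallyJoined (A * B) 1 ∨ PolygonallyJoined (A * B) (diagonal (Pi.mulSingle i (-1))) := by
  refine PolygonallyJoined.mul_dichotomy ?_ ((isUnit_iff_isUnit_det B).2 hB.isUnit) hA hB'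
  rw [← diagonal_one, diagonal_mul_diagonal]
  congr 1
  ext j
  obtain rfl | hj := eq_or_ne j i <;> simp [*]

lemma diagonal_dichotomy (i : n) {D : n → ℝ} (hD : (diagonal D).det ≠ 0) :
    PolygonallyJoined (diagonal D) 1 ∨
      PolygonallyJoined (diagonal D) (diagonal (Pi.mulSingle i (-1))) := by
  have hD0 : ∀ j, D j ≠ 0 := by
    rw [det_diagonal] at hD
    exact fun j => Finset.prod_ne_zero_iff.1 hD j (Finset.mem_univ j)
  suffices h : (diagonal D).det ≠ 0 ∧ (PolygonallyJoined (diagonal D) 1 ∨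
      PolygonallyJoined (diagonal D) (diagonal (Pi.mulSingle i (-1)))) from h.2
  rw [← Finset.univ_prod_mulSingle D]
  refine Finset.prod_induction _ (fun E : n → ℝ => (diagonal E).det ≠ 0 ∧
    (PolygonallyJoined (diagonal E) 1 ∨
      PolygonallyJoined (diagonal E) (diagonal (Pi.mulSingle i (-1))))) ?_ ?_ fun j _ => ?_
  · rintro E E' ⟨hE, ihE⟩ ⟨hE', ihE'⟩
    rw [show diagonal (E * E') = diagonal E * diagonal E' from (diagonal_mul_diagonal' E E').symm]
    exact ⟨by simpa only [det_mul] using mul_ne_zero hE hE', mul_dichotomy hE' ihE ihE'⟩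
  · rw [Pi.one_def, diagonal_one]
    exact ⟨by simp, .inl (.refl 1)⟩
  · refine ⟨by simpa [diagonal_mulSingle_eq_one_add_vecMulVec, det_one_add_vecMulVec] using hD0 j,
      (hD0 j).lt_or_gt.symm.imp (fun hpos => ?_) fun hneg =>
        polygonallyJoined_diagonal_mulSingle_neg i j hneg⟩
    rw [diagonal_mulSingle_eq_one_add_vecMulVec]
    exact polygonallyJoined_one_add_vecMulVec_one (by simpa using hpos)

lemma polygonallyJoined_one_or_diagonal (i : n) {M : Matrix n n ℝ} (hM : M.det ≠ 0) :
    PolygonallyJoined M 1 ∨ PolygonallyJoined M (diagonal (Pi.mulSingle i (-1))) := by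
  refine diagonal_transvection_induction_of_det_ne_zero
    (fun M => PolygonallyJoined M 1 ∨ PolygonallyJoined M (diagonal (Pi.mulSingle i (-1)))) M hM
    (fun D => diagonal_dichotomy i) (fun t => .inl ?_) fun A B _ => mul_dichotomy
  have hsingle : single t.i t.j t.c = vecMulVec (Pi.single t.i 1) (Pi.single t.j t.c) := by
    ext a b
    simp [single_apply, vecMulVec_apply, Pi.single_apply, ite_and, eq_comm]
    split_ifs <;> rfl
  rw [TransvectionStruct.toMatrix, transvection, hsingle]
  exact polygonallyJoined_one_add_vecMulVec_one (by simp [t.hij])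

lemma PolygonallyJoined.det_pos {A B : Matrix n n ℝ} (h : PolygonallyJoined A B)
    (hA : 0 < A.det) : 0 < B.det := by
  induction h with
  | refl => exact hA
  | @tail B C _ hs hB =>
    by_contra! hC
    obtain ⟨X, hX, hX0⟩ := ((convex_segment B C).isPreconnected.image det
      (continuous_id.matrix_det.continuousOn)).Icc_subset ⟨C, right_mem_segment ℝ B C, rfl⟩
      ⟨B, left_mem_segment ℝ B C, rfl⟩ ⟨hC, hB.le⟩
    exact ((isUnit_iff_isUnit_det X).1 (hs X hX)).ne_zero hX0

lemma polygonallyJoined_one_of_det_pos {M : Matrix n n ℝ} (hM : 0 < M.det) :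
    PolygonallyJoined M 1 := by
  obtain _ | ⟨⟨i⟩⟩ := isEmpty_or_nonempty n
  · rw [Subsingleton.elim M 1]
  refine (polygonallyJoined_one_or_diagonal i hM.ne').resolve_right fun h => ?_
  have := h.det_pos hM
  norm_num [diagonal_mulSingle_eq_one_add_vecMulVec, det_one_add_vecMulVec] at this

end MatrixPaths

section HyperplaneReflection

variable {H : Type*} [NormedAddCommGroup H] [InnerProductSpace ℝ H]

/-- The reflection in the hyperplane orthogonal to `e`, as a continuous linear map. -/
noncomputable def hyperplaneReflection (e : H) : H →L[ℝ] H :=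
  (ℝ ∙ e)ᗮ.reflection.toContinuousLinearEquiv

lemma hyperplaneReflection_apply {e : H} (he : ‖e‖ = 1) (x : H) :
    hyperplaneReflection e x = x - (2 * inner ℝ e x) • e := by
  change (ℝ ∙ e)ᗮ.reflection x = _
  rw [Submodule.reflection_orthogonal_apply, Submodule.reflection_singleton_apply, he]
  module

end HyperplaneReflection

section OperatorPaths

variable {H : Type*} [NormedAddCommGroup H] [NormedSpace ℝ H] [FiniteDimensional ℝ H]

lemma isUnit_iff_det_ne_zero {A : H →L[ℝ] H} : IsUnit A ↔ A.det ≠ 0 := by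
  rw [ContinuousLinearMap.isUnit_iff_isUnit_toLinearMap, LinearMap.isUnit_iff_isUnit_det,
    isUnit_iff_ne_zero, ContinuousLinearMap.det]

lemma map_ne_zero_of_isUnit {A : H →L[ℝ] H} (hA : IsUnit A) {v : H} (hv : v ≠ 0) : A v ≠ 0 :=
  (map_ne_zero_iff A (ContinuousLinearMap.isUnit_iff_bijective.1 hA).injective).2 hv

lemma polygonallyJoined_id {T : H →L[ℝ] H} (hT : 0 < T.det) :
    PolygonallyJoined T (ContinuousLinearMap.id ℝ H) := by
  classical
  set φ := (Matrix.toLinAlgEquiv (Module.finBasis ℝ H)).trans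
    (Module.End.toContinuousLinearMap (𝕜 := ℝ) H)
  have hdet : 0 < (φ.symm T).det := by
    refine hT.trans_eq ?_
    exact (LinearMap.det_toMatrix (Module.finBasis ℝ H) (T : H →ₗ[ℝ] H)).symm
  have h := (polygonallyJoined_one_of_det_pos hdet).map φ.toLinearMap fun X hX => hX.map φ
  rwa [AlgEquiv.toLinearMap_apply, AlgEquiv.toLinearMap_apply, AlgEquiv.apply_symm_apply,
    map_one] at h

end OperatorPaths

section OperatorReflections

variable {H : Type*} [NormedAddCommGroup H] [InnerProductSpace ℝ H] [FiniteDimensional ℝ H]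

lemma det_hyperplaneReflection {e : H} (he : e ≠ 0) : (hyperplaneReflection e).det = -1 := by
  change LinearMap.det (ℝ ∙ e)ᗮ.reflection.toLinearMap = -1
  rw [Submodule.det_reflection, Submodule.orthogonal_orthogonal, finrank_span_singleton he, pow_one]

lemma polygonallyJoined_hyperplaneReflection {T : H →L[ℝ] H} (hT : T.det < 0) {e : H}
    (he : e ≠ 0) : PolygonallyJoined T (hyperplaneReflection e) := by
  have hinv : hyperplaneReflection e * hyperplaneReflection e = 1 := by
    ext x
    exact (ℝ ∙ e)ᗮ.reflection_reflection x
  have hu : IsUnit (hyperplaneReflection e) := ⟨⟨_, _, hinv, hinv⟩, rfl⟩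
  have hpos : 0 < (T * hyperplaneReflection e).det := by
    have : (T * hyperplaneReflection e).det = T.det * (hyperplaneReflection e).det :=
      LinearMap.det_comp _ _
    rw [this, det_hyperplaneReflection he]
    linarith
  have h := (polygonallyJoined_id hpos).mul (.refl _) isUnit_one hu
  rwa [mul_assoc, hinv, mul_one, ← ContinuousLinearMap.one_def, one_mul] at h

end OperatorReflections

/-! ### Compactly supported perturbations without new zeros -/

section EqOffCompact

variable {X Y : Type*} [TopologicalSpace X]

/-- `f'` agrees with `f` off a compact subset of `O`. -/
def EqOffCompact (O : Set X) (f f' : X → Y) : Prop :=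
  ∃ K, IsCompact K ∧ K ⊆ O ∧ ∀ x ∉ K, f' x = f x

namespace EqOffCompact

variable {O O' : Set X} {f f' f'' : X → Y}

lemma refl (O : Set X) (f : X → Y) : EqOffCompact O f f :=
  ⟨∅, isCompact_empty, empty_subset _, fun _ _ => rfl⟩

lemma trans (h : EqOffCompact O f f') (h' : EqOffCompact O f' f'') : EqOffCompact O f f'' := by
  obtain ⟨K, hK, hKO, hf⟩ := h
  obtain ⟨K', hK', hKO', hf'⟩ := h'
  refine ⟨K ∪ K', hK.union hK', union_subset hKO hKO', fun x hx => ?_⟩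
  rw [mem_union, not_or] at hx
  rw [hf' x hx.2, hf x hx.1]

lemma mono (h : EqOffCompact O f f') (hO : O ⊆ O') : EqOffCompact O' f f' :=
  h.imp fun _ ⟨hK, hKO, hf⟩ => ⟨hK, hKO.trans hO, hf⟩

lemma eq_of_notMem (h : EqOffCompact O f f') {x : X} (hx : x ∉ O) : f' x = f x :=
  let ⟨_, _, hKO, hf⟩ := h
  hf x fun hxK => hx (hKO hxK)

lemma eventuallyEq [T2Space X] (h : EqOffCompact O f f') {x : X} (hx : x ∉ O) : f' =ᶠ[𝓝 x] f := by
  obtain ⟨K, hK, hKO, hf⟩ := h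
  filter_upwards [hK.isClosed.isOpen_compl.mem_nhds fun hxK => hx (hKO hxK)] with y hy using hf y hy

end EqOffCompact

end EqOffCompact

section Perturbation

variable {H : Type*} [NormedAddCommGroup H] [NormedSpace ℝ H] [FiniteDimensional ℝ H]

lemma exists_eqOffCompact_add {f w : H → H} (hf : ContDiff ℝ 1 f) (hw : ContDiff ℝ 1 w)
    {C O Z : Set H} (hC : IsCompact C) (hO : IsOpen O) (hCO : C ⊆ O)
    (hne : ∀ x ∈ O, x ∉ C → x ∉ Z → f x ≠ 0) (hCne : ∀ x ∈ C, x ∉ Z → f x + w x ≠ 0)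
    (hnear : ∀ᶠ x in 𝓝ˢ C, x ∉ C → x ∉ Z → ∀ t ∈ Icc (0 : ℝ) 1, f x + t • w x ≠ 0) :
    ∃ f' : H → H, ContDiff ℝ 1 f' ∧ EqOffCompact O f f' ∧ (∀ x ∈ O, x ∉ Z → f' x ≠ 0) ∧
      (∀ᶠ x in 𝓝ˢ C, f' x = f x + w x) ∧ ∀ x, ∃ t ∈ Icc (0 : ℝ) 1, f' x = f x + t • w x := by
  obtain ⟨U, hU, hCU, hUne⟩ := eventually_nhdsSet_iff_exists.1 hnear
  obtain ⟨χ, hχ, hχ01, hχc, hχs, hχ1⟩ := exists_contDiff_cutoff hC (hO.inter hU)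
    (subset_inter hCO hCU)
  refine ⟨fun x => f x + χ x • w x, hf.add (hχ.smul hw),
    ⟨tsupport χ, hχc, hχs.trans inter_subset_left, fun x hx => ?_⟩, fun x hxO hxZ => ?_,
    hχ1.mono fun x hx => by beta_reduce; rw [hx, one_smul], fun x => ⟨χ x, hχ01 x, rfl⟩⟩
  · beta_reduce
    rw [image_eq_zero_of_notMem_tsupport hx, zero_smul, add_zero]
  beta_reduce
  by_cases hxC : x ∈ C
  · rw [hχ1.self_of_nhdsSet x hxC, one_smul]
    exact hCne x hxC hxZ
  by_cases hxs : x ∈ tsupport χ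
  · exact hUne x (hχs hxs).2 hxC hxZ _ (hχ01 x)
  · rw [image_eq_zero_of_notMem_tsupport hxs, zero_smul, add_zero]
    exact hne x hxO hxC hxZ

lemma exists_eqOffCompact_add_nhds {f w : H → H} (hf : ContDiff ℝ 1 f) (hw : ContDiff ℝ 1 w)
    {a : H} {O : Set H} (hO : IsOpen O) (ha : a ∈ O) (hne : ∀ x ∈ O, x ≠ a → f x ≠ 0)
    (hnear : ∀ᶠ x in 𝓝 a, x ≠ a → ∀ t ∈ Icc (0 : ℝ) 1, f x + t • w x ≠ 0) :
    ∃ f' : H → H, ContDiff ℝ 1 f' ∧ EqOffCompact O f f' ∧ (∀ x ∈ O, x ≠ a → f' x ≠ 0) ∧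
      ∀ᶠ x in 𝓝 a, f' x = f x + w x := by
  have hnear' : ∀ᶠ x in 𝓝ˢ {a}, x ∉ ({a} : Set H) → x ∉ ({a} : Set H) →
      ∀ t ∈ Icc (0 : ℝ) 1, f x + t • w x ≠ 0 := by
    rw [nhdsSet_singleton]
    exact hnear.mono fun x hx hxa _ => hx hxa
  obtain ⟨f', hf', hff', hne', hev, -⟩ := exists_eqOffCompact_add hf hw isCompact_singleton hO
    (singleton_subset_iff.2 ha) (fun x hx hxa _ => hne x hx hxa) (fun x hx hxa => absurd hx hxa)
    hnear'
  exact ⟨f', hf', hff', hne', by rwa [nhdsSet_singleton] at hev⟩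

end Perturbation

section LinearReplacement

variable {H : Type*} [NormedAddCommGroup H] [NormedSpace ℝ H] [FiniteDimensional ℝ H]

lemma exists_pos_forall_mul_norm_le_of_isUnit {A : H →L[ℝ] H} (hA : IsUnit A) :
    ∃ c > 0, ∀ v, c * ‖v‖ ≤ ‖A v‖ := by
  obtain ⟨K, hK, hAK⟩ := A.toLinearMap.exists_antilipschitzWith
    (LinearMap.ker_eq_bot.2 (ContinuousLinearMap.isUnit_iff_bijective.1 hA).injective)
  refine ⟨(K : ℝ)⁻¹, by positivity, fun v => ?_⟩
  rw [inv_mul_le_iff₀ (by positivity)]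
  simpa using hAK.le_mul_dist v 0

lemma exists_eqOffCompact_eventually_eq_fderiv {f : H → H} (hf : ContDiff ℝ 1 f) {a : H}
    {O : Set H} (hO : IsOpen O) (ha : a ∈ O) (h0 : f a = 0) (hne : ∀ x ∈ O, x ≠ a → f x ≠ 0)
    (hdet : (fderiv ℝ f a).det ≠ 0) :
    ∃ f' : H → H, ContDiff ℝ 1 f' ∧ EqOffCompact O f f' ∧ (∀ x ∈ O, x ≠ a → f' x ≠ 0) ∧
      ∀ᶠ x in 𝓝 a, f' x = fderiv ℝ f a (x - a) := by
  obtain ⟨c, hc, hbound⟩ :=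
    exists_pos_forall_mul_norm_le_of_isUnit (isUnit_iff_det_ne_zero.2 hdet)
  set A := fderiv ℝ f a
  have hder : HasFDerivAt f A a := (hf.differentiable one_ne_zero a).hasFDerivAt
  have hnear : ∀ᶠ x in 𝓝 a, x ≠ a → ∀ t ∈ Icc (0 : ℝ) 1, f x + t • (A (x - a) - f x) ≠ 0 := by
    filter_upwards [hder.isLittleO.bound (half_pos hc)] with x hx hxa t ht hzero
    rw [h0, sub_zero] at hx
    have hAx : A (x - a) = (t - 1) • (f x - A (x - a)) := by
      rw [← sub_eq_zero, ← hzero]; module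
    have ht1 : |t - 1| ≤ 1 := abs_le.2 ⟨by linarith [ht.1], by linarith [ht.2]⟩
    have : ‖A (x - a)‖ ≤ 1 * (c / 2 * ‖x - a‖) := by
      rw [hAx, norm_smul, Real.norm_eq_abs]
      gcongr
    nlinarith [hbound (x - a), norm_pos_iff.2 (sub_ne_zero.2 hxa)]
  obtain ⟨f', hf', hff', hne', hev⟩ :=
    exists_eqOffCompact_add_nhds hf (by fun_prop) hO ha hne hnear
  exact ⟨f', hf', hff', hne', hev.mono fun x hx => by rw [hx, add_sub_cancel]⟩

lemma exists_eqOffCompact_eventually_eq_of_polygonallyJoined {f : H → H} (hf : ContDiff ℝ 1 f)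
    {a : H} {O : Set H} (hO : IsOpen O) (ha : a ∈ O) {A B : H →L[ℝ] H}
    (hne : ∀ x ∈ O, x ≠ a → f x ≠ 0) (hAB : PolygonallyJoined A B)
    (hfA : ∀ᶠ x in 𝓝 a, f x = A (x - a)) :
    ∃ f' : H → H, ContDiff ℝ 1 f' ∧ EqOffCompact O f f' ∧ (∀ x ∈ O, x ≠ a → f' x ≠ 0) ∧
      ∀ᶠ x in 𝓝 a, f' x = B (x - a) := by
  induction hAB with
  | refl => exact ⟨f, hf, .refl O f, hne, hfA⟩
  | @tail B C _ hBC ih =>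
    obtain ⟨g, hg, hfg, hgne, hgB⟩ := ih
    obtain ⟨f', hf', hgf', hne', hev⟩ := exists_eqOffCompact_add_nhds hg
      (w := fun x => (C - B) (x - a)) (by fun_prop) hO ha hgne <| by
        filter_upwards [hgB] with x hx hxa t ht
        rw [hx]
        exact map_ne_zero_of_isUnit (hBC.isUnit_add_smul_sub ht) (sub_ne_zero.2 hxa)
    refine ⟨f', hf', hfg.trans hgf', hne', ?_⟩
    filter_upwards [hev, hgB] with x hx hxB
    rw [hx, hxB, sub_apply, add_sub_cancel]

lemma exists_eqOffCompact_eventually_eq_clm {f : H → H} (hf : ContDiff ℝ 1 f) {a : H}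
    {O : Set H} (hO : IsOpen O) (ha : a ∈ O) (h0 : f a = 0) (hne : ∀ x ∈ O, x ≠ a → f x ≠ 0)
    (hdet : (fderiv ℝ f a).det ≠ 0) {B : H →L[ℝ] H} (hB : PolygonallyJoined (fderiv ℝ f a) B) :
    ∃ f' : H → H, ContDiff ℝ 1 f' ∧ EqOffCompact O f f' ∧ (∀ x ∈ O, x ≠ a → f' x ≠ 0) ∧
      ∀ᶠ x in 𝓝 a, f' x = B (x - a) := by
  obtain ⟨g, hg, hfg, hgne, hgA⟩ :=
    exists_eqOffCompact_eventually_eq_fderiv hf hO ha h0 hne hdet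
  obtain ⟨f', hf', hgf', hne', hfB⟩ :=
    exists_eqOffCompact_eventually_eq_of_polygonallyJoined hg hO ha hgne hB hgA
  exact ⟨f', hf', hfg.trans hgf', hne', hfB⟩

end LinearReplacement

/-! ### Cancelling a pair of zeros of opposite sign -/

section SpanSingleton

variable {H : Type*} [NormedAddCommGroup H] [InnerProductSpace ℝ H]

lemma starProjection_orthogonal_span_singleton {u : H} (hu : ‖u‖ = 1) (v : H) :
    (ℝ ∙ u)ᗮ.starProjection v = v - inner ℝ u v • u := by
  rw [Submodule.starProjection_orthogonal_val, Submodule.starProjection_unit_singleton ℝ hu]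

lemma starProjection_orthogonal_span_singleton_self {u : H} :
    (ℝ ∙ u)ᗮ.starProjection u = 0 :=
  Submodule.starProjection_orthogonal_apply_eq_zero (Submodule.mem_span_singleton_self u)

lemma inner_starProjection_orthogonal_span_singleton (u v : H) :
    inner ℝ u ((ℝ ∙ u)ᗮ.starProjection v) = 0 :=
  Submodule.mem_orthogonal_singleton_iff_inner_right.1 (Submodule.starProjection_apply_mem _ v)

lemma segment_add_smul {a u : H} {l : ℝ} (hl : 0 ≤ l) :
    segment ℝ a (a + l • u) = (fun t : ℝ => a + t • u) '' Icc 0 l := by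
  have hline : (fun t : ℝ => a + t • u) = AffineMap.lineMap (k := ℝ) a (a + u) := by
    ext t
    rw [AffineMap.lineMap_apply, vsub_eq_sub, add_sub_cancel_left, vadd_eq_add, add_comm]
  rw [hline, ← segment_eq_Icc hl, image_segment, ← hline]
  beta_reduce
  rw [zero_smul, add_zero]

lemma isCompact_segment (a b : H) : IsCompact (segment ℝ a b) := by
  rw [segment_eq_image']
  exact isCompact_Icc.image (by fun_prop)

end SpanSingleton

section Dipole

variable {H : Type*} [NormedAddCommGroup H] [InnerProductSpace ℝ H]

/-- A `C¹` map `f` on an open set `O` whose only zeros are the ends of the segment from `a` to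
`a + l • u`, normalised near them: `f` is the identity around `a` and the reflection in the
hyperplane orthogonal to `u` around `a + l • u`. These zeros have opposite signs, and along the
segment `f` points in the direction `u` near both ends. -/
structure IsDipole (f : H → H) (a u : H) (l : ℝ) (O : Set H) : Prop where
  contDiff : ContDiff ℝ 1 f
  norm_eq_one : ‖u‖ = 1
  pos : 0 < l
  isOpen : IsOpen O
  segment_subset : segment ℝ a (a + l • u) ⊆ O
  ne_zero : ∀ x ∈ O, x ∉ ({a, a + l • u} : Set H) → f x ≠ 0
  eventually_left : ∀ᶠ x in 𝓝 a, f x = x - a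
  eventually_right :
    ∀ᶠ x in 𝓝 (a + l • u), f x = hyperplaneReflection u (x - (a + l • u))

lemma exists_forall_ne_smul [FiniteDimensional ℝ H] (hdim : 2 < Module.finrank ℝ H)
    {γ : ℝ → H} (hγ : ContDiff ℝ 1 γ) (u : H) :
    ∃ e : H, (∀ s t : ℝ, e ≠ s • γ t) ∧ e ∉ ℝ ∙ u ∧ 0 ≤ inner ℝ u e := by
  have hdense : Dense (range fun w : ℝ × ℝ => w.1 • γ w.2)ᶜ :=
    ContDiff.dense_compl_range_of_finrank_lt_finrank (by fun_prop) (by simpa using hdim)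
  have hopen : IsOpen ((ℝ ∙ u : Submodule ℝ H) : Set H)ᶜ :=
    (Submodule.closed_of_finiteDimensional _).isOpen_compl
  have hnonempty : ((ℝ ∙ u : Submodule ℝ H) : Set H)ᶜ.Nonempty := by
    rw [nonempty_compl]
    intro h
    have htop : (ℝ ∙ u : Submodule ℝ H) = ⊤ := SetLike.coe_injective (by simpa using h)
    have := finrank_span_le_card (R := ℝ) ({u} : Set H)
    rw [htop, finrank_top, toFinset_singleton, Finset.card_singleton] at this
    omega
  obtain ⟨e, heu, heγ⟩ := hdense.inter_open_nonempty _ hopen hnonempty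
  have heγ' : ∀ s t : ℝ, e ≠ s • γ t := fun s t h => heγ ⟨(s, t), h.symm⟩
  rcases le_total 0 (inner ℝ u e) with h | h
  · exact ⟨e, heγ', heu, h⟩
  · refine ⟨-e, fun s t hst => heγ' (-s) t ?_, fun hmem => heu ?_, ?_⟩
    · rw [neg_smul, ← hst, neg_neg]
    · exact neg_neg e ▸ Submodule.neg_mem _ hmem
    · rwa [inner_neg_right, neg_nonneg]

namespace IsDipole

variable {f f' : H → H} {a u : H} {l δ : ℝ} {O : Set H}

lemma of_eqOffCompact (h : IsDipole f a u l O) (hf' : ContDiff ℝ 1 f')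
    (hff' : EqOffCompact (O \ {a, a + l • u}) f f')
    (hne : ∀ x ∈ O \ {a, a + l • u}, f' x ≠ 0) : IsDipole f' a u l O where
  __ := h
  contDiff := hf'
  ne_zero x hx hxab := hne x ⟨hx, hxab⟩
  eventually_left := (hff'.eventuallyEq fun hx => hx.2 (mem_insert _ _)).trans h.eventually_left
  eventually_right := (hff'.eventuallyEq fun hx => hx.2 (mem_insert_of_mem _ rfl)).trans
    h.eventually_right

lemma add_smul_mem (h : IsDipole f a u l O) {t : ℝ} (ht : t ∈ Icc 0 l) : a + t • u ∈ O :=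
  h.segment_subset (by rw [segment_add_smul h.pos.le]; exact mem_image_of_mem _ ht)

lemma add_smul_notMem (h : IsDipole f a u l O) {t : ℝ} (ht : t ∈ Ioo 0 l) :
    a + t • u ∉ ({a, a + l • u} : Set H) := by
  have hu : u ≠ 0 := norm_ne_zero_iff.1 (h.norm_eq_one ▸ one_ne_zero)
  rintro (h0 | hl)
  · exact ht.1.ne' ((smul_eq_zero_iff_left hu).1 (add_eq_left.1 h0))
  · exact ht.2.ne (smul_left_injective ℝ hu (add_left_cancel hl))

lemma inner_pos_of_mem_segment (h : IsDipole f a u l O)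
    (hpos : ∀ t ∈ Ioo 0 l, 0 < inner ℝ u (f (a + t • u))) {x : H}
    (hx : x ∈ segment ℝ a (a + l • u)) (hxab : x ∉ ({a, a + l • u} : Set H)) :
    0 < inner ℝ u (f x) := by
  rw [segment_add_smul h.pos.le] at hx
  obtain ⟨t, ht, rfl⟩ := hx
  refine hpos t ⟨ht.1.lt_of_ne ?_, ht.2.lt_of_ne ?_⟩ <;> rintro rfl <;> simp at hxab

lemma exists_eq_smul_near_ends (h : IsDipole f a u l O) :
    ∃ δ > 0, ∀ t ∈ Ioo 0 l, t ∉ Icc δ (l - δ) → ∃ m > (0 : ℝ), f (a + t • u) = m • u := by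
  have hline : ∀ s : ℝ, Tendsto (fun t : ℝ => a + t • u) (𝓝 s) (𝓝 (a + s • u)) := fun s =>
    Continuous.tendsto (by fun_prop) s
  have hleft := hline 0
  rw [zero_smul, add_zero] at hleft
  obtain ⟨δ₁, hδ₁, h₁⟩ := Metric.eventually_nhds_iff.1 (hleft.eventually h.eventually_left)
  obtain ⟨δ₂, hδ₂, h₂⟩ :=
    Metric.eventually_nhds_iff.1 ((hline l).eventually h.eventually_right)
  refine ⟨min δ₁ δ₂, lt_min hδ₁ hδ₂, fun t ht htδ => ?_⟩
  rcases lt_or_ge t (min δ₁ δ₂) with hlt | hge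
  · refine ⟨t, ht.1, ?_⟩
    rw [h₁ (by rw [Real.dist_0_eq_abs, abs_of_pos ht.1]; exact hlt.trans_le (min_le_left _ _)),
      add_sub_cancel_left]
  · have hlt : l - t < δ₂ := by
      by_contra! hge'
      exact htδ ⟨hge, by linarith [min_le_right δ₁ δ₂]⟩
    refine ⟨l - t, sub_pos.2 ht.2, ?_⟩
    rw [h₂ (by rwa [Real.dist_eq, abs_of_neg (sub_neg.2 ht.2), neg_sub]),
      hyperplaneReflection_apply h.norm_eq_one, add_sub_add_left_eq_sub, ← sub_smul,
      real_inner_smul_right, real_inner_self_eq_norm_sq, h.norm_eq_one]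
    module

lemma exists_bound_on_Icc (h : IsDipole f a u l O) (δ : ℝ) :
    ∃ M, ∀ t ∈ Icc δ (l - δ), ‖f (a + t • u)‖ ≤ M :=
  have := h.contDiff.continuous
  isCompact_Icc.exists_bound_of_continuousOn (by fun_prop)

lemma eventually_inner_neg_off_segment (h : IsDipole f a u l O) :
    ∀ᶠ x in 𝓝ˢ (segment ℝ a (a + l • u)), x ∉ segment ℝ a (a + l • u) →
      x - a ∈ ℝ ∙ u → inner ℝ u (f x) < 0 := by
  have huu : inner ℝ u u = (1 : ℝ) := by rw [real_inner_self_eq_norm_sq, h.norm_eq_one, one_pow]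
  have hline : ∀ τ : ℝ, inner ℝ u (a + τ • u - a) = τ := fun τ => by
    rw [add_sub_cancel_left, inner_smul_right, huu, mul_one]
  have hcont : Continuous fun x => inner ℝ u (x - a) := by fun_prop
  have hlt : ∀ τ < l, ∀ᶠ x in 𝓝 (a + τ • u), inner ℝ u (x - a) < l := fun τ hτ =>
    hcont.continuousAt.eventually_lt continuousAt_const (by rwa [hline])
  have hgt : ∀ τ > (0 : ℝ), ∀ᶠ x in 𝓝 (a + τ • u), 0 < inner ℝ u (x - a) := fun τ hτ =>
    continuousAt_const.eventually_lt hcont.continuousAt (by rwa [hline])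
  rw [segment_add_smul h.pos.le, eventually_nhdsSet_iff_forall]
  have hparam : ∀ x ∉ (fun t : ℝ => a + t • u) '' Icc 0 l, x - a ∈ ℝ ∙ u →
      ∃ s : ℝ, x = a + s • u ∧ inner ℝ u (x - a) = s ∧ s ∉ Icc 0 l := by
    intro x hx hxu
    obtain ⟨s, hs⟩ := Submodule.mem_span_singleton.1 hxu
    obtain rfl : x = a + s • u := by rw [hs, add_sub_cancel]
    exact ⟨s, rfl, hline s, fun hsl => hx ⟨s, hsl, rfl⟩⟩
  rintro _ ⟨τ, hτ, rfl⟩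
  rcases hτ.1.eq_or_lt with rfl | hτ0
  · have hfa := h.eventually_left
    rw [← add_zero a, ← zero_smul ℝ u] at hfa
    filter_upwards [hlt 0 h.pos, hfa] with x hxl hfx hx hxu
    obtain ⟨s, -, hs, hsl⟩ := hparam x hx hxu
    rw [hfx, zero_smul, add_zero, hs]
    by_contra! hs0
    exact hsl ⟨hs0, (hs ▸ hxl).le⟩
  rcases hτ.2.eq_or_lt with rfl | hτl
  · filter_upwards [hgt τ hτ0, h.eventually_right] with x hx0 hfx hx hxu
    obtain ⟨s, rfl, hs, hsl⟩ := hparam x hx hxu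
    rw [hfx, hyperplaneReflection_apply h.norm_eq_one, add_sub_add_left_eq_sub, ← sub_smul,
      inner_sub_right, inner_smul_right, inner_smul_right, huu]
    by_contra! hs0
    exact hsl ⟨(hs ▸ hx0).le, by linarith⟩
  · filter_upwards [hgt τ hτ0, hlt τ hτl] with x hx0 hxl hx hxu
    obtain ⟨s, -, hs, hsl⟩ := hparam x hx hxu
    exact absurd ⟨(hs ▸ hx0).le, (hs ▸ hxl).le⟩ hsl

lemma add_smul_ne_zero (h : IsDipole f a u l O) {e : H} (he : ∀ s t : ℝ, e ≠ s • f (a + t • u))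
    {t : ℝ} (ht : t ∈ Ioo 0 l) {s : ℝ} (hs : 0 ≤ s) : f (a + t • u) + s • e ≠ 0 := by
  intro hzero
  rcases hs.eq_or_lt with rfl | hs
  · rw [zero_smul, add_zero] at hzero
    exact h.ne_zero _ (h.add_smul_mem ⟨ht.1.le, ht.2.le⟩) (h.add_smul_notMem ht) hzero
  · refine he (-s⁻¹) t ?_
    rw [eq_neg_of_add_eq_zero_left hzero, smul_neg, neg_smul, neg_neg, inv_smul_smul₀ hs.ne']

variable [FiniteDimensional ℝ H]

lemma exists_push (h : IsDipole f a u l O) (hδ : 0 < δ) {e : H}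
    (hne : ∀ t ∈ Icc δ (l - δ), ∀ s ∈ Icc (0 : ℝ) 1, f (a + t • u) + s • e ≠ 0) :
    ∃ f', IsDipole f' a u l O ∧ EqOffCompact O f f' ∧
      (∀ t ∈ Icc δ (l - δ), f' (a + t • u) = f (a + t • u) + e) ∧
      ∀ x, ∃ s ∈ Icc (0 : ℝ) 1, f' x = f x + s • e := by
  set C := (fun t : ℝ => a + t • u) '' Icc δ (l - δ)
  have hC : IsCompact C := isCompact_Icc.image (by fun_prop)
  have hCO : C ⊆ O \ {a, a + l • u} := by
    rintro _ ⟨t, ht, rfl⟩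
    exact ⟨h.add_smul_mem ⟨by linarith [ht.1], by linarith [ht.2]⟩,
      h.add_smul_notMem ⟨by linarith [ht.1], by linarith [ht.2]⟩⟩
  have hO : IsOpen (O \ {a, a + l • u}) := h.isOpen.sdiff (toFinite _).isClosed
  have hcont := h.contDiff.continuous
  have hnear : ∀ᶠ x in 𝓝ˢ C, ∀ s ∈ Icc (0 : ℝ) 1, f x + s • e ≠ 0 := by
    rw [eventually_nhdsSet_iff_forall]
    rintro _ ⟨t, ht, rfl⟩
    refine isCompact_Icc.eventually_forall_of_forall_eventually fun s hs => ?_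
    exact ContinuousAt.eventually_ne (by fun_prop) (hne t ht s hs)
  obtain ⟨f', hf', hff', hne', hev, hseg⟩ := exists_eqOffCompact_add h.contDiff
    (w := fun _ => e) contDiff_const (Z := ∅) hC hO hCO (fun x hx _ _ => h.ne_zero x hx.1 hx.2)
    (by rintro _ ⟨t, ht, rfl⟩ -; simpa using hne t ht 1 (right_mem_Icc.2 zero_le_one))
    (hnear.mono fun x hx _ _ => hx)
  exact ⟨f', h.of_eqOffCompact hf' hff' fun x hx => hne' x hx (notMem_empty x),
    hff'.mono sdiff_subset, fun t ht => hev.self_of_nhdsSet _ (mem_image_of_mem _ ht), hseg⟩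

lemma exists_avoiding_neg_ray (hdim : 2 < Module.finrank ℝ H) (h : IsDipole f a u l O) :
    ∃ f', IsDipole f' a u l O ∧ EqOffCompact O f f' ∧
      ∀ t ∈ Ioo 0 l, ∀ r ≥ (0 : ℝ), f' (a + t • u) + r • u ≠ 0 := by
  obtain ⟨e, hef, heu, hinner⟩ := exists_forall_ne_smul hdim
    (h.contDiff.comp (by fun_prop : ContDiff ℝ 1 fun t : ℝ => a + t • u)) u
  obtain ⟨δ, hδ, hends⟩ := h.exists_eq_smul_near_ends
  obtain ⟨M, hM⟩ := h.exists_bound_on_Icc δ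
  set q := (ℝ ∙ u)ᗮ.starProjection
  have hqu : q u = 0 := starProjection_orthogonal_span_singleton_self
  have hqe : 0 < ‖q e‖ := by
    rw [norm_pos_iff]
    intro hqe
    rw [starProjection_orthogonal_span_singleton h.norm_eq_one, sub_eq_zero] at hqe
    exact heu (Submodule.mem_span_singleton.2 ⟨_, hqe.symm⟩)
  set c := (|M| + 1) / ‖q e‖
  have hc : 0 < c := by positivity
  have havoid : ∀ t ∈ Icc δ (l - δ), ∀ s ∈ Icc (0 : ℝ) 1, f (a + t • u) + s • c • e ≠ 0 := by
    intro t ht s hs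
    rw [smul_smul]
    exact h.add_smul_ne_zero hef ⟨by linarith [ht.1], by linarith [ht.2]⟩
      (mul_nonneg hs.1 hc.le)
  obtain ⟨f', hf', hff', hmid, hpush⟩ := h.exists_push hδ havoid
  refine ⟨f', hf', hff', fun t ht r hr hzero => ?_⟩
  by_cases htδ : t ∈ Icc δ (l - δ)
  · have hq : q (f (a + t • u)) = -(c • q e) := by
      rw [hmid t htδ] at hzero
      have := congrArg q hzero
      rw [map_add, map_add, map_smul, map_smul, hqu, smul_zero, add_zero, map_zero] at this
      exact eq_neg_of_add_eq_zero_left this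
    have hle : c * ‖q e‖ ≤ M := by
      calc c * ‖q e‖ = ‖q (f (a + t • u))‖ := by
            rw [hq, norm_neg, norm_smul, Real.norm_of_nonneg hc.le]
        _ ≤ ‖f (a + t • u)‖ := Submodule.norm_starProjection_apply_le _ _
        _ ≤ M := hM t htδ
    rw [div_mul_cancel₀ _ hqe.ne'] at hle
    linarith [le_abs_self M]
  · obtain ⟨m, hm, hfm⟩ := hends t ht htδ
    obtain ⟨s, hs, hfs⟩ := hpush (a + t • u)
    have := congrArg (inner ℝ u) hzero
    rw [hfs, hfm, inner_add_right, inner_add_right, inner_smul_right, inner_smul_right,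
      inner_smul_right, inner_smul_right, real_inner_self_eq_norm_sq, h.norm_eq_one,
      inner_zero_right] at this
    have : 0 ≤ s * (c * inner ℝ u e) := mul_nonneg hs.1 (mul_nonneg hc.le hinner)
    linarith

lemma exists_inner_pos (h : IsDipole f a u l O)
    (havoid : ∀ t ∈ Ioo 0 l, ∀ r ≥ (0 : ℝ), f (a + t • u) + r • u ≠ 0) :
    ∃ f', IsDipole f' a u l O ∧ EqOffCompact O f f' ∧
      ∀ t ∈ Ioo 0 l, 0 < inner ℝ u (f' (a + t • u)) := by
  obtain ⟨δ, hδ, hends⟩ := h.exists_eq_smul_near_ends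
  obtain ⟨M, hM⟩ := h.exists_bound_on_Icc δ
  have huu : inner ℝ u u = (1 : ℝ) := by rw [real_inner_self_eq_norm_sq, h.norm_eq_one, one_pow]
  obtain ⟨f', hf', hff', hmid, hpush⟩ := h.exists_push hδ (e := (|M| + 1) • u)
    fun t ht s hs => by
      rw [smul_smul]
      exact havoid t ⟨by linarith [ht.1], by linarith [ht.2]⟩ _ (mul_nonneg hs.1 (by positivity))
  refine ⟨f', hf', hff', fun t ht => ?_⟩
  by_cases htδ : t ∈ Icc δ (l - δ)
  · rw [hmid t htδ, inner_add_right, inner_smul_right, huu]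
    have := (abs_real_inner_le_norm u (f (a + t • u))).trans_eq (by rw [h.norm_eq_one, one_mul])
    linarith [(abs_le.1 this).1, hM t htδ, le_abs_self M]
  · obtain ⟨m, hm, hfm⟩ := hends t ht htδ
    obtain ⟨s, hs, hfs⟩ := hpush (a + t • u)
    rw [hfs, hfm, inner_add_right, inner_smul_right, inner_smul_right, inner_smul_right, huu]
    have : 0 ≤ s * ((|M| + 1) * 1) := mul_nonneg hs.1 (by positivity)
    linarith

lemma exists_add_orthogonal (h : IsDipole f a u l O)
    (hpos : ∀ t ∈ Ioo 0 l, 0 < inner ℝ u (f (a + t • u))) {w : H → H} (hw : ContDiff ℝ 1 w)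
    (hwu : ∀ x, inner ℝ u (w x) = 0) (hwa : ∀ᶠ x in 𝓝 a, w x = 0)
    (hwb : ∀ᶠ x in 𝓝 (a + l • u), w x = 0) :
    ∃ f', IsDipole f' a u l O ∧ EqOffCompact O f f' ∧
      ∀ᶠ x in 𝓝ˢ (segment ℝ a (a + l • u)), f' x = f x + w x := by
  set b := a + l • u
  have hzero : ∀ x ∈ O, w x = 0 → x ∉ ({a, b} : Set H) →
      ∀ t ∈ Icc (0 : ℝ) 1, f x + t • w x ≠ 0 := fun x hx hwx hxab t _ => by
    rw [hwx, smul_zero, add_zero]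
    exact h.ne_zero x hx hxab
  have hnear : ∀ᶠ x in 𝓝ˢ (segment ℝ a b), x ∉ ({a, b} : Set H) →
      ∀ t ∈ Icc (0 : ℝ) 1, f x + t • w x ≠ 0 := by
    rw [eventually_nhdsSet_iff_forall]
    intro y hy
    have hO := h.isOpen.mem_nhds (h.segment_subset hy)
    by_cases hyab : y ∈ ({a, b} : Set H)
    · rcases hyab with rfl | rfl
      · filter_upwards [hO, hwa] with x using hzero x
      · filter_upwards [hO, hwb] with x using hzero x
    · have hcont : Continuous fun x => inner ℝ u (f x) :=
        continuous_const.inner h.contDiff.continuous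
      filter_upwards [continuousAt_const.eventually_lt hcont.continuousAt
        (h.inner_pos_of_mem_segment hpos hy hyab)] with x hx _ t _ h0
      have := congrArg (inner ℝ u) h0
      rw [inner_add_right, inner_smul_right, hwu, mul_zero, add_zero, inner_zero_right] at this
      exact hx.ne' this
  obtain ⟨f', hf', hff', hne', hev, hpush⟩ := exists_eqOffCompact_add h.contDiff hw
    (isCompact_segment a b) h.isOpen h.segment_subset (fun x hx _ => h.ne_zero x hx)
    (fun x hx hxab => by
      simpa using hnear.self_of_nhdsSet x hx hxab 1 (right_mem_Icc.2 zero_le_one))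
    (hnear.mono fun x hx _ => hx)
  have heq : ∀ x, w x = 0 → f' x = f x := fun x hx => by
    obtain ⟨t, -, ht⟩ := hpush x
    rw [ht, hx, smul_zero, add_zero]
  exact ⟨f', { h with
    contDiff := hf'
    ne_zero := hne'
    eventually_left := by
      filter_upwards [hwa, h.eventually_left] with x hx hfx using (heq x hx).trans hfx
    eventually_right := by
      filter_upwards [hwb, h.eventually_right] with x hx hfx using (heq x hx).trans hfx },
    hff', hev⟩

lemma exists_starProjection_eq (h : IsDipole f a u l O)
    (hpos : ∀ t ∈ Ioo 0 l, 0 < inner ℝ u (f (a + t • u))) :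
    ∃ f', IsDipole f' a u l O ∧ EqOffCompact O f f' ∧
      ∀ᶠ x in 𝓝ˢ (segment ℝ a (a + l • u)),
        (ℝ ∙ u)ᗮ.starProjection (f' x) = (ℝ ∙ u)ᗮ.starProjection (x - a) := by
  set q := (ℝ ∙ u)ᗮ.starProjection
  set w : H → H := fun x => q (x - a) - q (f x)
  have hqu : q u = 0 := starProjection_orthogonal_span_singleton_self
  have hqq : ∀ v, q (q v) = q v := fun v =>
    Submodule.starProjection_eq_self_iff.2 (Submodule.starProjection_apply_mem _ v)
  have hw : ContDiff ℝ 1 w := by have := h.contDiff; fun_prop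
  have hwu : ∀ x, inner ℝ u (w x) = 0 := fun x => by
    rw [inner_sub_right, inner_starProjection_orthogonal_span_singleton,
      inner_starProjection_orthogonal_span_singleton, sub_zero]
  have hwa : ∀ᶠ x in 𝓝 a, w x = 0 := h.eventually_left.mono fun x hx => by
    simp only [w, hx, sub_self]
  have hwb : ∀ᶠ x in 𝓝 (a + l • u), w x = 0 := h.eventually_right.mono fun x hx => by
    simp only [w, hx, hyperplaneReflection_apply h.norm_eq_one, map_sub, map_add, map_smul, hqu,
      smul_zero, add_zero, sub_zero, sub_self]
  obtain ⟨f', hf', hff', hev⟩ := h.exists_add_orthogonal hpos hw hwu hwa hwb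
  refine ⟨f', hf', hff', hev.mono fun x hx => ?_⟩
  rw [hx, map_add, map_sub, hqq, hqq, add_sub_cancel]

lemma exists_ne_zero_of_starProjection_eq (h : IsDipole f a u l O)
    (hproj : ∀ᶠ x in 𝓝ˢ (segment ℝ a (a + l • u)),
      (ℝ ∙ u)ᗮ.starProjection (f x) = (ℝ ∙ u)ᗮ.starProjection (x - a)) :
    ∃ f', ContDiff ℝ 1 f' ∧ EqOffCompact O f f' ∧ ∀ x ∈ O, f' x ≠ 0 := by
  have huu : inner ℝ u u = (1 : ℝ) := by rw [real_inner_self_eq_norm_sq, h.norm_eq_one, one_pow]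
  have hcont := h.contDiff.continuous
  have hC := isCompact_segment a (a + l • u)
  obtain ⟨M, hM⟩ := hC.exists_bound_of_continuousOn hcont.continuousOn
  have hends : ({a, a + l • u} : Set H) ⊆ segment ℝ a (a + l • u) :=
    insert_subset (left_mem_segment ..) (singleton_subset_iff.2 (right_mem_segment ..))
  have hne : ∀ x ∈ segment ℝ a (a + l • u), f x + -((|M| + 1) • u) ≠ 0 := fun x hx hzero => by
    have hfx : f x = (|M| + 1) • u := by rw [← sub_eq_zero, sub_eq_add_neg, hzero]
    have := hM x hx
    rw [hfx, norm_smul, h.norm_eq_one, mul_one, Real.norm_of_nonneg (by positivity)] at this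
    linarith [le_abs_self M]
  have hnear : ∀ᶠ x in 𝓝ˢ (segment ℝ a (a + l • u)), x ∉ segment ℝ a (a + l • u) →
      ∀ t ∈ Icc (0 : ℝ) 1, f x + t • -((|M| + 1) • u) ≠ 0 := by
    filter_upwards [hproj, h.eventually_inner_neg_off_segment] with x hqx hneg hxC t ht hzero
    have hfx : f x = (t * (|M| + 1)) • u := by
      rw [mul_smul, ← sub_eq_zero, sub_eq_add_neg, ← smul_neg, hzero]
    have hxu : x - a ∈ ℝ ∙ u := by
      rw [hfx, map_smul, starProjection_orthogonal_span_singleton_self, smul_zero,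
        starProjection_orthogonal_span_singleton h.norm_eq_one, eq_comm, sub_eq_zero] at hqx
      exact Submodule.mem_span_singleton.2 ⟨_, hqx.symm⟩
    have := hneg hxC hxu
    rw [hfx, inner_smul_right, huu, mul_one] at this
    exact this.not_ge (mul_nonneg ht.1 (by positivity))
  obtain ⟨f', hf', hff', hne', -⟩ := exists_eqOffCompact_add h.contDiff
    (w := fun _ => -((|M| + 1) • u)) contDiff_const (Z := ∅) hC h.isOpen h.segment_subset
    (fun x hx hxC _ => h.ne_zero x hx fun hxab => hxC (hends hxab)) (fun x hx _ => hne x hx)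
    (hnear.mono fun x hx hxC _ => hx hxC)
  exact ⟨f', hf', hff', fun x hx => hne' x hx (notMem_empty x)⟩

lemma exists_ne_zero (hdim : 2 < Module.finrank ℝ H) (h : IsDipole f a u l O) :
    ∃ f', ContDiff ℝ 1 f' ∧ EqOffCompact O f f' ∧ ∀ x ∈ O, f' x ≠ 0 := by
  obtain ⟨f₁, h₁, hff₁, havoid⟩ := h.exists_avoiding_neg_ray hdim
  obtain ⟨f₂, h₂, hff₂, hpos⟩ := h₁.exists_inner_pos havoid
  obtain ⟨f₃, h₃, hff₃, hproj⟩ := h₂.exists_starProjection_eq hpos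
  obtain ⟨f', hf', hff', hne⟩ := h₃.exists_ne_zero_of_starProjection_eq hproj
  exact ⟨f', hf', ((hff₁.trans hff₂).trans hff₃).trans hff', hne⟩

end IsDipole

lemma exists_ne_zero_of_det_pos_of_det_neg [FiniteDimensional ℝ H]
    (hdim : 2 < Module.finrank ℝ H) {f : H → H} (hf : ContDiff ℝ 1 f) {a b : H} {O : Set H}
    (hO : IsOpen O) (hseg : segment ℝ a b ⊆ O) (hfa : f a = 0) (hfb : f b = 0)
    (hne : ∀ x ∈ O, x ≠ a → x ≠ b → f x ≠ 0) (hdeta : 0 < (fderiv ℝ f a).det)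
    (hdetb : (fderiv ℝ f b).det < 0) :
    ∃ f', ContDiff ℝ 1 f' ∧ EqOffCompact O f f' ∧ ∀ x ∈ O, f' x ≠ 0 := by
  have hab : a ≠ b := by rintro rfl; exact hdeta.not_gt hdetb
  have hl : 0 < ‖b - a‖ := norm_pos_iff.2 (sub_ne_zero.2 hab.symm)
  set u := ‖b - a‖⁻¹ • (b - a)
  have hu : ‖u‖ = 1 := norm_smul_inv_norm (𝕜 := ℝ) (sub_ne_zero.2 hab.symm)
  have hb : a + ‖b - a‖ • u = b := by rw [smul_inv_smul₀ hl.ne', add_sub_cancel]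
  have haO : a ∈ O := hseg (left_mem_segment ..)
  have hbO : b ∈ O := hseg (right_mem_segment ..)
  obtain ⟨f₁, hf₁, hff₁, hne₁, hf₁a⟩ := exists_eqOffCompact_eventually_eq_clm hf
    (hO.sdiff isClosed_singleton) ⟨haO, hab⟩ hfa (fun x hx hxa => hne x hx.1 hxa hx.2)
    hdeta.ne' (polygonallyJoined_id hdeta)
  have hfb' := hff₁.eventuallyEq (x := b) fun h => h.2 rfl
  rw [← hfb'.fderiv_eq] at hdetb
  obtain ⟨f₂, hf₂, hff₂, hne₂, hf₂b⟩ := exists_eqOffCompact_eventually_eq_clm hf₁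
    (hO.sdiff isClosed_singleton) ⟨hbO, hab.symm⟩ (hfb'.eq_of_nhds.trans hfb)
    (fun x hx hxb => hne₁ x ⟨hx.1, hxb⟩ hx.2) hdetb.ne
    (polygonallyJoined_hyperplaneReflection hdetb (norm_ne_zero_iff.1 (hu ▸ one_ne_zero)))
  have hdipole : IsDipole f₂ a u ‖b - a‖ O :=
    { contDiff := hf₂
      norm_eq_one := hu
      pos := hl
      isOpen := hO
      segment_subset := by rwa [hb]
      ne_zero := fun x hx hxab => by
        rw [hb, mem_insert_iff, not_or] at hxab
        exact hne₂ x ⟨hx, hxab.1⟩ hxab.2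
      eventually_left := (hff₂.eventuallyEq fun h => h.2 rfl).trans hf₁a
      eventually_right := by rwa [hb] }
  obtain ⟨f', hf', hff', hne'⟩ := hdipole.exists_ne_zero hdim
  exact ⟨f', hf', ((hff₁.mono sdiff_subset).trans (hff₂.mono sdiff_subset)).trans hff', hne'⟩

end Dipole

/-! ### Moving a zero -/

section MoveZero

variable {H : Type*} [NormedAddCommGroup H]

lemma eq_of_add_smul_sub_eq [NormedSpace ℝ H] {χ : H → ℝ} {L : NNReal} (hL : LipschitzWith L χ)
    {x y y' : H} (hsmall : L * ‖y - y'‖ < 1) (hχ : χ y' = 1) (hx : x + χ x • (y - y') = y) :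
    x = y' := by
  have hdiff : x - y' = (χ y' - χ x) • (y - y') := by
    rw [hχ, sub_smul, one_smul, sub_right_comm, sub_left_inj]
    exact eq_sub_of_add_eq hx
  have hle : ‖x - y'‖ ≤ L * ‖x - y'‖ * ‖y - y'‖ := by
    calc ‖x - y'‖ = ‖χ y' - χ x‖ * ‖y - y'‖ := by rw [hdiff, norm_smul]
      _ ≤ L * ‖x - y'‖ * ‖y - y'‖ := by
        gcongr
        rw [norm_sub_rev]
        exact hL.norm_sub_le x y'
  by_contra hne
  nlinarith [norm_pos_iff.2 (sub_ne_zero.2 hne)]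

variable [InnerProductSpace ℝ H] [FiniteDimensional ℝ H]

lemma exists_local_translation (z : H) {r : ℝ} (hr : 0 < r) :
    ∃ ε > 0, ε ≤ r ∧ ∀ y ∈ ball z ε, ∀ y' ∈ ball z ε, ∃ Φ : H → H, ContDiff ℝ 1 Φ ∧
      EqOffCompact (ball z r) id Φ ∧ MapsTo Φ (ball z r) (ball z r) ∧ (∀ x, Φ x = y ↔ x = y') ∧
      HasFDerivAt Φ (ContinuousLinearMap.id ℝ H) y' := by
  obtain ⟨χ, hχ, hχ01, hχc, hχs, hχ1⟩ := exists_contDiff_cutoff (isCompact_singleton (x := z))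
    (isOpen_ball (x := z) (ε := r / 2)) (by simp [hr])
  rw [nhdsSet_singleton] at hχ1
  obtain ⟨ρ, hρ, hχρ⟩ := Metric.eventually_nhds_iff_ball.1 hχ1
  obtain ⟨L, hL⟩ := hχ.lipschitzWith_of_hasCompactSupport hχc one_ne_zero
  set ε := min (min ρ (r / 4)) (1 / (4 * (L + 1)))
  have hερ : ε ≤ ρ := (min_le_left _ _).trans (min_le_left _ _)
  have hεr : ε ≤ r / 4 := (min_le_left _ _).trans (min_le_right _ _)
  refine ⟨ε, by positivity, by linarith, fun y hy y' hy' => ?_⟩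
  have hyy' : ‖y - y'‖ < 2 * ε := by
    rw [← dist_eq_norm, two_mul]
    exact (dist_triangle_right y y' z).trans_lt (add_lt_add hy hy')
  have hsmall : L * ‖y - y'‖ < 1 := by
    have hεL : ε * (4 * (L + 1)) ≤ 1 := (le_div_iff₀ (by positivity)).1 (min_le_right _ _)
    nlinarith [norm_nonneg (y - y'), L.coe_nonneg]
  have hχy' : ∀ᶠ x in 𝓝 y', χ x = 1 :=
    (isOpen_ball.eventually_mem (ball_subset_ball hερ hy')).mono hχρ
  refine ⟨fun x => x + χ x • (y - y'), by fun_prop, ⟨tsupport χ, hχc,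
    hχs.trans (ball_subset_ball (by linarith)), fun x hx => ?_⟩, fun x hx => ?_,
    fun x => ⟨eq_of_add_smul_sub_eq hL hsmall hχy'.self_of_nhds, ?_⟩, ?_⟩
  · beta_reduce
    rw [image_eq_zero_of_notMem_tsupport hx, zero_smul, add_zero, id]
  · by_cases hxs : x ∈ tsupport χ
    · have hmove : ‖χ x • (y - y')‖ ≤ ‖y - y'‖ := by
        rw [norm_smul, Real.norm_of_nonneg (hχ01 x).1]
        exact mul_le_of_le_one_left (norm_nonneg _) (hχ01 x).2
      have hxz := mem_ball_iff_norm.1 (hχs hxs)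
      rw [mem_ball_iff_norm, add_sub_right_comm]
      linarith [norm_add_le (x - z) (χ x • (y - y'))]
    · simpa [image_eq_zero_of_notMem_tsupport hxs] using hx
  · rintro rfl
    beta_reduce
    rw [hχy'.self_of_nhds, one_smul, add_sub_cancel]
  · refine ((hasFDerivAt_id y').add_const (y - y')).congr_of_eventuallyEq ?_
    filter_upwards [hχy'] with x hx
    rw [hx, one_smul, id]

lemma exists_eqOffCompact_zero_moved (z : H) {r : ℝ} (hr : 0 < r) :
    ∃ ε > 0, ε ≤ r ∧ ∀ y ∈ ball z ε, ∀ y' ∈ ball z ε, ∀ f : H → H, ContDiff ℝ 1 f → f y = 0 →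
      (∀ x ∈ ball z r, x ≠ y → f x ≠ 0) →
      ∃ f', ContDiff ℝ 1 f' ∧ EqOffCompact (ball z r) f f' ∧ f' y' = 0 ∧
        (∀ x ∈ ball z r, x ≠ y' → f' x ≠ 0) ∧ fderiv ℝ f' y' = fderiv ℝ f y := by
  obtain ⟨ε, hε, hεr, htrans⟩ := exists_local_translation z hr
  refine ⟨ε, hε, hεr, fun y hy y' hy' f hf hfy hne => ?_⟩
  obtain ⟨Φ, hΦ, ⟨K, hK, hKr, hΦK⟩, hmaps, hΦy, hderiv⟩ := htrans y hy y' hy'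
  have hΦy' : Φ y' = y := (hΦy y').2 rfl
  refine ⟨f ∘ Φ, hf.comp hΦ, ⟨K, hK, hKr, fun x hx => ?_⟩, ?_, fun x hx hxy => ?_, ?_⟩
  · rw [Function.comp_apply, hΦK x hx, id]
  · rw [Function.comp_apply, hΦy', hfy]
  · exact hne _ (hmaps hx) fun h => hxy ((hΦy x).1 h)
  · have hfy : HasFDerivAt f (fderiv ℝ f y) (Φ y') := by
      rw [hΦy']
      exact (hf.differentiable one_ne_zero y).hasFDerivAt
    rw [(hfy.comp y' hderiv).fderiv, ContinuousLinearMap.comp_id]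

end MoveZero

/-! ### Equivariant vector fields for a smooth action on a vector space -/

section SmoothAction

/-- The group `G` acts on the normed space `H` by maps of class `C²`, so that the differentials
of the action are of class `C¹`. -/
class ContDiffConstSMul (G H : Type*) [SMul G H] [NormedAddCommGroup H] [NormedSpace ℝ H] :
    Prop where
  contDiff_const_smul (g : G) : ContDiff ℝ 2 fun x : H => g • x

/-- An action is semifree if its points that are not fixed by the whole group have trivial
stabilizer. -/
def IsSemifree (G X : Type*) [Group G] [MulAction G X] : Prop :=
  ∀ x ∉ MulAction.fixedPoints G X, ∀ g : G, g ≠ 1 → g • x ≠ x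

/-- No two distinct translates of the set `B` under `G` meet. -/
def DisjointTranslates (G : Type*) {X : Type*} [Group G] [MulAction G X] (B : Set X) : Prop :=
  ∀ x ∈ B, ∀ g : G, g ≠ 1 → g • x ∉ B

lemma smul_mem_fixedPoints_iff {G X : Type*} [Group G] [MulAction G X] {g : G} {x : X} :
    g • x ∈ MulAction.fixedPoints G X ↔ x ∈ MulAction.fixedPoints G X := by
  refine ⟨fun h k => ?_, fun h => (h g).symm ▸ h⟩
  have hx : x = g • x := by simpa using h g⁻¹
  rw [hx, h k]

lemma isClosed_fixedPoints_of_continuousConstSMul (G X : Type*) [Group G] [MulAction G X]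
    [TopologicalSpace X] [T2Space X] [ContinuousConstSMul G X] :
    IsClosed (MulAction.fixedPoints G X) := by
  rw [MulAction.fixed_eq_iInter_fixedBy]
  exact isClosed_iInter fun g => isClosed_eq (continuous_const_smul g) continuous_id

lemma IsSemifree.exists_ball_disjointTranslates {G X : Type*} [Group G] [Finite G]
    [PseudoMetricSpace X] [T2Space X] [MulAction G X] [ContinuousConstSMul G X]
    (hfree : IsSemifree G X) {z : X} (hz : z ∉ MulAction.fixedPoints G X) {W : Set X}
    (hW : W ∈ 𝓝 z) :
    ∃ r > (0 : ℝ), ball z r ⊆ W ∧ ball z r ⊆ (MulAction.fixedPoints G X)ᶜ ∧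
      DisjointTranslates G (ball z r) := by
  have hsep (g : G) (hg : g ≠ 1) : ∀ᶠ V in (𝓝 z).smallSets, ∀ x ∈ V, g • x ∉ V := by
    obtain ⟨V, V', hV, hV', hzV, hzV', hd⟩ := t2_separation (hfree z hz g hg)
    have hn : V' ∩ (g • ·) ⁻¹' V ∈ 𝓝 z :=
      (hV'.inter (hV.preimage (continuous_const_smul g))).mem_nhds ⟨hzV', hzV⟩
    filter_upwards [eventually_smallSets_subset.2 hn] with B hB x hx hgx
    exact disjoint_left.1 hd (hB hx).2 (hB hgx).1
  have hF : (MulAction.fixedPoints G X)ᶜ ∈ 𝓝 z :=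
    (isClosed_fixedPoints_of_continuousConstSMul G X).isOpen_compl.mem_nhds hz
  have hsep_all : ∀ᶠ V in (𝓝 z).smallSets, ∀ g : G, g ≠ 1 → ∀ x ∈ V, g • x ∉ V :=
    eventually_all.2 fun g => eventually_imp_distrib_left.2 (hsep g)
  obtain ⟨V, hV, hVW, hVF, hVsep⟩ := ((eventually_smallSets_subset.2 hW).and
    ((eventually_smallSets_subset.2 hF).and hsep_all)).exists_mem_of_smallSets
  obtain ⟨r, hr, hrV⟩ := Metric.mem_nhds_iff.1 hV
  exact ⟨r, hr, hrV.trans hVW, hrV.trans hVF,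
    fun x hx g hg hgx => hVsep g hg x (hrV hx) (hrV hgx)⟩

variable {G H : Type*} [Group G] [NormedAddCommGroup H] [NormedSpace ℝ H] [MulAction G H]

/-- The differential at `x` of the action of `g`. -/
noncomputable def smulDeriv (g : G) (x : H) : H →L[ℝ] H := fderiv ℝ (fun y => g • y) x

/-- The vector field `f` on `H` is invariant under the differentials of the action of `G`. -/
def IsEquivariantField (G : Type*) [Group G] [MulAction G H] (f : H → H) : Prop :=
  ∀ (g : G) (x : H), f (g • x) = smulDeriv g x (f x)

/-- The sum of the push-forwards of the vector field `φ` under the elements of `G`. -/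
noncomputable def symmetrization (G : Type*) [Group G] [MulAction G H] [Fintype G] (φ : H → H)
    (x : H) : H :=
  ∑ g : G, smulDeriv g (g⁻¹ • x) (φ (g⁻¹ • x))

lemma smulDeriv_one (x : H) : smulDeriv (1 : G) x = .id ℝ H := by
  simp only [smulDeriv, one_smul]
  exact fderiv_fun_id

lemma IsEquivariantField.add {f f' : H → H} (hf : IsEquivariantField G f)
    (hf' : IsEquivariantField G f') : IsEquivariantField G fun x => f x + f' x :=
  fun g x => by beta_reduce; rw [hf g x, hf' g x, map_add]

lemma symmetrization_eq_zero [Fintype G] {φ : H → H} {x : H} (hφ : ∀ g : G, φ (g • x) = 0) :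
    symmetrization G φ x = 0 :=
  Finset.sum_eq_zero fun g _ => by rw [hφ, map_zero]

lemma symmetrization_eq_self [Fintype G] {φ : H → H} {B : Set H}
    (hB : DisjointTranslates G B) (hφ : ∀ x ∉ B, φ x = 0) {x : H} (hx : x ∈ B) :
    symmetrization G φ x = φ x := by
  rw [symmetrization, Fintype.sum_eq_single 1, inv_one, one_smul, smulDeriv_one,
    ContinuousLinearMap.id_apply]
  intro g hg
  rw [hφ _ (hB x hx g⁻¹ (inv_ne_one.2 hg)), map_zero]

variable [ContDiffConstSMul G H]

instance : ContinuousConstSMul G H :=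
  ⟨fun g => (ContDiffConstSMul.contDiff_const_smul g).continuous⟩

lemma hasFDerivAt_smul (g : G) (x : H) : HasFDerivAt (fun y => g • y) (smulDeriv g x) x :=
  ((ContDiffConstSMul.contDiff_const_smul g).differentiable two_ne_zero x).hasFDerivAt

lemma contDiff_smulDeriv (g : G) : ContDiff ℝ 1 (smulDeriv g : H → H →L[ℝ] H) :=
  (ContDiffConstSMul.contDiff_const_smul g).fderiv_right one_add_one_eq_two.le

lemma smulDeriv_mul (g h : G) (x : H) :
    smulDeriv (g * h) x = smulDeriv g (h • x) ∘L smulDeriv h x := by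
  have hcomp := (hasFDerivAt_smul g (h • x)).comp x (hasFDerivAt_smul h x)
  rw [← hcomp.fderiv, smulDeriv]
  exact congrArg (fderiv ℝ · x) (funext (mul_smul g h))

lemma smulDeriv_inv_comp (g : G) (x : H) : smulDeriv g⁻¹ (g • x) ∘L smulDeriv g x = .id ℝ H := by
  rw [← smulDeriv_mul, inv_mul_cancel, smulDeriv_one]

lemma smulDeriv_inv_smulDeriv (g : G) (x v : H) : smulDeriv g⁻¹ (g • x) (smulDeriv g x v) = v :=
  DFunLike.congr_fun (smulDeriv_inv_comp g x) v

lemma det_comp_clm (S T : H →L[ℝ] H) : (S ∘L T).det = S.det * T.det :=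
  LinearMap.det_comp (S : H →ₗ[ℝ] H) T

lemma det_smulDeriv_ne_zero (g : G) (x : H) : (smulDeriv g x).det ≠ 0 := by
  have hdet := congrArg ContinuousLinearMap.det (smulDeriv_inv_comp g x)
  rw [det_comp_clm] at hdet
  refine right_ne_zero_of_mul (hdet.trans_ne ?_)
  exact LinearMap.det_id.trans_ne one_ne_zero

namespace IsEquivariantField

variable {f : H → H}

lemma smul_eq_zero_iff (hf : IsEquivariantField G f) (g : G) {x : H} :
    f (g • x) = 0 ↔ f x = 0 := by
  rw [hf g x]
  refine ⟨fun h => ?_, fun h => by rw [h, map_zero]⟩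
  rw [← smulDeriv_inv_smulDeriv g x (f x), h, map_zero]

lemma det_fderiv_smul (hf : IsEquivariantField G f) (hdiff : Differentiable ℝ f) (g : G) {x : H}
    (hx : f x = 0) : (fderiv ℝ f (g • x)).det = (fderiv ℝ f x).det := by
  have hleft : HasFDerivAt (fun y => f (g • y)) (fderiv ℝ f (g • x) ∘L smulDeriv g x) x :=
    (hdiff (g • x)).hasFDerivAt.comp x (hasFDerivAt_smul g x)
  have hright : HasFDerivAt (fun y => smulDeriv g y (f y)) (smulDeriv g x ∘L fderiv ℝ f x) x := by
    have hD := ((contDiff_smulDeriv g).differentiable one_ne_zero x).hasFDerivAt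
    simpa [hx] using hD.clm_apply (hdiff x).hasFDerivAt
  have hconj := hleft.unique (hright.congr_of_eventuallyEq (.of_forall (hf g)))
  have hdet := congrArg ContinuousLinearMap.det hconj
  rw [det_comp_clm, det_comp_clm, mul_comm] at hdet
  exact mul_left_cancel₀ (det_smulDeriv_ne_zero g x) hdet

end IsEquivariantField

section Symmetrization

variable [Fintype G] {φ : H → H}

lemma isEquivariantField_symmetrization (φ : H → H) :
    IsEquivariantField G (symmetrization G φ) := by
  intro h x
  rw [symmetrization, symmetrization, map_sum, ← Equiv.sum_comp (Equiv.mulLeft h)]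
  refine Finset.sum_congr rfl fun g _ => ?_
  rw [Equiv.coe_mulLeft, mul_inv_rev, mul_smul, inv_smul_smul, smulDeriv_mul, smul_inv_smul,
    ContinuousLinearMap.comp_apply]

lemma contDiff_symmetrization_uncurry {E : Type*} [NormedAddCommGroup E] [NormedSpace ℝ E]
    {Φ : E → H → H} (hΦ : ContDiff ℝ 1 fun p : E × H => Φ p.1 p.2) :
    ContDiff ℝ 1 fun p : E × H => symmetrization G (Φ p.1) p.2 := by
  refine ContDiff.sum fun g _ => ?_
  have hg : ContDiff ℝ 1 fun p : E × H => g⁻¹ • p.2 :=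
    ((ContDiffConstSMul.contDiff_const_smul g⁻¹).of_le one_le_two).comp contDiff_snd
  exact ((contDiff_smulDeriv g).comp hg).clm_apply (hΦ.comp (contDiff_fst.prodMk hg))

lemma contDiff_symmetrization (hφ : ContDiff ℝ 1 φ) : ContDiff ℝ 1 (symmetrization G φ) :=
  (contDiff_symmetrization_uncurry (E := ℝ) (Φ := fun _ => φ) (hφ.comp contDiff_snd)).comp
    (contDiff_const (c := (0 : ℝ)).prodMk contDiff_id)

lemma exists_isCompact_symmetrization_eq_zero {K : Set H} (hK : IsCompact K)
    (hKF : K ⊆ (MulAction.fixedPoints G H)ᶜ) :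
    ∃ Q, IsCompact Q ∧ Q ⊆ (MulAction.fixedPoints G H)ᶜ ∧
      ∀ φ : H → H, (∀ x ∉ K, φ x = 0) → ∀ x ∉ Q, symmetrization G φ x = 0 := by
  refine ⟨⋃ g : G, (g • ·) '' K, isCompact_iUnion fun g => hK.image (continuous_const_smul g),
    ?_, fun φ hφ x hx => symmetrization_eq_zero fun g => hφ _ fun hg =>
      hx (mem_iUnion.2 ⟨g⁻¹, g • x, hg, inv_smul_smul g x⟩)⟩
  simp only [iUnion_subset_iff, image_subset_iff]
  exact fun g x hx hgx => hKF hx (smul_mem_fixedPoints_iff.1 hgx)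

end Symmetrization

lemma IsEquivariantField.exists_eq_on_of_eqOffCompact [Finite G] {f f' : H → H}
    (he : IsEquivariantField G f) (hf : ContDiff ℝ 1 f) (hf' : ContDiff ℝ 1 f') {B : Set H}
    (hB : DisjointTranslates G B) (hBF : B ⊆ (MulAction.fixedPoints G H)ᶜ)
    (hff' : EqOffCompact B f f') :
    ∃ k, ContDiff ℝ 1 k ∧ IsEquivariantField G k ∧
      EqOffCompact (MulAction.fixedPoints G H)ᶜ f k ∧ (∀ x ∈ B, k x = f' x) ∧
      ∀ x, (∀ g : G, g • x ∉ B) → k =ᶠ[𝓝 x] f := by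
  have : Fintype G := .ofFinite G
  obtain ⟨K, hK, hKB, hfK⟩ := hff'
  have hoff (x : H) (hx : x ∉ K) : f' x - f x = 0 := sub_eq_zero.2 (hfK x hx)
  obtain ⟨Q, hQ, hQF, hzero⟩ :=
    exists_isCompact_symmetrization_eq_zero (G := G) hK (hKB.trans hBF)
  refine ⟨fun x => f x + symmetrization G (fun y => f' y - f y) x,
    hf.add (contDiff_symmetrization (hf'.sub hf)), he.add (isEquivariantField_symmetrization _),
    ⟨Q, hQ, hQF, fun x hx => ?_⟩, fun x hx => ?_, fun x hx => ?_⟩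
  · beta_reduce
    rw [hzero _ hoff x hx, add_zero]
  · beta_reduce
    rw [symmetrization_eq_self hB (fun y hy => hoff y fun hyK => hy (hKB hyK)) hx,
      add_sub_cancel]
  · have hnhds (g : G) : ∀ᶠ y in 𝓝 x, g • y ∉ K :=
      (continuous_const_smul g).continuousAt.eventually
        (hK.isClosed.isOpen_compl.mem_nhds fun hxK => hx g (hKB hxK))
    filter_upwards [eventually_all.2 hnhds] with y hy
    rw [symmetrization_eq_zero fun g => hoff _ (hy g), add_zero]

/-- A field `f` of class `C¹` with nondegenerate zeros, equivariant, and equal to `f₀` off a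
compact set without fixed points. -/
structure IsRegularModification (G : Type*) [Group G] [MulAction G H] (f₀ f : H → H) : Prop where
  contDiff : ContDiff ℝ 1 f
  equivariant : IsEquivariantField G f
  eqOffCompact : EqOffCompact (MulAction.fixedPoints G H)ᶜ f₀ f
  det_ne_zero : ∀ x, f x = 0 → (fderiv ℝ f x).det ≠ 0

lemma IsRegularModification.exists_eq_on_of_eqOffCompact [Finite G] {f₀ f f' : H → H}
    (hf : IsRegularModification G f₀ f) (hf' : ContDiff ℝ 1 f') {B : Set H} (hBo : IsOpen B)
    (hB : DisjointTranslates G B) (hBF : B ⊆ (MulAction.fixedPoints G H)ᶜ)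
    (hff' : EqOffCompact B f f') (hdet : ∀ x ∈ B, f' x = 0 → (fderiv ℝ f' x).det ≠ 0) :
    ∃ k, IsRegularModification G f₀ k ∧ (∀ x ∈ B, k x = f' x) ∧
      ∀ x, (∀ g : G, g • x ∉ B) → k =ᶠ[𝓝 x] f := by
  obtain ⟨k, hk, hke, hfk, hkB, hkoff⟩ :=
    hf.equivariant.exists_eq_on_of_eqOffCompact hf.contDiff hf' hB hBF hff'
  refine ⟨k, ⟨hk, hke, hf.eqOffCompact.trans hfk, fun x hx => ?_⟩, hkB, hkoff⟩
  by_cases hxB : ∀ g : G, g • x ∉ B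
  · have heq := hkoff x hxB
    rw [heq.fderiv_eq]
    exact hf.det_ne_zero x (heq.self_of_nhds ▸ hx)
  · push Not at hxB
    obtain ⟨g, hg⟩ := hxB
    have heq : k =ᶠ[𝓝 (g • x)] f' := by filter_upwards [hBo.mem_nhds hg] using hkB
    rw [← hke.det_fderiv_smul (hk.differentiable one_ne_zero) g hx, heq.fderiv_eq]
    exact hdet _ hg (heq.self_of_nhds ▸ (hke.smul_eq_zero_iff g).2 hx)

end SmoothAction

section Nondegeneracy

variable {H : Type*} [NormedAddCommGroup H] [NormedSpace ℝ H]

lemma dense_setOf_regularValue [FiniteDimensional ℝ H] {f : H → H} (hf : Differentiable ℝ f) :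
    Dense {c | ∀ x, f x = c → (fderiv ℝ f x).det ≠ 0} := by
  borelize H
  have hnull := addHaar_image_eq_zero_of_det_fderivWithin_eq_zero (Measure.addHaar : Measure H)
    (fun x _ => (hf x).hasFDerivAt.hasFDerivWithinAt) fun x (hx : (fderiv ℝ f x).det = 0) => hx
  convert Measure.addHaar.dense_of_ae (compl_mem_ae_iff.2 hnull) using 1
  ext c
  exact ⟨fun h ⟨x, hx, hxc⟩ => h x hxc hx, fun h x hxc hx => h ⟨x, hx, hxc⟩⟩

lemma eventually_det_fderiv_ne_zero_of_isCompact {E : Type*} [NormedAddCommGroup E]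
    [NormedSpace ℝ E] {Φ : E → H → H} (hΦ : ContDiff ℝ 1 fun p : E × H => Φ p.1 p.2) {c₀ : E}
    {C : Set H} (hC : IsCompact C) (hnd : ∀ x ∈ C, Φ c₀ x = 0 → (fderiv ℝ (Φ c₀) x).det ≠ 0) :
    ∀ᶠ c in 𝓝 c₀, ∀ x ∈ C, Φ c x = 0 → (fderiv ℝ (Φ c) x).det ≠ 0 := by
  have hdet : Continuous fun p : E × H => (fderiv ℝ (Φ p.1) p.2).det := by
    have : ContDiff ℝ 0 fun p : E × H => fderiv ℝ (Φ p.1) p.2 :=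
      ContDiff.fderiv (m := 1) (f := fun p : E × H => Φ p.1)
        (hΦ.comp ((contDiff_fst.comp contDiff_fst).prodMk contDiff_snd)) contDiff_snd
        (by norm_num)
    exact ContinuousLinearMap.continuous_det.comp this.continuous
  refine hC.eventually_forall_of_forall_eventually fun x hx => ?_
  have hopen : IsOpen {p : E × H | Φ p.1 p.2 = 0 → (fderiv ℝ (Φ p.1) p.2).det ≠ 0} := by
    simp only [imp_iff_not_or]
    exact (isOpen_ne_fun hΦ.continuous continuous_const).union
      (isOpen_ne_fun hdet continuous_const)
  exact hopen.mem_nhds (hnd x hx)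

lemma finite_zeros_of_det_fderiv_ne_zero [FiniteDimensional ℝ H] {f : H → H}
    (hf : Differentiable ℝ f) (hdet : ∀ x, f x = 0 → (fderiv ℝ f x).det ≠ 0) {K : Set H}
    (hK : IsCompact K) (hfK : ∀ x ∉ K, f x ≠ 0) : {x | f x = 0}.Finite := by
  have hcompact : IsCompact {x | f x = 0} :=
    hK.of_isClosed_subset (isClosed_eq hf.continuous continuous_const) fun x hx =>
      not_imp_not.1 (hfK x) hx
  refine hcompact.finite (isDiscrete_iff_nhdsNE.2 fun x hx => ?_)
  have hunit : IsUnit (fderiv ℝ f x) := isUnit_iff_det_ne_zero.2 (hdet x hx)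
  obtain ⟨C, -, hC⟩ := (fderiv ℝ f x).toLinearMap.exists_antilipschitzWith
    (LinearMap.ker_eq_bot.2 (ContinuousLinearMap.isUnit_iff_bijective.1 hunit).injective)
  rw [← disjoint_iff, disjoint_principal_right]
  exact (hf x).hasFDerivAt.eventually_ne ⟨C, hC⟩

end Nondegeneracy

section RegularModification

variable {G H : Type*} [Group G] [Finite G] [NormedAddCommGroup H] [NormedSpace ℝ H]
  [FiniteDimensional ℝ H] [MulAction G H] [ContDiffConstSMul G H]

lemma IsEquivariantField.exists_family_add_const {f : H → H} (he : IsEquivariantField G f)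
    (hf : ContDiff ℝ 1 f) {z : H} {r s : ℝ} (hsr : s < r)
    (hrF : ball z r ⊆ (MulAction.fixedPoints G H)ᶜ) (hr : DisjointTranslates G (ball z r)) :
    ∃ Φ : H → H → H, ContDiff ℝ 1 (fun p : H × H => Φ p.1 p.2) ∧ Φ 0 = f ∧
      (∀ c, IsEquivariantField G (Φ c)) ∧
      (∃ Q, IsCompact Q ∧ Q ⊆ (MulAction.fixedPoints G H)ᶜ ∧ ∀ c, ∀ x ∉ Q, Φ c x = f x) ∧
      ∀ c, ∀ x ∈ closedBall z s, Φ c =ᶠ[𝓝 x] fun y => f y + c := by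
  have : Fintype G := .ofFinite G
  obtain ⟨χ, hχ, -, hχc, hχr, hχ1⟩ := exists_contDiff_cutoff (isCompact_closedBall z s)
    (isOpen_ball (x := z) (ε := r)) (closedBall_subset_ball hsr)
  have hχ0 (c x : H) (hx : x ∉ tsupport χ) : χ x • c = 0 := by
    rw [image_eq_zero_of_notMem_tsupport hx, zero_smul]
  obtain ⟨Q, hQ, hQF, hzero⟩ :=
    exists_isCompact_symmetrization_eq_zero (G := G) hχc (hχr.trans hrF)
  refine ⟨fun c x => f x + symmetrization G (fun y => χ y • c) x, ?_, ?_,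
    fun c => he.add (isEquivariantField_symmetrization _), ⟨Q, hQ, hQF, fun c x hx => ?_⟩,
    fun c x hx => ?_⟩
  · exact (hf.comp contDiff_snd).add (contDiff_symmetrization_uncurry
      (Φ := fun c y => χ y • c) ((hχ.comp contDiff_snd).smul contDiff_fst))
  · ext x
    beta_reduce
    rw [symmetrization_eq_zero fun g => smul_zero _, add_zero]
  · beta_reduce
    rw [hzero _ (hχ0 c) x hx, add_zero]
  · filter_upwards [hχ1.filter_mono (nhds_le_nhdsSet hx),
      isOpen_ball.mem_nhds (closedBall_subset_ball hsr hx)] with y hy hyr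
    rw [symmetrization_eq_self hr (fun y hy => hχ0 c y fun h => hy (hχr h)) hyr, hy, one_smul]

lemma IsEquivariantField.exists_det_fderiv_ne_zero_on_closedBall {f : H → H}
    (he : IsEquivariantField G f) (hf : ContDiff ℝ 1 f) {z : H} {r s : ℝ} (hsr : s < r)
    (hrF : ball z r ⊆ (MulAction.fixedPoints G H)ᶜ) (hr : DisjointTranslates G (ball z r))
    {W C : Set H} (hW : IsOpen W) (hC : IsCompact C) (hfW : ∀ x ∉ W, f x ≠ 0)
    (hnd : ∀ x ∈ C, f x = 0 → (fderiv ℝ f x).det ≠ 0) :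
    ∃ f', ContDiff ℝ 1 f' ∧ IsEquivariantField G f' ∧
      EqOffCompact (MulAction.fixedPoints G H)ᶜ f f' ∧ (∀ x ∉ W, f' x ≠ 0) ∧
      ∀ x ∈ C ∪ closedBall z s, f' x = 0 → (fderiv ℝ f' x).det ≠ 0 := by
  obtain ⟨Φ, hΦ, rfl, hequiv, ⟨Q, hQ, hQF, hQoff⟩, hadd⟩ :=
    he.exists_family_add_const hf hsr hrF hr
  have hneW : ∀ᶠ c in 𝓝 0, ∀ x ∈ Q \ W, Φ c x ≠ 0 :=
    (hQ.diff hW).eventually_forall_of_forall_eventually fun x hx =>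
      hΦ.continuous.continuousAt.eventually_ne (hfW x hx.2)
  have hregular : ∃ᶠ c in 𝓝 0, ∀ x, Φ 0 x = -c → (fderiv ℝ (Φ 0) x).det ≠ 0 := by
    have hdense := dense_setOf_regularValue (hf.differentiable one_ne_zero)
    have hneg : Tendsto (fun c : H => -c) (𝓝 0) (𝓝 0) := by simpa using tendsto_neg (0 : H)
    refine hneg.frequently ((mem_closure_iff_frequently.1 (hdense 0)).mono fun c hc => ?_)
    rwa [neg_neg]
  obtain ⟨c, hc, hcW, hcC⟩ := (hregular.and_eventually
    (hneW.and (eventually_det_fderiv_ne_zero_of_isCompact hΦ hC hnd))).exists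
  refine ⟨Φ c, hΦ.comp (contDiff_const.prodMk contDiff_id), hequiv c, ⟨Q, hQ, hQF, hQoff c⟩,
    fun x hxW => ?_, ?_⟩
  · by_cases hxQ : x ∈ Q
    · exact hcW x ⟨hxQ, hxW⟩
    · exact (hQoff c x hxQ).trans_ne (hfW x hxW)
  · rintro x (hx | hx) hx0
    · exact hcC x hx hx0
    · rw [(hadd c x hx).fderiv_eq, fderiv_add_const]
      exact hc x (eq_neg_of_add_eq_zero_left ((hadd c x hx).self_of_nhds.symm.trans hx0))

lemma IsEquivariantField.exists_isRegularModification (hfree : IsSemifree G H) {f₀ : H → H}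
    (he : IsEquivariantField G f₀) (hf : ContDiff ℝ 1 f₀) {K : Set H} (hK : IsCompact K)
    (hKF : K ⊆ (MulAction.fixedPoints G H)ᶜ) (hfK : ∀ x ∉ K, f₀ x ≠ 0) :
    ∃ f, IsRegularModification G f₀ f := by
  classical
  choose! r hr hrF hrd using fun z (hz : z ∈ K) =>
    let ⟨r, hr, _, hrF, hrd⟩ := hfree.exists_ball_disjointTranslates (hKF hz) univ_mem
    (⟨r, hr, hrF, hrd⟩ : ∃ r > (0 : ℝ), ball z r ⊆ (MulAction.fixedPoints G H)ᶜ ∧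
      DisjointTranslates G (ball z r))
  obtain ⟨t, htK, hcov⟩ := hK.elim_nhds_subcover (fun z => ball z (r z / 2))
    fun z hz => ball_mem_nhds z (half_pos (hr z hz))
  suffices h : ∀ s ⊆ t, ∃ f, ContDiff ℝ 1 f ∧ IsEquivariantField G f ∧
      EqOffCompact (MulAction.fixedPoints G H)ᶜ f₀ f ∧ (∀ x ∉ ⋃ z ∈ t, ball z (r z / 2), f x ≠ 0) ∧
      ∀ x ∈ ⋃ z ∈ s, closedBall z (r z / 2), f x = 0 → (fderiv ℝ f x).det ≠ 0 by
    obtain ⟨f, hf, he, hff₀, hft, hdet⟩ := h t Subset.rfl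
    refine ⟨f, hf, he, hff₀, fun x hx => hdet x ?_ hx⟩
    exact iUnion₂_mono (fun z _ => ball_subset_closedBall) (not_imp_not.1 (hft x) hx)
  intro s hst
  induction s using Finset.induction_on with
  | empty => exact ⟨f₀, hf, he, .refl _ _, fun x hx => hfK x fun hxK => hx (hcov hxK), by simp⟩
  | insert z s _ ih =>
    obtain ⟨hzt, hst⟩ := Finset.insert_subset_iff.1 hst
    have hzK := htK z hzt
    obtain ⟨f, hf, he, hff₀, hft, hdet⟩ := ih hst
    obtain ⟨f', hf', he', hff', hft', hdet'⟩ := he.exists_det_fderiv_ne_zero_on_closedBall hf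
      (half_lt_self (hr z hzK)) (hrF z hzK) (hrd z hzK)
      (isOpen_biUnion fun _ _ => isOpen_ball)
      (s.isCompact_biUnion fun z _ => isCompact_closedBall z (r z / 2)) hft hdet
    refine ⟨f', hf', he', hff₀.trans hff', hft', fun x hx => hdet' x ?_⟩
    rw [Finset.set_biUnion_insert] at hx
    exact hx.symm

end RegularModification

/-! ### Linearization at a fixed point -/

section Invariants

variable {G V : Type*} [Group G] [AddCommGroup V] [Module ℝ V]

noncomputable local instance [Fintype G] : Invertible (Fintype.card G : ℝ) :=
  invertibleOfNonzero (Nat.cast_ne_zero.2 Fintype.card_ne_zero)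

lemma averageMap_apply_apply [Fintype G] (ρ : Representation ℝ G V) (g : G) (v : V) :
    ρ.averageMap (ρ g v) = ρ.averageMap v := by
  rw [Representation.averageMap, ← Representation.asAlgebraHom_single_one, ← Module.End.mul_apply,
    ← map_mul, GroupAlgebra.mul_average_right]

lemma averageMap_eq_self_iff [Fintype G] (ρ : Representation ℝ G V) {v : V} :
    ρ.averageMap v = v ↔ v ∈ ρ.invariants :=
  ⟨fun h => h ▸ ρ.averageMap_invariant v, ρ.averageMap_id v⟩

lemma sum_apply_sub_averageMap [Fintype G] (ρ : Representation ℝ G V) (v : V) :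
    ∑ g, (ρ g v - ρ.averageMap v) = 0 := by
  have hsum : (Fintype.card G : ℝ) • ρ.averageMap v = ∑ g, ρ g v := by
    simp [GroupAlgebra.average, map_sum, smul_smul]
  rw [Finset.sum_sub_distrib, Finset.sum_const, Finset.card_univ, ← hsum, Nat.cast_smul_eq_nsmul,
    sub_self]

-- If all these segments met the invariants, then every `ρ g w` would be, modulo its average, a
-- nonpositive multiple of the non-invariant part of `v`; but these vectors sum to zero.
lemma exists_disjoint_segment_invariants [Finite G] (ρ : Representation ℝ G V) {v w : V}
    (hv : v ∉ ρ.invariants) (hw : w ∉ ρ.invariants) :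
    ∃ g, Disjoint (segment ℝ v (ρ g w)) ρ.invariants := by
  have : Fintype G := .ofFinite G
  by_contra! hmeet
  have hv' : v - ρ.averageMap v ≠ 0 := fun h =>
    hv ((averageMap_eq_self_iff ρ).1 (sub_eq_zero.1 h).symm)
  have hnonpos (g : G) :
      ∃ c : ℝ, 0 ≤ c ∧ ρ g w - ρ.averageMap w = -(c • (v - ρ.averageMap v)) := by
    obtain ⟨u, ⟨s, t, hs, ht, hst, rfl⟩, hu⟩ := not_disjoint_iff.1 (hmeet g)
    have hcomb : t • (ρ g w - ρ.averageMap w) = -(s • (v - ρ.averageMap v)) := by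
      have hfix := (averageMap_eq_self_iff ρ).2 hu
      rw [map_add, map_smul, map_smul, averageMap_apply_apply] at hfix
      rw [smul_sub, smul_sub, ← sub_eq_zero, ← sub_eq_zero.2 hfix.symm]
      abel
    have ht0 : t ≠ 0 := by
      rintro rfl
      obtain rfl : s = 1 := by simpa using hst
      rw [zero_smul, one_smul, zero_eq_neg] at hcomb
      exact hv' hcomb
    exact ⟨t⁻¹ * s, by positivity, by rw [mul_smul, ← smul_neg, ← hcomb, inv_smul_smul₀ ht0]⟩
  choose c hc hcw using hnonpos
  have hsum : ∑ g, c g = 0 := by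
    have h := sum_apply_sub_averageMap ρ w
    simp only [hcw, Finset.sum_neg_distrib, ← Finset.sum_smul, neg_eq_zero] at h
    exact (smul_eq_zero.1 h).resolve_right hv'
  have hc1 := (Finset.sum_eq_zero_iff_of_nonneg fun g _ => hc g).1 hsum 1 (Finset.mem_univ _)
  have hw1 := hcw 1
  rw [hc1, zero_smul, neg_zero, map_one, Module.End.one_apply, sub_eq_zero] at hw1
  exact hw ((averageMap_eq_self_iff ρ).1 hw1.symm)

end Invariants

section Linearization

variable {G H : Type*} [Group G] [NormedAddCommGroup H] [NormedSpace ℝ H] [MulAction G H]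
  [ContDiffConstSMul G H] {x : H}

/-- The representation of `G` on the tangent space at a fixed point `x`, by the differentials of
the action. -/
noncomputable def isotropyRepresentation (hx : x ∈ MulAction.fixedPoints G H) :
    Representation ℝ G H where
  toFun g := smulDeriv g x
  map_one' := by rw [smulDeriv_one]; rfl
  map_mul' g h := by rw [smulDeriv_mul, hx h]; rfl

/-- A chart `e` centred at the fixed point `x` in which the action becomes the isotropy
representation at `x`. Its equivariance is required everywhere, not just on the source. -/
structure IsLinearizingChart (hx : x ∈ MulAction.fixedPoints G H) (e : OpenPartialHomeomorph H H) :
    Prop where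
  mem_source : x ∈ e.source
  map_self : e x = 0
  continuous : Continuous e
  map_smul (g : G) (y : H) : e (g • y) = isotropyRepresentation hx g (e y)

/-- The average over the group of the maps `y ↦ dg⁻¹ (g • y - x)`: an equivariant map to the tangent
space at the fixed point `x` with differential the identity at `x`. -/
noncomputable def linearization [Fintype G] (hx : x ∈ MulAction.fixedPoints G H) (y : H) : H :=
  (Fintype.card G : ℝ)⁻¹ • ∑ g : G, isotropyRepresentation hx g⁻¹ (g • y - x)

lemma linearization_smul [Fintype G] (hx : x ∈ MulAction.fixedPoints G H) (g : G) (y : H) :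
    linearization hx (g • y) = isotropyRepresentation hx g (linearization hx y) := by
  rw [linearization, linearization, map_smul, map_sum, ← Equiv.sum_comp (Equiv.mulRight g⁻¹)]
  congr 1
  refine Finset.sum_congr rfl fun h _ => ?_
  rw [Equiv.coe_mulRight, ← Module.End.mul_apply, ← map_mul, mul_inv_rev, inv_inv,
    mul_smul, inv_smul_smul]

lemma contDiff_linearization [Fintype G] (hx : x ∈ MulAction.fixedPoints G H) :
    ContDiff ℝ 1 (linearization hx) := by
  refine (ContDiff.sum fun g _ => ?_).const_smul _
  exact (smulDeriv g⁻¹ x).contDiff.comp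
    (((ContDiffConstSMul.contDiff_const_smul g).of_le one_le_two).sub contDiff_const)

lemma hasFDerivAt_linearization [Fintype G] (hx : x ∈ MulAction.fixedPoints G H) :
    HasFDerivAt (linearization hx) (.id ℝ H) x := by
  have hsum : HasFDerivAt (linearization hx)
      ((Fintype.card G : ℝ)⁻¹ • ∑ g : G, (smulDeriv g⁻¹ x ∘L smulDeriv g x)) x :=
    (HasFDerivAt.fun_sum fun g _ => (smulDeriv g⁻¹ x).hasFDerivAt.comp x
      ((hasFDerivAt_smul g x).sub_const x)).const_smul _
  convert hsum
  have hone (g : G) : smulDeriv g⁻¹ x ∘L smulDeriv g x = .id ℝ H := by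
    simpa only [hx g] using smulDeriv_inv_comp g x
  simp only [hone, Finset.sum_const, Finset.card_univ]
  rw [← Nat.cast_smul_eq_nsmul ℝ, inv_smul_smul₀ (Nat.cast_ne_zero.2 Fintype.card_ne_zero)]

lemma exists_isLinearizingChart [Finite G] [CompleteSpace H] (hx : x ∈ MulAction.fixedPoints G H)
    {W : Set H} (hW : W ∈ 𝓝 x) : ∃ e, IsLinearizingChart hx e ∧ e.source ⊆ W := by
  have : Fintype G := .ofFinite G
  have hstrict : HasStrictFDerivAt (linearization hx)
      (ContinuousLinearEquiv.refl ℝ H : H →L[ℝ] H) x :=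
    (contDiff_linearization hx).contDiffAt.hasStrictFDerivAt' (hasFDerivAt_linearization hx)
      one_ne_zero
  refine ⟨(hstrict.toOpenPartialHomeomorph _).restrOpen (interior W) isOpen_interior,
    ⟨⟨hstrict.mem_toOpenPartialHomeomorph_source, mem_interior_iff_mem_nhds.2 hW⟩, ?_,
      (contDiff_linearization hx).continuous, linearization_smul hx⟩,
    fun y hy => interior_subset hy.2⟩
  exact smul_eq_zero_of_right _ (Finset.sum_eq_zero fun g _ => by rw [hx g, sub_self, map_zero])

lemma IsLinearizingChart.mem_fixedPoints_iff {hx : x ∈ MulAction.fixedPoints G H}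
    {e : OpenPartialHomeomorph H H} (he : IsLinearizingChart hx e) {y : H}
    (hy : ∀ g : G, g • y ∈ e.source) :
    y ∈ MulAction.fixedPoints G H ↔ e y ∈ (isotropyRepresentation hx).invariants := by
  rw [Representation.mem_invariants]
  refine forall_congr' fun g => ?_
  rw [← he.map_smul, e.injOn.eq_iff (hy g) (by simpa using hy 1)]

lemma eventually_forall_smul_mem [Finite G] (hx : x ∈ MulAction.fixedPoints G H) {U : Set H}
    (hU : U ∈ 𝓝 x) : ∀ᶠ y in 𝓝 x, ∀ g : G, g • y ∈ U :=
  eventually_all.2 fun g =>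
    (continuous_const_smul g).continuousAt.eventually_mem (by rwa [hx g])

lemma exists_preconnected_of_mem_fixedPoints [Finite G] [CompleteSpace H]
    (hx : x ∈ MulAction.fixedPoints G H) {W : Set H} (hW : W ∈ 𝓝 x) :
    ∃ V ∈ 𝓝 x, ∀ y ∈ V, y ∉ MulAction.fixedPoints G H → ∀ y' ∈ V,
      y' ∉ MulAction.fixedPoints G H → ∃ g : G, ∃ C, IsPreconnected C ∧
        C ⊆ W \ MulAction.fixedPoints G H ∧ y ∈ C ∧ g • y' ∈ C := by
  have : Fintype G := .ofFinite G
  obtain ⟨e, he, heW⟩ := exists_isLinearizingChart hx hW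
  obtain ⟨ε, hε, hball⟩ :=
    Metric.mem_nhds_iff.1 (e.open_target.mem_nhds (e.map_source he.mem_source))
  rw [he.map_self] at hball
  have hU : e.source ∩ e ⁻¹' ball 0 ε ∈ 𝓝 x := inter_mem (e.open_source.mem_nhds he.mem_source)
    (he.continuous.continuousAt (by rw [he.map_self]; exact ball_mem_nhds _ hε))
  refine ⟨_, eventually_forall_smul_mem hx hU, fun y hy hyF y' hy' hyF' => ?_⟩
  rw [he.mem_fixedPoints_iff fun g => (hy g).1] at hyF
  rw [he.mem_fixedPoints_iff fun g => (hy' g).1] at hyF'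
  obtain ⟨g, hg⟩ := exists_disjoint_segment_invariants _ hyF hyF'
  rw [← he.map_smul] at hg
  have htarget : segment ℝ (e y) (e (g • y')) ⊆ e.target := by
    refine ((convex_ball (0 : H) ε).segment_subset ?_ (hy' g).2).trans hball
    simpa using (hy 1).2
  refine ⟨g, e.symm '' segment ℝ (e y) (e (g • y')), ?_, ?_, ?_, ?_⟩
  · exact (convex_segment _ _).isPreconnected.image _ (e.continuousOn_symm.mono htarget)
  · rintro _ ⟨u, hu, rfl⟩
    refine ⟨heW (e.map_target (htarget hu)), fun hF => disjoint_left.1 hg hu fun h => ?_⟩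
    have hh := he.map_smul h (e.symm u)
    rwa [hF h, e.right_inv (htarget hu), eq_comm] at hh
  · exact ⟨_, left_mem_segment _ _ _, e.left_inv (by simpa using (hy 1).1)⟩
  · exact ⟨_, right_mem_segment _ _ _, e.left_inv (hy' g).1⟩

lemma interior_fixedPoints_eq_empty [Finite G] [CompleteSpace H]
    (hF : MulAction.fixedPoints G H ≠ univ) : interior (MulAction.fixedPoints G H) = ∅ := by
  have hclosed : IsClosed (interior (MulAction.fixedPoints G H)) := by
    refine closure_subset_iff_isClosed.1 fun x hx => ?_
    have hxF : x ∈ MulAction.fixedPoints G H :=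
      (isClosed_fixedPoints_of_continuousConstSMul G H).closure_subset_iff.2 interior_subset hx
    obtain ⟨e, he, -⟩ := exists_isLinearizingChart hxF univ_mem
    have hsub : e '' (e.source ∩ interior (MulAction.fixedPoints G H)) ⊆
        (isotropyRepresentation hxF).invariants := by
      rintro _ ⟨z, hz, rfl⟩ g
      rw [← he.map_smul, interior_subset hz.2 g]
    have htop : (isotropyRepresentation hxF).invariants = ⊤ := by
      obtain ⟨y, hy⟩ := mem_closure_iff.1 hx e.source e.open_source he.mem_source
      refine Submodule.eq_top_of_nonempty_interior' _
        ⟨e y, interior_maximal hsub ?_ (mem_image_of_mem e hy)⟩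
      exact e.isOpen_image_of_subset_source (e.open_source.inter isOpen_interior) inter_subset_left
    rw [mem_interior_iff_mem_nhds]
    filter_upwards [eventually_forall_smul_mem (G := G) hxF (e.open_source.mem_nhds he.mem_source)]
      with z hz
    rw [he.mem_fixedPoints_iff hz, htop]
    exact Submodule.mem_top
  exact (isClopen_iff.1 ⟨hclosed, isOpen_interior⟩).resolve_right fun h =>
    hF (univ_subset_iff.1 (h ▸ interior_subset))

end Linearization

/-! ### Cancelling the zeros of an equivariant field -/

section Connectedness

lemma forall_of_forall_nhds_of_dense {X : Type*} [TopologicalSpace X] [PreconnectedSpace X]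
    {U : Set X} (hU : Dense U) {P : X → Prop}
    (hP : ∀ x, ∃ V ∈ 𝓝 x, ∀ y ∈ V ∩ U, ∀ y' ∈ V ∩ U, P y → P y')
    {a b : X} (ha : a ∈ U) (hb : b ∈ U) (hPa : P a) : P b := by
  have hstep (x : X) : (∃ᶠ y in 𝓝[U] x, P y) → ∀ᶠ y in 𝓝[U] x, P y := by
    obtain ⟨V, hV, hPV⟩ := hP x
    have hVU : V ∩ U ∈ 𝓝[U] x := inter_mem (mem_nhdsWithin_of_mem_nhds hV) self_mem_nhdsWithin
    intro h
    obtain ⟨y, hPy, hy⟩ := (h.and_eventually hVU).exists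
    filter_upwards [hVU] with y' hy' using hPV y hy y' hy' hPy
  have hclopen : IsClopen {x | ∀ᶠ y in 𝓝[U] x, P y} := by
    refine ⟨isOpen_compl_iff.1 (isOpen_iff_eventually.2 fun x hx => ?_),
      isOpen_iff_eventually.2 fun x hx => eventually_nhds_nhdsWithin.2 hx⟩
    have hnot : ∀ᶠ y in 𝓝[U] x, ¬ P y := not_frequently.1 fun h => hx (hstep x h)
    filter_upwards [eventually_nhds_nhdsWithin.2 hnot] with y hy h
    have : (𝓝[U] y).NeBot := mem_closure_iff_nhdsWithin_neBot.1 (hU y)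
    exact (hy.and h).exists.elim fun _ hz => hz.1 hz.2
  have hta : ∀ᶠ y in 𝓝[U] a, P y := hstep a fun h => h.self_of_nhdsWithin ha hPa
  have htb := (hclopen.eq_univ ⟨a, hta⟩).symm ▸ mem_univ b
  exact htb.self_of_nhdsWithin hb

lemma isPreconnected_ball_diff_singleton {H : Type*} [NormedAddCommGroup H]
    [InnerProductSpace ℝ H] (hrank : 1 < Module.rank ℝ H) (z : H) {r : ℝ} (hr : 0 < r) :
    IsPreconnected (ball z r \ {z}) := by
  let e : OpenPartialHomeomorph H H := .univBall z r
  have hsource : e.source = univ := OpenPartialHomeomorph.univBall_source z r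
  have hzero : e 0 = z := OpenPartialHomeomorph.univBall_apply_zero z r
  have himage : e '' {0}ᶜ = ball z r \ {z} := by
    have hinj : Function.Injective e := injOn_univ.1 (hsource ▸ e.injOn)
    have hrange : range e = ball z r := by
      rw [← image_univ, ← hsource, e.image_source_eq_target]
      exact OpenPartialHomeomorph.univBall_target z hr
    rw [image_compl_eq_range_sdiff_image hinj, hrange, image_singleton, hzero]
  rw [← himage]
  exact (isConnected_compl_singleton_of_one_lt_rank hrank (0 : H)).isPreconnected.image e
    (OpenPartialHomeomorph.continuous_univBall z r).continuousOn

end Connectedness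

section Cancellation

lemma DisjointTranslates.eq_of_mem_orbit {G X : Type*} [Group G] [MulAction G X] {B : Set X}
    (hB : DisjointTranslates G B) {x y : X} (hx : x ∈ B) (hy : y ∈ B)
    (hxy : x ∈ MulAction.orbit G y) : x = y := by
  obtain ⟨g, rfl⟩ := hxy
  by_contra h
  exact hB y hy g (fun hg => h (by rw [hg]; exact one_smul G y)) hx

variable {G H : Type*} [Group G] [NormedAddCommGroup H] [InnerProductSpace ℝ H] [MulAction G H]
  [ContDiffConstSMul G H]

lemma IsEquivariantField.eq_zero_cases {f f' k : H → H} {B : Set H} (hk : IsEquivariantField G k)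
    (hkB : ∀ x ∈ B, k x = f' x) (hkoff : ∀ x, (∀ g : G, g • x ∉ B) → k =ᶠ[𝓝 x] f) {x : H}
    (hx : k x = 0) :
    (f x = 0 ∧ ∀ g : G, g • x ∉ B) ∨ ∃ g : G, g • x ∈ B ∧ f' (g • x) = 0 := by
  by_cases h : ∀ g : G, g • x ∉ B
  · exact .inl ⟨(hkoff x h).self_of_nhds ▸ hx, h⟩
  · push Not at h
    obtain ⟨g, hg⟩ := h
    exact .inr ⟨g, hg, hkB _ hg ▸ (hk.smul_eq_zero_iff g).2 hx⟩

/-- The field `f₀` has a regular modification with a zero of positive sign at `y`, a zero of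
negative sign at `b`, and no zeros outside `Z` and the orbit of `y`. -/
def HasOppositeZeros (G : Type*) [Group G] [MulAction G H] (f₀ : H → H) (Z : Set H) (b y : H) :
    Prop :=
  ∃ f, IsRegularModification G f₀ f ∧ {x | f x = 0} ⊆ Z ∪ MulAction.orbit G y ∧
    (f y = 0 ∧ 0 < (fderiv ℝ f y).det) ∧ f b = 0 ∧ (fderiv ℝ f b).det < 0

lemma HasOppositeZeros.of_smul {f₀ : H → H} {Z : Set H} {b y : H} (g : G)
    (h : HasOppositeZeros G f₀ Z b (g • y)) : HasOppositeZeros G f₀ Z b y := by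
  obtain ⟨f, hf, hfZ, ⟨hy, hdet⟩, hb⟩ := h
  have hy0 := (hf.equivariant.smul_eq_zero_iff g).1 hy
  rw [MulAction.orbit_smul] at hfZ
  rw [hf.equivariant.det_fderiv_smul (hf.contDiff.differentiable one_ne_zero) g hy0] at hdet
  exact ⟨f, hf, hfZ, ⟨hy0, hdet⟩, hb⟩

variable [Finite G] [FiniteDimensional ℝ H] {f₀ : H → H} {Z : Set H} {b : H}

lemma IsRegularModification.exists_zero_moved (hfree : IsSemifree G H) {z : H}
    (hz : z ∉ MulAction.fixedPoints G H) {W : Set H} (hW : W ∈ 𝓝 z) :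
    ∃ V ∈ 𝓝 z, ∀ y ∈ V, ∀ y' ∈ V, ∀ f, IsRegularModification G f₀ f → f y = 0 →
      (∀ x ∈ W, f x = 0 → x ∈ MulAction.orbit G y) →
      ∃ k, IsRegularModification G f₀ k ∧
        {x | k x = 0} ⊆ {x | f x = 0} \ MulAction.orbit G y ∪ MulAction.orbit G y' ∧
        k y' = 0 ∧ fderiv ℝ k y' = fderiv ℝ f y ∧ ∀ x, (∀ g : G, g • x ∉ W) → k =ᶠ[𝓝 x] f := by
  obtain ⟨r, hr, hrW, hrF, hrd⟩ := hfree.exists_ball_disjointTranslates hz hW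
  obtain ⟨ε, hε, hεr, hmove⟩ := exists_eqOffCompact_zero_moved z hr
  refine ⟨ball z ε, ball_mem_nhds z hε, fun y hy y' hy' f hf hfy hfW => ?_⟩
  have hyr := ball_subset_ball hεr hy
  have hyr' := ball_subset_ball hεr hy'
  obtain ⟨f', hf', hff', hfy', hne, hderiv⟩ := hmove y hy y' hy' f hf.contDiff hfy
    fun x hx hxy h0 => hxy (hrd.eq_of_mem_orbit hx hyr (hfW x (hrW hx) h0))
  obtain ⟨k, hk, hkB, hkoff⟩ := hf.exists_eq_on_of_eqOffCompact hf' isOpen_ball hrd hrF hff' (by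
    intro x hx h0
    obtain rfl := not_imp_not.1 (hne x hx) h0
    rw [hderiv]
    exact hf.det_ne_zero y hfy)
  have heq : k =ᶠ[𝓝 y'] f' := by filter_upwards [isOpen_ball.mem_nhds hyr'] using hkB
  refine ⟨k, hk, fun x hx => ?_, heq.self_of_nhds.trans hfy', heq.fderiv_eq.trans hderiv,
    fun x hx => hkoff x fun g hg => hx g (hrW hg)⟩
  obtain ⟨hfx, hxB⟩ | ⟨g, hg, h0⟩ := hk.equivariant.eq_zero_cases hkB hkoff hx
  · refine .inl ⟨hfx, fun hxy => ?_⟩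
    obtain ⟨g, rfl⟩ := MulAction.mem_orbit_symm.1 hxy
    exact hxB g hyr
  · exact .inr (MulAction.mem_orbit_symm.1 ⟨g, not_imp_not.1 (hne _ hg) h0⟩)

lemma exists_nhds_hasOppositeZeros_imp_of_notMem (hfree : IsSemifree G H) (hZ : IsClosed Z)
    (hZG : ∀ g : G, ∀ x ∈ Z, g • x ∈ Z) (hb : b ∈ Z) {z : H}
    (hz : z ∉ MulAction.fixedPoints G H ∪ Z) :
    ∃ V ∈ 𝓝 z, ∀ y ∈ V, ∀ y' ∈ V, HasOppositeZeros G f₀ Z b y → HasOppositeZeros G f₀ Z b y' := by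
  rw [mem_union, not_or] at hz
  obtain ⟨V, hV, hmove⟩ := IsRegularModification.exists_zero_moved (f₀ := f₀) hfree hz.1
    (hZ.isOpen_compl.mem_nhds hz.2)
  refine ⟨V, hV, fun y hy y' hy' ⟨f, hf, hfZ, ⟨hfy, hdet⟩, hfb, hdetb⟩ => ?_⟩
  obtain ⟨k, hk, hkf, hky', hderiv, hkoff⟩ :=
    hmove y hy y' hy' f hf hfy fun x hx h0 => (hfZ h0).resolve_left hx
  have hkb : k =ᶠ[𝓝 b] f := hkoff b fun g hg => hg (hZG g b hb)
  refine ⟨k, hk, hkf.trans (union_subset_union_left _ ?_), ⟨hky', hderiv ▸ hdet⟩,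
    hkb.self_of_nhds.trans hfb, by rwa [hkb.fderiv_eq]⟩
  exact sdiff_subset_iff.2 (hfZ.trans_eq (union_comm _ _))

lemma HasOppositeZeros.of_isPreconnected (hfree : IsSemifree G H) (hZ : IsClosed Z)
    (hZG : ∀ g : G, ∀ x ∈ Z, g • x ∈ Z) (hb : b ∈ Z) {C : Set H} (hC : IsPreconnected C)
    (hCZ : C ⊆ (MulAction.fixedPoints G H ∪ Z)ᶜ) {y y' : H} (hy : y ∈ C) (hy' : y' ∈ C)
    (h : HasOppositeZeros G f₀ Z b y) : HasOppositeZeros G f₀ Z b y' := by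
  refine hC.induction₂' (fun y y' => HasOppositeZeros G f₀ Z b y → HasOppositeZeros G f₀ Z b y')
    (fun z hz => ?_) (fun _ _ _ _ _ _ h h' => h' ∘ h) hy hy' h
  obtain ⟨V, hV, hVimp⟩ :=
    exists_nhds_hasOppositeZeros_imp_of_notMem (f₀ := f₀) hfree hZ hZG hb (hCZ hz)
  filter_upwards [mem_nhdsWithin_of_mem_nhds hV] with u hu
  exact ⟨hVimp z (mem_of_mem_nhds hV) u hu, hVimp u hu z (mem_of_mem_nhds hV)⟩

lemma exists_nhds_hasOppositeZeros_imp (hrank : 1 < Module.rank ℝ H) (hfree : IsSemifree G H)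
    (hZ : Z.Finite) (hZG : ∀ g : G, ∀ x ∈ Z, g • x ∈ Z)
    (hZF : Disjoint Z (MulAction.fixedPoints G H)) (hb : b ∈ Z) (x : H) :
    ∃ V ∈ 𝓝 x, ∀ y ∈ V ∩ (MulAction.fixedPoints G H ∪ Z)ᶜ,
      ∀ y' ∈ V ∩ (MulAction.fixedPoints G H ∪ Z)ᶜ,
      HasOppositeZeros G f₀ Z b y → HasOppositeZeros G f₀ Z b y' := by
  by_cases hxF : x ∈ MulAction.fixedPoints G H
  · obtain ⟨V, hV, hpath⟩ := exists_preconnected_of_mem_fixedPoints hxF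
      (hZ.isClosed.isOpen_compl.mem_nhds fun hxZ => disjoint_left.1 hZF hxZ hxF)
    refine ⟨V, hV, fun y ⟨hy, hyZ⟩ y' ⟨hy', hyZ'⟩ h => ?_⟩
    obtain ⟨g, C, hC, hCZ, hyC, hyC'⟩ := hpath y hy (fun hF => hyZ (.inl hF)) y' hy'
      fun hF => hyZ' (.inl hF)
    refine (h.of_isPreconnected hfree hZ.isClosed hZG hb hC (fun u hu => ?_) hyC hyC').of_smul g
    exact not_or.2 ⟨(hCZ hu).2, (hCZ hu).1⟩
  by_cases hxZ : x ∈ Z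
  · obtain ⟨r, hr, hrZ, hrF, -⟩ := hfree.exists_ball_disjointTranslates hxF
      ((hZ.subset (sdiff_subset (t := {x}))).isClosed.isOpen_compl.mem_nhds (x := x) (by simp))
    have hmem {y : H} (hy : y ∈ ball x r ∩ (MulAction.fixedPoints G H ∪ Z)ᶜ) :
        y ∈ ball x r \ {x} := ⟨hy.1, fun hyx => hy.2 (.inr (hyx.symm ▸ hxZ))⟩
    refine ⟨ball x r, ball_mem_nhds x hr, fun y hy y' hy' h => ?_⟩
    refine h.of_isPreconnected hfree hZ.isClosed hZG hb
      (isPreconnected_ball_diff_singleton hrank x hr) (fun u hu => ?_) (hmem hy) (hmem hy')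
    exact not_or.2 ⟨hrF hu.1, fun huZ => hrZ hu.1 ⟨huZ, hu.2⟩⟩
  · obtain ⟨V, hV, hVimp⟩ := exists_nhds_hasOppositeZeros_imp_of_notMem (f₀ := f₀) hfree
      hZ.isClosed hZG hb (not_or.2 ⟨hxF, hxZ⟩)
    exact ⟨V, hV, fun y hy y' hy' => hVimp y hy.1 y' hy'.1⟩

lemma dense_compl_fixedPoints_union [Nontrivial H] (hF : MulAction.fixedPoints G H ≠ univ)
    (hZ : Z.Finite) : Dense (MulAction.fixedPoints G H ∪ Z)ᶜ := by
  rw [compl_union]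
  exact (interior_eq_empty_iff_dense_compl.1
    (interior_fixedPoints_eq_empty hF)).inter_of_isOpen_right (hZ.countable.dense_compl ℝ)
    hZ.isClosed.isOpen_compl

lemma HasOppositeZeros.exists_zero_cancelled (hdim : 2 < Module.finrank ℝ H) {B : Set H}
    {y : H} (hyZ : y ∉ Z) (hbZ : b ∈ Z) (h : HasOppositeZeros G f₀ Z b y) (hBo : IsOpen B)
    (hBc : Convex ℝ B) (hBF : B ⊆ (MulAction.fixedPoints G H)ᶜ) (hBd : DisjointTranslates G B)
    (hBZ : B ⊆ (Z \ {b})ᶜ) (hy : y ∈ B) (hb : b ∈ B) :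
    ∃ k, IsRegularModification G f₀ k ∧ {x | k x = 0} ⊆ Z \ {b} := by
  obtain ⟨f, hf, hfZ, ⟨hfy, hdet⟩, hfb, hdetb⟩ := h
  have hne (x : H) (hx : x ∈ B) (hxy : x ≠ y) (hxb : x ≠ b) : f x ≠ 0 := fun h0 =>
    (hfZ h0).elim (fun hxZ => hBZ hx ⟨hxZ, hxb⟩) fun ho => hxy (hBd.eq_of_mem_orbit hx hy ho)
  obtain ⟨f', hf', hff', hne'⟩ := exists_ne_zero_of_det_pos_of_det_neg hdim hf.contDiff hBo
    (hBc.segment_subset hy hb) hfy hfb hne hdet hdetb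
  obtain ⟨k, hk, hkB, hkoff⟩ := hf.exists_eq_on_of_eqOffCompact hf' hBo hBd hBF hff'
    fun x hx h0 => absurd h0 (hne' x hx)
  refine ⟨k, hk, fun x hx => ?_⟩
  obtain ⟨hfx, hxB⟩ | ⟨g, hg, h0⟩ := hk.equivariant.eq_zero_cases hkB hkoff hx
  · refine ⟨(hfZ hfx).resolve_right fun ho => ?_, ?_⟩
    · obtain ⟨g, rfl⟩ := MulAction.mem_orbit_symm.1 ho
      exact hxB g hy
    · rintro rfl
      exact hxB 1 ((one_smul G x).symm ▸ hb)
  · exact absurd h0 (hne' _ hg)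

lemma HasOppositeZeros.exists_subset_diff_singleton (hdim : 2 < Module.finrank ℝ H)
    (hfree : IsSemifree G H) (hZ : Z.Finite) (hZG : ∀ g : G, ∀ x ∈ Z, g • x ∈ Z)
    (hZF : Disjoint Z (MulAction.fixedPoints G H)) (hb : b ∈ Z) {a : H}
    (ha : a ∉ MulAction.fixedPoints G H ∪ Z) (h : HasOppositeZeros G f₀ Z b a) :
    ∃ k, IsRegularModification G f₀ k ∧ {x | k x = 0} ⊆ Z \ {b} := by
  have : Nontrivial H := Module.nontrivial_of_finrank_pos (R := ℝ) (by omega)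
  have hrank : 1 < Module.rank ℝ H := by
    exact_mod_cast Module.lt_rank_of_lt_finrank (one_lt_two.trans hdim)
  have hdense : Dense (MulAction.fixedPoints G H ∪ Z)ᶜ :=
    dense_compl_fixedPoints_union (fun hF => ha (.inl (hF ▸ mem_univ a))) hZ
  obtain ⟨r, hr, hrZ, hrF, hrd⟩ := hfree.exists_ball_disjointTranslates
    (disjoint_left.1 hZF hb)
    ((hZ.subset (sdiff_subset (t := {b}))).isClosed.isOpen_compl.mem_nhds (x := b) (by simp))
  obtain ⟨y, hyU, hyb⟩ := hdense.exists_mem_open isOpen_ball ⟨b, mem_ball_self hr⟩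
  have hy := forall_of_forall_nhds_of_dense hdense
    (exists_nhds_hasOppositeZeros_imp hrank hfree hZ hZG hZF hb) ha hyU h
  exact hy.exists_zero_cancelled hdim (fun hyZ => hyU (.inr hyZ)) hb isOpen_ball
    (convex_ball b r) hrF hrd hrZ hyb (mem_ball_self hr)

lemma IsRegularModification.exists_ncard_zeros_lt (hdim : 2 < Module.finrank ℝ H)
    (hfree : IsSemifree G H) {f : H → H} (hf : IsRegularModification G f₀ f)
    (hfin : {x | f x = 0}.Finite) (hF : ∀ x ∈ MulAction.fixedPoints G H, f x ≠ 0) {a : H}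
    (ha : f a = 0) (hb : f b = 0) (hdeta : 0 < (fderiv ℝ f a).det)
    (hdetb : (fderiv ℝ f b).det < 0) :
    ∃ k, IsRegularModification G f₀ k ∧ {x | k x = 0}.ncard < {x | f x = 0}.ncard := by
  let Z : Set H := {x | f x = 0} \ MulAction.orbit G a
  have hbZ : b ∈ Z := by
    refine ⟨hb, ?_⟩
    rintro ⟨g, rfl⟩
    exact hdetb.not_gt (hf.equivariant.det_fderiv_smul (hf.contDiff.differentiable one_ne_zero)
      g ha ▸ hdeta)
  have hZG (g : G) (x : H) (hx : x ∈ Z) : g • x ∈ Z :=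
    ⟨(hf.equivariant.smul_eq_zero_iff g).2 hx.1, fun hgx => hx.2 <| by
      rwa [← MulAction.orbit_eq_iff, MulAction.orbit_smul, MulAction.orbit_eq_iff] at hgx⟩
  have hopp : HasOppositeZeros G f₀ Z b a :=
    ⟨f, hf, subset_sdiff_union _ _, ⟨ha, hdeta⟩, hb, hdetb⟩
  obtain ⟨k, hk, hkZ⟩ := hopp.exists_subset_diff_singleton hdim hfree (hfin.subset sdiff_subset) hZG
    (disjoint_left.2 fun x hx hxF => hF x hxF hx.1) hbZ
    (not_or.2 ⟨fun haF => hF a haF ha, fun haZ => haZ.2 (MulAction.mem_orbit_self a)⟩)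
  exact ⟨k, hk, Set.ncard_lt_ncard ⟨hkZ.trans (sdiff_subset.trans sdiff_subset),
    fun h => (hkZ (h hb)).2 rfl⟩ hfin⟩

lemma IsEquivariantField.exists_ne_zero_of_two_lt_finrank (hdim : 2 < Module.finrank ℝ H)
    (hfree : IsSemifree G H) (he : IsEquivariantField G f₀) (hf₀ : ContDiff ℝ 1 f₀)
    (hF : ∀ x ∈ MulAction.fixedPoints G H, f₀ x ≠ 0) {f₁ : H → H} (hf₁ : ContDiff ℝ 1 f₁)
    (hne : ∀ x, f₁ x ≠ 0) (hff₁ : EqOffCompact univ f₁ f₀) :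
    ∃ f, ContDiff ℝ 1 f ∧ IsEquivariantField G f ∧
      EqOffCompact (MulAction.fixedPoints G H)ᶜ f₀ f ∧ ∀ x, f x ≠ 0 := by
  have hzeros {f : H → H} (hf : ContDiff ℝ 1 f) (hff₁ : EqOffCompact univ f₁ f) :
      IsCompact {x | f x = 0} := by
    obtain ⟨K, hK, -, hKeq⟩ := hff₁
    exact hK.of_isClosed_subset (isClosed_eq hf.continuous continuous_const) fun x hx =>
      by_contra fun hxK => hne x ((hKeq x hxK).symm.trans hx)
  obtain ⟨f, hf, hmin⟩ := exists_minimalFor_of_wellFoundedLT (IsRegularModification G f₀)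
    (fun f => {x | f x = 0}.ncard) (he.exists_isRegularModification hfree hf₀ (hzeros hf₀ hff₁)
      (fun x hx hxF => hF x hxF hx) fun x hx => hx)
  have hff₁' : EqOffCompact univ f₁ f := hff₁.trans (hf.eqOffCompact.mono (subset_univ _))
  have hfin : {x | f x = 0}.Finite :=
    finite_zeros_of_det_fderiv_ne_zero (hf.contDiff.differentiable one_ne_zero) hf.det_ne_zero
      (hzeros hf.contDiff hff₁') fun x hx => hx
  have hfF (x : H) (hx : x ∈ MulAction.fixedPoints G H) : f x ≠ 0 :=
    (hf.eqOffCompact.eq_of_notMem fun h => h hx).trans_ne (hF x hx)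
  obtain ⟨K, hK, -, hKeq⟩ := hff₁'
  obtain ⟨R, hR⟩ := hK.isBounded.subset_ball 0
  have hsign {τ : ℝ} := ne_zero_of_forall_zero_det_pos (τ := τ) hf.contDiff hf₁
    (fun x hx => hKeq x fun hxK => hx (hR hxK)) hne
  refine ⟨f, hf.contDiff, hf.equivariant, hf.eqOffCompact, ?_⟩
  by_cases hpos : ∃ a, f a = 0 ∧ 0 < (fderiv ℝ f a).det
  · obtain ⟨a, ha, hdeta⟩ := hpos
    refine hsign (τ := 1) fun b hb => ?_
    rw [one_mul]
    by_contra hdetb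
    obtain ⟨k, hk, hlt⟩ := hf.exists_ncard_zeros_lt hdim hfree hfin hfF ha hb hdeta
      ((not_lt.1 hdetb).lt_of_ne (hf.det_ne_zero b hb))
    exact hlt.not_ge (hmin hk hlt.le)
  · push Not at hpos
    refine hsign (τ := -1) fun b hb => ?_
    rw [neg_one_mul, neg_pos]
    exact (hpos b hb).lt_of_ne (hf.det_ne_zero b hb)

lemma IsEquivariantField.fixedPoints_eq_univ_of_finrank_eq_one (hdim : Module.finrank ℝ H = 1)
    (he : IsEquivariantField G f₀) {x : H} (hx : x ∈ MulAction.fixedPoints G H) (hfx : f₀ x ≠ 0) :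
    MulAction.fixedPoints G H = univ := by
  by_contra hF
  obtain ⟨e, hchart, -⟩ := exists_isLinearizingChart hx univ_mem
  have htop : (isotropyRepresentation hx).invariants = ⊤ := by
    refine Submodule.eq_top_iff'.2 fun v g => ?_
    obtain ⟨c, rfl⟩ := (finrank_eq_one_iff_of_nonzero' (f₀ x) hfx).1 hdim v
    rw [map_smul]
    exact congrArg (c • ·) ((he g x).symm.trans (congrArg f₀ (hx g)))
  have hinterior : x ∈ interior (MulAction.fixedPoints G H) := by
    rw [mem_interior_iff_mem_nhds]
    filter_upwards [eventually_forall_smul_mem (G := G) hx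
      (hchart.mem_source |> e.open_source.mem_nhds)] with z hz
    rw [hchart.mem_fixedPoints_iff hz, htop]
    exact Submodule.mem_top
  rwa [interior_fixedPoints_eq_empty hF] at hinterior

theorem IsEquivariantField.exists_ne_zero (hfree : IsSemifree G H)
    (hdim : 2 < Module.finrank ℝ H ∨
      Module.finrank ℝ H = 1 ∧ (MulAction.fixedPoints G H).Nonempty)
    (he : IsEquivariantField G f₀) (hf₀ : ContDiff ℝ 1 f₀)
    (hF : ∀ x ∈ MulAction.fixedPoints G H, f₀ x ≠ 0) {f₁ : H → H} (hf₁ : ContDiff ℝ 1 f₁)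
    (hne : ∀ x, f₁ x ≠ 0) (hff₁ : EqOffCompact univ f₁ f₀) :
    ∃ f, ContDiff ℝ 1 f ∧ IsEquivariantField G f ∧
      EqOffCompact (MulAction.fixedPoints G H)ᶜ f₀ f ∧ ∀ x, f x ≠ 0 := by
  obtain hdim | ⟨hdim, x, hx⟩ := hdim
  · exact he.exists_ne_zero_of_two_lt_finrank hdim hfree hf₀ hF hf₁ hne hff₁
  · have hFuniv := he.fixedPoints_eq_univ_of_finrank_eq_one hdim hx (hF x hx)
    exact ⟨f₀, hf₀, he, .refl _ _, fun y => hF y (hFuniv ▸ mem_univ y)⟩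

end Cancellation

/-! ### Tangential derivatives on the unit sphere -/

section Sphere

variable {E : Type*} [NormedAddCommGroup E] [InnerProductSpace ℝ E]

lemma inner_fderiv_eq_zero {F : Type*} [NormedAddCommGroup F] [NormedSpace ℝ F] {P : F → E}
    {x : F} (hP : DifferentiableAt ℝ P x) (hnorm : ∀ᶠ y in 𝓝 x, ‖P y‖ = 1) (w : F) :
    inner ℝ (P x) (fderiv ℝ P x w) = 0 := by
  have hconst : (fun y => ‖P y‖ ^ 2) =ᶠ[𝓝 x] fun _ => 1 :=
    hnorm.mono fun y hy => by beta_reduce; rw [hy, one_pow]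
  have h := congrArg (· w) (hP.hasFDerivAt.norm_sq.unique
    ((hasFDerivAt_const (1 : ℝ) x).congr_of_eventuallyEq hconst))
  simpa using h

variable [Nontrivial E]

open Classical in
/-- The radial projection onto the unit sphere, with an arbitrary value at the origin. It extends
functions on the sphere to the ambient space, where they can be differentiated. -/
noncomputable def radialProj (x : E) : sphere (0 : E) 1 :=
  if hx : x = 0 then Classical.choice (NormedSpace.sphere_nonempty.2 zero_le_one).to_subtype
  else ⟨‖x‖⁻¹ • x, by
    rw [mem_sphere_zero_iff_norm, norm_smul, norm_inv, norm_norm,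
      inv_mul_cancel₀ (norm_ne_zero_iff.2 hx)]⟩

lemma coe_radialProj {x : E} (hx : x ≠ 0) :
    ((radialProj x : sphere (0 : E) 1) : E) = ‖x‖⁻¹ • x := by
  rw [radialProj, dif_neg hx]

lemma radialProj_coe (x : sphere (0 : E) 1) : radialProj (x : E) = x := by
  ext1
  rw [coe_radialProj (ne_zero_of_mem_unit_sphere x), norm_eq_of_mem_sphere, inv_one, one_smul]

lemma contDiffAt_coe_radialProj {m : ℕ∞ω} {x : E} (hx : x ≠ 0) :
    ContDiffAt ℝ m (fun z => ((radialProj z : sphere (0 : E) 1) : E)) x := by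
  refine (((contDiffAt_norm ℝ hx).inv (norm_ne_zero_iff.2 hx)).smul
    contDiffAt_id).congr_of_eventuallyEq ?_
  filter_upwards [isOpen_ne.mem_nhds hx] with z hz using coe_radialProj hz

lemma continuousAt_radialProj {x : E} (hx : x ≠ 0) : ContinuousAt radialProj x :=
  Topology.IsInducing.subtypeVal.continuousAt_iff.2
    (contDiffAt_coe_radialProj (m := 0) hx).continuousAt

lemma fderiv_coe_radialProj_apply (x : sphere (0 : E) 1) {w : E} (hw : inner ℝ (x : E) w = 0) :
    fderiv ℝ (fun z => ((radialProj z : sphere (0 : E) 1) : E)) x w = w := by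
  have hx := ne_zero_of_mem_unit_sphere x
  have hnorm : HasFDerivAt norm (fderiv ℝ norm (x : E)) (x : E) :=
    ((contDiffAt_norm ℝ hx (n := 1)).differentiableAt one_ne_zero).hasFDerivAt
  have hproj := ((contDiffAt_coe_radialProj (m := 1) hx).differentiableAt
    one_ne_zero).hasFDerivAt
  have hnorm_w : fderiv ℝ norm (x : E) w = 0 := by
    have h := congrArg (· w) ((hnorm.pow 2).unique (hasStrictFDerivAt_norm_sq (x : E)).hasFDerivAt)
    simpa [hw, norm_eq_of_mem_sphere] using h
  have hid : (fun z : E => ‖z‖ • ((radialProj z : sphere (0 : E) 1) : E)) =ᶠ[𝓝 (x : E)] id := by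
    filter_upwards [isOpen_ne.mem_nhds hx] with z hz
    rw [coe_radialProj hz, smul_inv_smul₀ (norm_ne_zero_iff.2 hz), id]
  have h := congrArg (· w) (((hasFDerivAt_id (x : E)).congr_of_eventuallyEq hid).unique
    (hnorm.smul hproj))
  simpa [hnorm_w, norm_eq_of_mem_sphere] using h.symm

lemma fderiv_apply_eq_of_eventuallyEq_sphere {F : Type*} [NormedAddCommGroup F] [NormedSpace ℝ F]
    {P Q : E → F} {x : sphere (0 : E) 1} {w : E} (hw : inner ℝ (x : E) w = 0)
    (hP : DifferentiableAt ℝ P x) (hQ : DifferentiableAt ℝ Q x)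
    (hPQ : ∀ᶠ y : sphere (0 : E) 1 in 𝓝 x, P y = Q y) : fderiv ℝ P x w = fderiv ℝ Q x w := by
  have hx := ne_zero_of_mem_unit_sphere x
  have hproj := ((contDiffAt_coe_radialProj (m := 1) hx).differentiableAt
    one_ne_zero).hasFDerivAt
  have hcomp {R : E → F} (hR : DifferentiableAt ℝ R x) :
      HasFDerivAt (fun z => R (radialProj z)) (fderiv ℝ R x ∘L fderiv ℝ
        (fun z => ((radialProj z : sphere (0 : E) 1) : E)) x) (x : E) :=
    HasFDerivAt.comp (x : E) (by rw [radialProj_coe]; exact hR.hasFDerivAt) hproj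
  have heq : (fun z => P (radialProj z)) =ᶠ[𝓝 (x : E)] fun z => Q (radialProj z) :=
    (continuousAt_radialProj hx).eventually (p := fun y : sphere (0 : E) 1 => P y = Q y)
      (by rwa [radialProj_coe])
  have h := congrArg (· w) ((hcomp hP).unique ((hcomp hQ).congr_of_eventuallyEq heq))
  simpa [fderiv_coe_radialProj_apply x hw] using h

end Sphere

section Stereographic

variable {E : Type*} [NormedAddCommGroup E] [InnerProductSpace ℝ E] {x₀ : sphere (0 : E) 1}

/-- The stereographic projection from the point `x₀` of the unit sphere. -/
noncomputable abbrev stereoChart (x₀ : sphere (0 : E) 1) :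
    OpenPartialHomeomorph (sphere (0 : E) 1) (ℝ ∙ (x₀ : E))ᗮ :=
  stereographic (norm_eq_of_mem_sphere x₀)

/-- The differential of the inverse of the stereographic projection from `x₀`. -/
noncomputable def stereoInvDeriv (x₀ : sphere (0 : E) 1) (y : (ℝ ∙ (x₀ : E))ᗮ) :
    (ℝ ∙ (x₀ : E))ᗮ →L[ℝ] E :=
  fderiv ℝ (fun y => ((stereoChart x₀).symm y : E)) y

/-- The differential of the rational map of the ambient space extending the stereographic
projection from `x₀`. -/
noncomputable def stereoDeriv (x₀ x : sphere (0 : E) 1) : E →L[ℝ] (ℝ ∙ (x₀ : E))ᗮ :=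
  fderiv ℝ (stereoToFun (x₀ : E)) x

lemma stereoChart_apply_symm (y : (ℝ ∙ (x₀ : E))ᗮ) :
    stereoChart x₀ ((stereoChart x₀).symm y) = y :=
  (stereoChart x₀).right_inv (by simp)

lemma stereoChart_symm_apply {x : sphere (0 : E) 1} (hx : x ≠ x₀) :
    (stereoChart x₀).symm (stereoChart x₀ x) = x :=
  (stereoChart x₀).left_inv (by simpa using hx)

lemma stereoChart_symm_ne (y : (ℝ ∙ (x₀ : E))ᗮ) : (stereoChart x₀).symm y ≠ x₀ := by
  simpa using (stereoChart x₀).map_target (x := y) (by simp)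

lemma continuous_stereoChart_symm : Continuous (stereoChart x₀).symm :=
  continuous_stereoInvFun (norm_eq_of_mem_sphere x₀)

lemma contDiff_coe_stereoChart_symm {m : ℕ∞ω} :
    ContDiff ℝ m fun y => ((stereoChart x₀).symm y : E) :=
  contDiff_stereoInvFunAux.comp (ℝ ∙ (x₀ : E))ᗮ.subtypeL.contDiff

lemma hasFDerivAt_coe_stereoChart_symm (y : (ℝ ∙ (x₀ : E))ᗮ) :
    HasFDerivAt (fun y => ((stereoChart x₀).symm y : E)) (stereoInvDeriv x₀ y) y :=
  (contDiff_coe_stereoChart_symm.differentiable one_ne_zero y).hasFDerivAt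

lemma continuous_stereoInvDeriv : Continuous (stereoInvDeriv x₀) :=
  contDiff_coe_stereoChart_symm.continuous_fderiv one_ne_zero

lemma contDiffAt_stereoToFun {m : ℕ∞ω} {x : sphere (0 : E) 1} (hx : x ≠ x₀) :
    ContDiffAt ℝ m (stereoToFun (x₀ : E)) x := by
  refine contDiffOn_stereoToFun.contDiffAt ((isOpen_ne_fun (innerSL ℝ (x₀ : E)).continuous
    continuous_const).mem_nhds ?_)
  rw [mem_ofPred_eq, innerSL_apply_apply, Ne, inner_eq_one_iff_of_norm_eq_one
    (norm_eq_of_mem_sphere x₀) (norm_eq_of_mem_sphere x)]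
  exact fun h => hx (Subtype.ext h.symm)

lemma hasFDerivAt_stereoToFun {x : sphere (0 : E) 1} (hx : x ≠ x₀) :
    HasFDerivAt (stereoToFun (x₀ : E)) (stereoDeriv x₀ x) x :=
  ((contDiffAt_stereoToFun (m := 1) hx).differentiableAt one_ne_zero).hasFDerivAt

lemma stereoDeriv_stereoInvDeriv (y v : (ℝ ∙ (x₀ : E))ᗮ) :
    stereoDeriv x₀ ((stereoChart x₀).symm y) (stereoInvDeriv x₀ y v) = v := by
  have hcomp := (hasFDerivAt_stereoToFun (stereoChart_symm_ne y)).comp y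
    (hasFDerivAt_coe_stereoChart_symm y)
  have hid : stereoToFun (x₀ : E) ∘ (fun y => ((stereoChart x₀).symm y : E)) = id :=
    funext stereoChart_apply_symm
  exact congrArg (· v) (hcomp.unique (hid ▸ hasFDerivAt_id y))

lemma stereoInvDeriv_stereoDeriv [Nontrivial E] (y : (ℝ ∙ (x₀ : E))ᗮ) {w : E}
    (hw : inner ℝ ((stereoChart x₀).symm y : E) w = 0) :
    stereoInvDeriv x₀ y (stereoDeriv x₀ ((stereoChart x₀).symm y) w) = w := by
  have hne := stereoChart_symm_ne y
  have hcomp : HasFDerivAt (fun x => ((stereoChart x₀).symm (stereoToFun (x₀ : E) x) : E))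
      (stereoInvDeriv x₀ y ∘L stereoDeriv x₀ ((stereoChart x₀).symm y))
      ((stereoChart x₀).symm y : E) := by
    refine HasFDerivAt.comp (g := fun y => ((stereoChart x₀).symm y : E))
      ((stereoChart x₀).symm y : E) ?_ (hasFDerivAt_stereoToFun hne)
    rw [show stereoToFun (x₀ : E) ((stereoChart x₀).symm y : E) = y from stereoChart_apply_symm y]
    exact hasFDerivAt_coe_stereoChart_symm y
  have h := fderiv_apply_eq_of_eventuallyEq_sphere (Q := id) hw hcomp.differentiableAt
    differentiableAt_id <| by
      filter_upwards [isOpen_ne.mem_nhds hne] with z hz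
        using congrArg Subtype.val (stereoChart_symm_apply hz)
  rwa [hcomp.fderiv, fderiv_id] at h

lemma inner_stereoInvDeriv (y v : (ℝ ∙ (x₀ : E))ᗮ) :
    inner ℝ ((stereoChart x₀).symm y : E) (stereoInvDeriv x₀ y v) = 0 :=
  inner_fderiv_eq_zero (hasFDerivAt_coe_stereoChart_symm y).differentiableAt
    (.of_forall fun _ => norm_eq_of_mem_sphere _) v

end Stereographic

/-! ### Actions on the unit sphere in a stereographic chart -/

section TangentField

variable {E F : Type*} [NormedAddCommGroup E] [InnerProductSpace ℝ E]
  [NormedAddCommGroup F] [NormedSpace ℝ F]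

lemma add_smul_sub_ne_zero {v w : E} (hvw : 0 < inner ℝ v w) {t : ℝ} (ht : t ∈ Icc 0 1) :
    w + t • (v - w) ≠ 0 := by
  intro h0
  have hw : 0 < inner ℝ w w :=
    real_inner_self_nonneg.lt_of_ne' fun h => by simp [inner_self_eq_zero.1 h] at hvw
  have hpos : 0 < (1 - t) * inner ℝ w w + t * inner ℝ v w :=
    convex_Ioi (0 : ℝ) hw hvw (sub_nonneg.2 ht.2) ht.1 (sub_add_cancel 1 t)
  have hinner := congrArg (inner ℝ · w) h0
  simp only [inner_add_left, real_inner_smul_left, inner_sub_left, inner_zero_left] at hinner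
  linarith

variable [Nontrivial E]

/-- A map on the unit sphere is of class `C¹` if its radial extension is. -/
def ContDiffSphere (V : sphere (0 : E) 1 → F) : Prop :=
  ∀ x : sphere (0 : E) 1, ContDiffAt ℝ 1 (fun z : E => V (radialProj z)) x

/-- The map `V` is a `C¹` vector field on the unit sphere, tangent vectors to the sphere being
considered as vectors of the ambient space. -/
structure IsTangentField (V : sphere (0 : E) 1 → E) : Prop where
  contDiffSphere : ContDiffSphere V
  inner_eq_zero (x : sphere (0 : E) 1) : inner ℝ (x : E) (V x) = 0

lemma ContDiffSphere.continuous {V : sphere (0 : E) 1 → F} (hV : ContDiffSphere V) :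
    Continuous V := by
  refine continuous_iff_continuousAt.2 fun x => ?_
  have h := (hV x).continuousAt.comp (f := fun y : sphere (0 : E) 1 => (y : E))
    continuous_subtype_val.continuousAt
  simpa only [Function.comp_def, radialProj_coe] using h

variable [FiniteDimensional ℝ E]

lemma IsTangentField.exists_ne_zero_eqOffCompact {V X : sphere (0 : E) 1 → E}
    (hV : IsTangentField V) (hX : IsTangentField X) (hne : ∀ x, X x ≠ 0) {x₀ : sphere (0 : E) 1}
    (hVX : 0 < inner ℝ (V x₀) (X x₀)) :
    ∃ W, IsTangentField W ∧ (∀ x, W x ≠ 0) ∧ EqOffCompact {x₀}ᶜ W V := by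
  let O : Set E := interior {z | 0 < inner ℝ (V (radialProj z)) (X (radialProj z))}
  have hx₀O : (x₀ : E) ∈ O := by
    refine mem_interior_iff_mem_nhds.2 (((hV.contDiffSphere x₀).continuousAt.inner
      (hX.contDiffSphere x₀).continuousAt).eventually_const_lt ?_)
    simpa only [radialProj_coe] using hVX
  obtain ⟨χ, hχ, hχ01, -, hχO, hχ1⟩ := exists_contDiff_cutoff isCompact_singleton isOpen_interior
    (singleton_subset_iff.2 hx₀O)
  obtain ⟨U, hU, hUo, hx₀U⟩ :=
    _root_.eventually_nhds_iff.1 (nhdsSet_singleton (x := (x₀ : E)) ▸ hχ1)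
  refine ⟨fun x => X x + χ x • (V x - X x), ⟨fun x => ?_, fun x => ?_⟩, fun x h0 => ?_, ?_⟩
  · exact (hX.contDiffSphere x).add (ContDiffAt.smul
      (ContDiffAt.comp (x : E) hχ.contDiffAt
        (contDiffAt_coe_radialProj (ne_zero_of_mem_unit_sphere x)))
      ((hV.contDiffSphere x).sub (hX.contDiffSphere x)))
  · rw [inner_add_right, inner_smul_right, inner_sub_right, hX.inner_eq_zero, hV.inner_eq_zero,
      sub_zero, mul_zero, add_zero]
  · by_cases hx : (x : E) ∈ O
    · have hVXx := interior_subset hx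
      rw [mem_ofPred_eq, radialProj_coe] at hVXx
      exact add_smul_sub_ne_zero hVXx (hχ01 x) h0
    · have hχx : χ x = 0 := image_eq_zero_of_notMem_tsupport fun h => hx (hχO h)
      exact hne x (by simpa [hχx] using h0)
  · refine ⟨Subtype.val ⁻¹' Uᶜ, (hUo.isClosed_compl.preimage continuous_subtype_val).isCompact,
      fun x hx hxx₀ => hx (hxx₀ ▸ hx₀U), fun x hx => ?_⟩
    beta_reduce
    rw [hU x (not_not.1 hx), one_smul, add_sub_cancel]

end TangentField

section StereoField

variable {E : Type*} [NormedAddCommGroup E] [InnerProductSpace ℝ E] {x₀ : sphere (0 : E) 1}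
  {V W : sphere (0 : E) 1 → E}

/-- The vector field `V` in the stereographic chart from `x₀`. -/
noncomputable def stereoPullback (x₀ : sphere (0 : E) 1) (V : sphere (0 : E) 1 → E)
    (y : (ℝ ∙ (x₀ : E))ᗮ) : (ℝ ∙ (x₀ : E))ᗮ :=
  stereoDeriv x₀ ((stereoChart x₀).symm y) (V ((stereoChart x₀).symm y))

open Classical in
/-- The vector field on the sphere given by `f` in the stereographic chart from `x₀` and by `V`
at `x₀`. -/
noncomputable def stereoPushforward (x₀ : sphere (0 : E) 1) (V : sphere (0 : E) 1 → E)
    (f : (ℝ ∙ (x₀ : E))ᗮ → (ℝ ∙ (x₀ : E))ᗮ) (x : sphere (0 : E) 1) : E :=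
  if x = x₀ then V x₀ else stereoInvDeriv x₀ (stereoChart x₀ x) (f (stereoChart x₀ x))

variable {f : (ℝ ∙ (x₀ : E))ᗮ → (ℝ ∙ (x₀ : E))ᗮ}

lemma stereoPushforward_self :
    stereoPushforward x₀ V f x₀ = V x₀ :=
  if_pos rfl

lemma stereoPushforward_of_ne {x : sphere (0 : E) 1} (hx : x ≠ x₀) :
    stereoPushforward x₀ V f x = stereoInvDeriv x₀ (stereoChart x₀ x) (f (stereoChart x₀ x)) :=
  if_neg hx

lemma stereoPushforward_ne_zero (hV : V x₀ ≠ 0) (hf : ∀ y, f y ≠ 0) (x : sphere (0 : E) 1) :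
    stereoPushforward x₀ V f x ≠ 0 := by
  obtain rfl | hx := eq_or_ne x x₀
  · rwa [stereoPushforward_self]
  · rw [stereoPushforward_of_ne hx]
    intro h
    have h' := stereoDeriv_stereoInvDeriv (stereoChart x₀ x) (f (stereoChart x₀ x))
    rw [h, map_zero] at h'
    exact hf _ h'.symm

lemma eqOffCompact_stereoPullback (h : EqOffCompact {x₀}ᶜ V W) :
    EqOffCompact univ (stereoPullback x₀ V) (stereoPullback x₀ W) := by
  obtain ⟨K, hK, hKx₀, hKeq⟩ := h
  refine ⟨stereoChart x₀ '' K, hK.image_of_continuousOn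
    ((stereoChart x₀).continuousOn.mono (by simpa using hKx₀)), subset_univ _, fun y hy => ?_⟩
  rw [stereoPullback, hKeq _ fun h => hy ⟨_, h, stereoChart_apply_symm y⟩,
    stereoPullback]

variable [Nontrivial E]

lemma IsTangentField.contDiff_stereoPullback (hV : IsTangentField V) :
    ContDiff ℝ 1 (stereoPullback x₀ V) := by
  refine contDiff_iff_contDiffAt.2 fun y => ?_
  have hcoe : ContDiffAt ℝ 1 (fun y => ((stereoChart x₀).symm y : E)) y :=
    contDiff_coe_stereoChart_symm.contDiffAt
  have hcomp := (hV.contDiffSphere ((stereoChart x₀).symm y)).comp y hcoe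
  have hderiv := ((contDiffAt_stereoToFun (m := 2) (stereoChart_symm_ne y)).fderiv_right
    le_rfl).comp y hcoe
  refine (hderiv.clm_apply hcomp).congr_of_eventuallyEq (.of_forall fun y => ?_)
  simp only [Function.comp_apply, radialProj_coe, stereoPullback, stereoDeriv]

lemma IsTangentField.stereoInvDeriv_stereoPullback (hV : IsTangentField V)
    (y : (ℝ ∙ (x₀ : E))ᗮ) :
    stereoInvDeriv x₀ y (stereoPullback x₀ V y) = V ((stereoChart x₀).symm y) :=
  stereoInvDeriv_stereoDeriv y (hV.inner_eq_zero _)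

lemma IsTangentField.stereoPullback_eq_zero_iff (hV : IsTangentField V) {y : (ℝ ∙ (x₀ : E))ᗮ} :
    stereoPullback x₀ V y = 0 ↔ V ((stereoChart x₀).symm y) = 0 :=
  ⟨fun h => by rw [← hV.stereoInvDeriv_stereoPullback, h, map_zero],
    fun h => by rw [stereoPullback, h, map_zero]⟩

lemma IsTangentField.eqOffCompact_stereoPushforward (hV : IsTangentField V)
    (hf : EqOffCompact univ (stereoPullback x₀ V) f) :
    EqOffCompact {x₀}ᶜ V (stereoPushforward x₀ V f) := by
  obtain ⟨K, hK, -, hKeq⟩ := hf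
  refine ⟨(stereoChart x₀).symm '' K, hK.image continuous_stereoChart_symm, ?_, fun x hx => ?_⟩
  · rintro _ ⟨y, -, rfl⟩
    exact stereoChart_symm_ne y
  · obtain rfl | hxx₀ := eq_or_ne x x₀
    · exact stereoPushforward_self
    · rw [stereoPushforward_of_ne hxx₀, hKeq _ fun h => hx ⟨_, h, stereoChart_symm_apply hxx₀⟩,
        hV.stereoInvDeriv_stereoPullback, stereoChart_symm_apply hxx₀]

lemma IsTangentField.continuous_stereoPushforward (hV : IsTangentField V)
    (hfV : EqOffCompact univ (stereoPullback x₀ V) f) (hf : Continuous f) :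
    Continuous (stereoPushforward x₀ V f) := by
  refine continuous_iff_continuousAt.2 fun x => ?_
  obtain rfl | hx := eq_or_ne x x₀
  · exact hV.contDiffSphere.continuous.continuousAt.congr
      ((hV.eqOffCompact_stereoPushforward hfV).eventuallyEq (not_not.2 rfl)).symm
  · have hchart : ContinuousAt (stereoChart x₀) x :=
      (stereoChart x₀).continuousAt (by simpa using hx)
    refine ((continuous_stereoInvDeriv.continuousAt.comp hchart).clm_apply
      (hf.continuousAt.comp hchart)).congr ?_
    filter_upwards [isOpen_ne.mem_nhds hx] with z hz using (stereoPushforward_of_ne hz).symm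

lemma IsTangentField.inner_stereoPushforward (hV : IsTangentField V) (x : sphere (0 : E) 1) :
    inner ℝ (x : E) (stereoPushforward x₀ V f x) = 0 := by
  obtain rfl | hx := eq_or_ne x x₀
  · rw [stereoPushforward_self, hV.inner_eq_zero]
  · rw [stereoPushforward_of_ne hx]
    have h := inner_stereoInvDeriv (stereoChart x₀ x) (f (stereoChart x₀ x))
    rwa [stereoChart_symm_apply hx] at h

end StereoField

section SphereAction

variable {G E : Type*} [NormedAddCommGroup E] [InnerProductSpace ℝ E] [Nontrivial E] [Group G]
  [MulAction G (sphere (0 : E) 1)]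

/-- The radial extension to the ambient space of the action of `g` on the unit sphere. -/
noncomputable def ambientSMul (g : G) (z : E) : E := (g • radialProj z : sphere (0 : E) 1)

/-- The differential at `x` of the radial extension of the action of `g` on the unit sphere; on
tangent vectors it is the differential of the action. -/
noncomputable def ambientDeriv (g : G) (x : sphere (0 : E) 1) : E →L[ℝ] E :=
  fderiv ℝ (ambientSMul g) (x : E)

variable (G E) in
/-- The group `G` acts on the unit sphere of `E` by maps of class `C²`. -/
class ContDiffSphereSMul : Prop where
  contDiffAt_ambientSMul (g : G) (x : sphere (0 : E) 1) : ContDiffAt ℝ 2 (ambientSMul g) (x : E)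

/-- The vector field `V` on the unit sphere is invariant under the differentials of the action. -/
def IsEquivariantTangentField (G : Type*) [Group G] [MulAction G (sphere (0 : E) 1)]
    (V : sphere (0 : E) 1 → E) : Prop :=
  ∀ (g : G) (x : sphere (0 : E) 1), V (g • x) = ambientDeriv g x (V x)

lemma ambientSMul_coe (g : G) (x : sphere (0 : E) 1) : ambientSMul g (x : E) = (g • x :) := by
  rw [ambientSMul, radialProj_coe]

variable [ContDiffSphereSMul G E]

lemma hasFDerivAt_ambientSMul (g : G) (x : sphere (0 : E) 1) :
    HasFDerivAt (ambientSMul g) (ambientDeriv g x) (x : E) :=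
  ((ContDiffSphereSMul.contDiffAt_ambientSMul g x).differentiableAt two_ne_zero).hasFDerivAt

lemma inner_ambientDeriv (g : G) (x : sphere (0 : E) 1) (w : E) :
    inner ℝ ((g • x : sphere (0 : E) 1) : E) (ambientDeriv g x w) = 0 := by
  rw [← ambientSMul_coe]
  exact inner_fderiv_eq_zero (hasFDerivAt_ambientSMul g x).differentiableAt
    (.of_forall fun _ => norm_eq_of_mem_sphere _) w

lemma contDiffSphere_ambientDeriv (g : G) :
    ContDiffSphere fun x : sphere (0 : E) 1 => ambientDeriv g x := fun x => by
  refine ContDiffAt.comp (g := fderiv ℝ (ambientSMul g)) (x : E) ?_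
    (contDiffAt_coe_radialProj (ne_zero_of_mem_unit_sphere x))
  rw [radialProj_coe]
  exact (ContDiffSphereSMul.contDiffAt_ambientSMul g x).fderiv_right le_rfl

lemma contDiffSphere_const_smul (g : G) :
    ContDiffSphere fun x : sphere (0 : E) 1 => ((g • x : sphere (0 : E) 1) : E) := fun x =>
  (ContDiffSphereSMul.contDiffAt_ambientSMul g x).of_le one_le_two

lemma ContDiffSphere.comp_const_smul {F : Type*} [NormedAddCommGroup F] [NormedSpace ℝ F]
    {V : sphere (0 : E) 1 → F} (hV : ContDiffSphere V) (g : G) :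
    ContDiffSphere fun x => V (g • x) := fun x => by
  have h := ContDiffAt.comp (x : E) (by rw [radialProj_coe]; exact hV (g • x))
    (contDiffSphere_const_smul g x)
  simpa only [Function.comp_def, radialProj_coe] using h

lemma ambientDeriv_mul (g h : G) (x : sphere (0 : E) 1) :
    ambientDeriv (g * h) x = ambientDeriv g (h • x) ∘L ambientDeriv h x := by
  have hg := hasFDerivAt_ambientSMul g (h • x)
  rw [← ambientSMul_coe] at hg
  refine HasFDerivAt.fderiv ((hg.comp (x : E) (hasFDerivAt_ambientSMul h x)).congr_of_eventuallyEq
    (.of_forall fun z => ?_))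
  rw [Function.comp_apply, ambientSMul, ambientSMul, ambientSMul, radialProj_coe, mul_smul]

end SphereAction

section StereoAction

variable {G E : Type*} [NormedAddCommGroup E] [InnerProductSpace ℝ E] [Group G]
  [MulAction G (sphere (0 : E) 1)]

lemma smul_eq_fixedPoint_iff {X : Type*} [MulAction G X] (x₀ : MulAction.fixedPoints G X) (g : G)
    {x : X} : g • x = x₀ ↔ x = x₀ := by
  rw [smul_eq_iff_eq_inv_smul, x₀.2 g⁻¹]

variable (x₀ : MulAction.fixedPoints G (sphere (0 : E) 1))

/-- The action of `G` on the complement of the fixed point `x₀` in the stereographic chart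
from `x₀`. -/
@[reducible] noncomputable def stereoMulAction : MulAction G (ℝ ∙ (x₀.1 : E))ᗮ where
  smul g y := stereoChart x₀.1 (g • (stereoChart x₀.1).symm y)
  one_smul y := by
    change stereoChart x₀.1 ((1 : G) • (stereoChart x₀.1).symm y) = y
    rw [one_smul, stereoChart_apply_symm]
  mul_smul g h y := by
    change stereoChart x₀.1 ((g * h) • (stereoChart x₀.1).symm y) =
      stereoChart x₀.1 (g • (stereoChart x₀.1).symm
        (stereoChart x₀.1 (h • (stereoChart x₀.1).symm y)))
    rw [stereoChart_symm_apply ((smul_eq_fixedPoint_iff x₀ h).not.2 (stereoChart_symm_ne y)),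
      mul_smul]

attribute [local instance] stereoMulAction

lemma stereoChart_symm_smul (g : G) (y : (ℝ ∙ (x₀.1 : E))ᗮ) :
    (stereoChart x₀.1).symm (g • y) = g • (stereoChart x₀.1).symm y :=
  stereoChart_symm_apply ((smul_eq_fixedPoint_iff x₀ g).not.2 (stereoChart_symm_ne y))

lemma mem_fixedPoints_stereoMulAction_iff {y : (ℝ ∙ (x₀.1 : E))ᗮ} :
    y ∈ MulAction.fixedPoints G (ℝ ∙ (x₀.1 : E))ᗮ ↔
      (stereoChart x₀.1).symm y ∈ MulAction.fixedPoints G (sphere (0 : E) 1) := by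
  refine forall_congr' fun g => ?_
  rw [← stereoChart_symm_smul]
  exact ⟨congrArg _, fun h => by
    rw [← stereoChart_apply_symm (g • y), h, stereoChart_apply_symm]⟩

lemma IsSemifree.stereo (hfree : IsSemifree G (sphere (0 : E) 1)) :
    IsSemifree G (ℝ ∙ (x₀.1 : E))ᗮ := fun y hy g hg hgy =>
  hfree _ ((mem_fixedPoints_stereoMulAction_iff x₀).not.1 hy) g hg <| by
    rw [← stereoChart_symm_smul, hgy]

variable [Nontrivial E] [ContDiffSphereSMul G E]

lemma contDiffConstSMul_stereo : ContDiffConstSMul G (ℝ ∙ (x₀.1 : E))ᗮ where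
  contDiff_const_smul g := contDiff_iff_contDiffAt.2 fun y => by
    have hsymm : ContDiffAt ℝ 2 (fun y => ((stereoChart x₀.1).symm y : E)) y :=
      contDiff_coe_stereoChart_symm.contDiffAt
    have hact := (ContDiffSphereSMul.contDiffAt_ambientSMul g _).comp y hsymm
    have hne := (smul_eq_fixedPoint_iff x₀ g).not.2 (stereoChart_symm_ne y)
    have hchart := contDiffAt_stereoToFun (m := 2) hne
    rw [← ambientSMul_coe] at hchart
    refine (hchart.comp y hact).congr_of_eventuallyEq (.of_forall fun y => ?_)
    simp only [Function.comp_apply, ambientSMul_coe]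
    rfl

attribute [local instance] contDiffConstSMul_stereo

lemma stereoInvDeriv_smulDeriv (g : G) (y v : (ℝ ∙ (x₀.1 : E))ᗮ) :
    stereoInvDeriv x₀.1 (g • y) (smulDeriv g y v) =
      ambientDeriv g ((stereoChart x₀.1).symm y) (stereoInvDeriv x₀.1 y v) := by
  have hchart := (hasFDerivAt_coe_stereoChart_symm (g • y)).comp y (hasFDerivAt_smul g y)
  have hambient := (hasFDerivAt_ambientSMul g _).comp y (hasFDerivAt_coe_stereoChart_symm y)
  exact congrArg (· v) (hchart.unique (hambient.congr_of_eventuallyEq (.of_forall fun y => by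
    simp only [Function.comp_apply, ambientSMul_coe, stereoChart_symm_smul])))

variable {x₀} {V : sphere (0 : E) 1 → E}

lemma IsEquivariantTangentField.isEquivariantField_stereoPullback
    (he : IsEquivariantTangentField G V) (hV : IsTangentField V) :
    IsEquivariantField G (stereoPullback x₀.1 V) := fun g y => by
  have h : stereoInvDeriv x₀.1 (g • y) (smulDeriv g y (stereoPullback x₀.1 V y)) =
      V ((stereoChart x₀.1).symm (g • y)) := by
    rw [stereoInvDeriv_smulDeriv, hV.stereoInvDeriv_stereoPullback, ← he, stereoChart_symm_smul]
  rw [stereoPullback, ← h, stereoDeriv_stereoInvDeriv]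

lemma IsEquivariantField.isEquivariantTangentField_stereoPushforward
    {f : (ℝ ∙ (x₀.1 : E))ᗮ → (ℝ ∙ (x₀.1 : E))ᗮ} (hf : IsEquivariantField G f)
    (he : IsEquivariantTangentField G V) :
    IsEquivariantTangentField G (stereoPushforward x₀.1 V f) := fun g x => by
  by_cases hx : x = x₀.1
  · rw [hx, x₀.2 g, stereoPushforward_self, ← he, x₀.2 g]
  · obtain ⟨y, rfl⟩ : ∃ y, (stereoChart x₀.1).symm y = x := ⟨_, stereoChart_symm_apply hx⟩
    rw [← stereoChart_symm_smul, stereoPushforward_of_ne (stereoChart_symm_ne _),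
      stereoPushforward_of_ne (stereoChart_symm_ne _), stereoChart_apply_symm,
      stereoChart_apply_symm, hf, stereoInvDeriv_smulDeriv]

variable [Finite G] [FiniteDimensional ℝ E]

theorem IsEquivariantTangentField.exists_ne_zero (hfree : IsSemifree G (sphere (0 : E) 1))
    (x₀ : MulAction.fixedPoints G (sphere (0 : E) 1))
    (hdim : 3 < Module.finrank ℝ E ∨ Module.finrank ℝ E = 2 ∧
      ∃ x ∈ MulAction.fixedPoints G (sphere (0 : E) 1), x ≠ x₀)
    (he : IsEquivariantTangentField G V) (hV : IsTangentField V)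
    (hF : ∀ x ∈ MulAction.fixedPoints G (sphere (0 : E) 1), V x ≠ 0)
    {X : sphere (0 : E) 1 → E} (hX : IsTangentField X) (hne : ∀ x, X x ≠ 0)
    (hVX : 0 < inner ℝ (V x₀) (X x₀)) :
    ∃ W : sphere (0 : E) 1 → E, Continuous W ∧ (∀ x : sphere (0 : E) 1, inner ℝ (x : E) (W x) = 0) ∧
      IsEquivariantTangentField G W ∧ ∀ x : sphere (0 : E) 1, W x ≠ 0 := by
  obtain ⟨W, hW, hW0, hWV⟩ := hV.exists_ne_zero_eqOffCompact hX hne hVX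
  have hfinrank : Module.finrank ℝ (ℝ ∙ (x₀.1 : E))ᗮ + 1 = Module.finrank ℝ E := by
    rw [← finrank_span_singleton (K := ℝ) (ne_zero_of_mem_unit_sphere x₀.1), add_comm]
    exact (ℝ ∙ (x₀.1 : E)).finrank_add_finrank_orthogonal
  have hdim' : 2 < Module.finrank ℝ (ℝ ∙ (x₀.1 : E))ᗮ ∨ Module.finrank ℝ (ℝ ∙ (x₀.1 : E))ᗮ = 1 ∧
      (MulAction.fixedPoints G (ℝ ∙ (x₀.1 : E))ᗮ).Nonempty := by
    refine hdim.imp (by lia) fun ⟨_, x, hx, hne⟩ => ⟨by lia, stereoChart x₀.1 x, ?_⟩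
    rwa [mem_fixedPoints_stereoMulAction_iff, stereoChart_symm_apply hne]
  have hpull := he.isEquivariantField_stereoPullback (x₀ := x₀) hV
  obtain ⟨f, hf, hfe, hfV, hf0⟩ := hpull.exists_ne_zero
    (hfree.stereo x₀) hdim' hV.contDiff_stereoPullback
    (fun y hy => hV.stereoPullback_eq_zero_iff.not.2
      (hF _ ((mem_fixedPoints_stereoMulAction_iff x₀).1 hy)))
    hW.contDiff_stereoPullback (fun y => hW.stereoPullback_eq_zero_iff.not.2 (hW0 _))
    (eqOffCompact_stereoPullback hWV)
  exact ⟨stereoPushforward x₀.1 V f,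
    hV.continuous_stereoPushforward (hfV.mono (subset_univ _)) hf.continuous,
    hV.inner_stereoPushforward, hfe.isEquivariantTangentField_stereoPushforward he,
    stereoPushforward_ne_zero (hF _ x₀.2) hf0⟩

end StereoAction

/-! ### Averaging displacements of the fixed point set -/

lemma exists_contDiff_inner_pos {X E : Type*} [TopologicalSpace X] [NormedAddCommGroup E]
    [InnerProductSpace ℝ E] [FiniteDimensional ℝ E] {ι : X → E}
    (hι : Topology.IsClosedEmbedding ι) {a : X → E} (ha : Continuous a) (hne : ∀ x, a x ≠ 0) :
    ∃ u : E → E, ContDiff ℝ 1 u ∧ ∀ x, 0 < inner ℝ (a x) (u (ι x)) := by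
  let t (z : E) : Set E := {v | ∀ x, ι x = z → 0 < inner ℝ (a x) v}
  have hconvex (z : E) : Convex ℝ (t z) := by
    intro v hv w hw r s hr hs hrs x hx
    rw [inner_add_right, real_inner_smul_right, real_inner_smul_right]
    exact convex_Ioi (0 : ℝ) (hv x hx) (hw x hx) hr hs hrs
  have hlocal (z : E) : ∃ v, ∀ᶠ z' in 𝓝 z, v ∈ t z' := by
    by_cases hz : z ∈ range ι
    · obtain ⟨x, rfl⟩ := hz
      have hpos : ∀ᶠ y in 𝓝 x, 0 < inner ℝ (a y) (a x) :=
        (ha.inner continuous_const).continuousAt.eventually_const_lt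
          (real_inner_self_pos.2 (hne x))
      rw [hι.isInducing.nhds_eq_comap, eventually_comap] at hpos
      exact ⟨a x, hpos⟩
    · refine ⟨0, ?_⟩
      filter_upwards [hι.isClosed_range.isOpen_compl.mem_nhds hz] with y hy x hx using
        absurd ⟨x, hx⟩ hy
  obtain ⟨u, hu⟩ :=
    exists_contMDiffMap_forall_mem_convex_of_local_const 𝓘(ℝ, E) (n := 1) hconvex hlocal
  exact ⟨u, u.contMDiff.contDiff, fun x => hu (ι x) x rfl⟩

lemma inner_pos_of_norm_sub_le {E : Type*} [NormedAddCommGroup E] [InnerProductSpace ℝ E]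
    {v w : E} (hw : w ≠ 0) (h : ‖w - v‖ ≤ 2⁻¹ * ‖w‖) : 0 < inner ℝ w v := by
  have hcs : inner ℝ w (w - v) ≤ 2⁻¹ * ‖w‖ ^ 2 :=
    calc inner ℝ w (w - v) ≤ ‖w‖ * ‖w - v‖ := real_inner_le_norm _ _
      _ ≤ ‖w‖ * (2⁻¹ * ‖w‖) := by gcongr
      _ = 2⁻¹ * ‖w‖ ^ 2 := by ring
  rw [inner_sub_right, real_inner_self_eq_norm_sq] at hcs
  have hpos : 0 < ‖w‖ ^ 2 := pow_pos (norm_pos_iff.2 hw) 2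
  linarith

section Average

variable {G E : Type*} [NormedAddCommGroup E] [InnerProductSpace ℝ E] [Nontrivial E] [Group G]
  [MulAction G (sphere (0 : E) 1)]

/-- The sum of the push-forwards of the vector field `U` on the unit sphere under the elements
of `G`. -/
noncomputable def sphereSymmetrization (G : Type*) [Group G] [MulAction G (sphere (0 : E) 1)]
    [Fintype G] (U : sphere (0 : E) 1 → E) (x : sphere (0 : E) 1) : E :=
  ∑ g : G, ambientDeriv g (g⁻¹ • x) (U (g⁻¹ • x))

lemma sphereSymmetrization_of_mem_fixedPoints [Fintype G] (U : sphere (0 : E) 1 → E)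
    {x : sphere (0 : E) 1} (hx : x ∈ MulAction.fixedPoints G (sphere (0 : E) 1)) :
    sphereSymmetrization G U x = (∑ g : G, ambientDeriv g x) (U x) := by
  simp only [sphereSymmetrization, hx _, sum_apply]

variable [ContDiffSphereSMul G E]

lemma isTangentField_sphereSymmetrization [Fintype G] {U : sphere (0 : E) 1 → E}
    (hU : ContDiffSphere U) : IsTangentField (sphereSymmetrization G U) where
  contDiffSphere x := ContDiffAt.sum fun g _ =>
    ((contDiffSphere_ambientDeriv g).comp_const_smul g⁻¹ x).clm_apply (hU.comp_const_smul g⁻¹ x)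
  inner_eq_zero x := by
    rw [sphereSymmetrization, inner_sum]
    refine Finset.sum_eq_zero fun g _ => ?_
    have h := inner_ambientDeriv g (g⁻¹ • x) (U (g⁻¹ • x))
    rwa [smul_inv_smul] at h

lemma isEquivariantTangentField_sphereSymmetrization [Fintype G] (U : sphere (0 : E) 1 → E) :
    IsEquivariantTangentField G (sphereSymmetrization G U) := fun h x => by
  rw [sphereSymmetrization, sphereSymmetrization, map_sum]
  refine (Fintype.sum_equiv (Equiv.mulLeft h) _ _ fun g => ?_).symm
  rw [Equiv.coe_mulLeft, mul_inv_rev, mul_smul, inv_smul_smul, ambientDeriv_mul, smul_inv_smul,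
    ContinuousLinearMap.comp_apply]

-- As `y - x = g • y - g • x`, the differential of `g` at `x` almost fixes the displacement `y - x`.
lemma eventually_norm_sub_ambientDeriv_le (g : G) (x : sphere (0 : E) 1) :
    ∀ᶠ q : sphere (0 : E) 1 × sphere (0 : E) 1 in 𝓝 (x, x), g • q.1 = q.1 → g • q.2 = q.2 →
      ‖((q.2 - q.1 : E)) - ambientDeriv g q.1 (q.2 - q.1)‖ ≤ 2⁻¹ * ‖(q.2 - q.1 : E)‖ := by
  have hstrict := ((ContDiffSphereSMul.contDiffAt_ambientSMul g x).hasStrictFDerivAt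
    two_ne_zero).isLittleO.def (c := 4⁻¹) (by norm_num)
  have hcoe : Tendsto (fun q : sphere (0 : E) 1 × sphere (0 : E) 1 => ((q.2 : E), (q.1 : E)))
      (𝓝 (x, x)) (𝓝 ((x : E), (x : E))) :=
    Continuous.tendsto (by fun_prop) (x, x)
  have hderiv : ∀ᶠ q : sphere (0 : E) 1 × sphere (0 : E) 1 in 𝓝 (x, x),
      ‖ambientDeriv g x - ambientDeriv g q.1‖ < 4⁻¹ := by
    have h : Continuous fun q : sphere (0 : E) 1 × sphere (0 : E) 1 =>
        ‖ambientDeriv g x - ambientDeriv g q.1‖ :=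
      (continuous_const.sub ((contDiffSphere_ambientDeriv g).continuous.comp continuous_fst)).norm
    exact h.continuousAt.eventually_lt_const (by simp)
  filter_upwards [hcoe.eventually hstrict, hderiv] with q hq hqd hq₁ hq₂
  rw [ambientSMul_coe, ambientSMul_coe, hq₁, hq₂] at hq
  set w : E := q.2 - q.1
  calc ‖w - ambientDeriv g q.1 w‖
      = ‖(w - ambientDeriv g x w) + (ambientDeriv g x - ambientDeriv g q.1) w‖ := by simp
    _ ≤ 4⁻¹ * ‖w‖ + 4⁻¹ * ‖w‖ :=
        norm_add_le_of_le hq ((ContinuousLinearMap.le_opNorm _ _).trans (by gcongr))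
    _ = 2⁻¹ * ‖w‖ := by ring

variable (G E) in
lemma isClosed_fixedPoints_sphere : IsClosed (MulAction.fixedPoints G (sphere (0 : E) 1)) :=
  have : ContinuousConstSMul G (sphere (0 : E) 1) :=
    ⟨fun g => continuous_induced_rng.2 (contDiffSphere_const_smul g).continuous⟩
  isClosed_fixedPoints_of_continuousConstSMul G _

variable (G E) in
lemma exists_pos_forall_inner_sum_ambientDeriv_pos [Fintype G] [FiniteDimensional ℝ E] :
    ∃ δ > (0 : ℝ), ∀ x y : MulAction.fixedPoints G (sphere (0 : E) 1), y ≠ x → dist y x < δ →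
      0 < inner ℝ (y.1 - x.1 : E) ((∑ g : G, ambientDeriv g x.1) (y.1 - x.1 : E)) := by
  have : CompactSpace (MulAction.fixedPoints G (sphere (0 : E) 1)) :=
    isCompact_iff_compactSpace.1 (isClosed_fixedPoints_sphere G E).isCompact
  have hnear : ∀ᶠ q : MulAction.fixedPoints G (sphere (0 : E) 1) ×
      MulAction.fixedPoints G (sphere (0 : E) 1) in uniformity _, ∀ g : G,
      ‖((q.2.1 - q.1.1 : E)) - ambientDeriv g q.1.1 (q.2.1 - q.1.1)‖ ≤
        2⁻¹ * ‖(q.2.1 - q.1.1 : E)‖ := by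
    refine eventually_all.2 fun g => ?_
    rw [← nhdsSet_diagonal_eq_uniformity, eventually_nhdsSet_iff_forall]
    rintro ⟨x, y⟩ (rfl : x = y)
    have hcoe : Tendsto (fun q : MulAction.fixedPoints G (sphere (0 : E) 1) ×
      MulAction.fixedPoints G (sphere (0 : E) 1) => (q.1.1, q.2.1)) (𝓝 (x, x)) (𝓝 (x.1, x.1)) :=
      Continuous.tendsto (by fun_prop) (x, x)
    exact (hcoe.eventually (eventually_norm_sub_ambientDeriv_le g x.1)).mono
      fun q hq => hq (q.1.2 g) (q.2.2 g)
  obtain ⟨δ, hδ, h⟩ := Metric.mem_uniformity_dist.1 hnear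
  refine ⟨δ, hδ, fun x y hyx hdist => ?_⟩
  rw [sum_apply, inner_sum]
  exact Finset.sum_pos (fun g _ => inner_pos_of_norm_sub_le
    (sub_ne_zero.2 fun hval => hyx (Subtype.ext (Subtype.ext hval)))
    (h (by rwa [dist_comm]) g)) Finset.univ_nonempty

end Average

/-- The space `X` has continuous self-maps without fixed points arbitrarily close to the
identity. -/
def HasSmallFixedPointFreeMaps (X : Type*) [PseudoMetricSpace X] : Prop :=
  ∀ δ > 0, ∃ φ : C(X, X), ∀ x, φ x ≠ x ∧ dist (φ x) x < δ

theorem exists_isEquivariantTangentField_ne_zero_on_fixedPoints {G E : Type*}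
    [NormedAddCommGroup E] [InnerProductSpace ℝ E] [Nontrivial E] [FiniteDimensional ℝ E]
    [Group G] [Finite G] [MulAction G (sphere (0 : E) 1)] [ContDiffSphereSMul G E]
    (hmaps : HasSmallFixedPointFreeMaps (MulAction.fixedPoints G (sphere (0 : E) 1))) :
    ∃ V, IsTangentField V ∧ IsEquivariantTangentField G V ∧
      ∀ x ∈ MulAction.fixedPoints G (sphere (0 : E) 1), V x ≠ 0 := by
  have := Fintype.ofFinite G
  obtain ⟨δ, hδ, hpos⟩ := exists_pos_forall_inner_sum_ambientDeriv_pos G E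
  obtain ⟨φ, hφ⟩ := hmaps δ hδ
  let w (x : MulAction.fixedPoints G (sphere (0 : E) 1)) : E := (φ x).1 - x.1
  let A (x : MulAction.fixedPoints G (sphere (0 : E) 1)) : E →L[ℝ] E := ∑ g : G, ambientDeriv g x.1
  have hpos' (x) : 0 < inner ℝ (w x) (A x (w x)) := hpos x (φ x) (hφ x).1 (hφ x).2
  have hA : Continuous A := continuous_finsetSum _ fun g _ =>
    (contDiffSphere_ambientDeriv g).continuous.comp continuous_subtype_val
  have hclosed : Topology.IsClosedEmbedding
      fun x : MulAction.fixedPoints G (sphere (0 : E) 1) => (x.1 : E) :=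
    isClosed_sphere.isClosedEmbedding_subtypeVal.comp
      (isClosed_fixedPoints_sphere G E).isClosedEmbedding_subtypeVal
  obtain ⟨u, hu, hupos⟩ := exists_contDiff_inner_pos hclosed
    (a := fun x => ContinuousLinearMap.adjoint (A x) (w x))
    ((ContinuousLinearMap.adjoint.continuous.comp hA).clm_apply (by fun_prop)) fun x h => by
      simpa [← ContinuousLinearMap.adjoint_inner_left, h] using hpos' x
  refine ⟨sphereSymmetrization G fun x => u x, isTangentField_sphereSymmetrization fun x =>
    hu.contDiffAt.comp (x : E) (contDiffAt_coe_radialProj (ne_zero_of_mem_unit_sphere x)),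
    isEquivariantTangentField_sphereSymmetrization _, fun x hx h => ?_⟩
  rw [sphereSymmetrization_of_mem_fixedPoints _ hx] at h
  have hxpos := hupos ⟨x, hx⟩
  rw [ContinuousLinearMap.adjoint_inner_left, h, inner_zero_right] at hxpos
  exact hxpos.false

/-! ### Odd-dimensional spheres -/

lemma HasSmallFixedPointFreeMaps.of_homeomorph {X Y : Type*} [PseudoMetricSpace X]
    [PseudoMetricSpace Y] [CompactSpace Y] (h : HasSmallFixedPointFreeMaps Y) (e : X ≃ₜ Y) :
    HasSmallFixedPointFreeMaps X := fun δ hδ => by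
  obtain ⟨ε, hε, he⟩ :=
    Metric.uniformContinuous_iff.1 (CompactSpace.uniformContinuous_of_continuous e.symm.continuous)
      δ hδ
  obtain ⟨φ, hφ⟩ := h ε hε
  refine ⟨⟨fun x => e.symm (φ (e x)), by fun_prop⟩, fun x => ⟨?_, ?_⟩⟩
  · simpa [e.symm_apply_eq] using (hφ (e x)).1
  · simpa using he (hφ (e x)).2

lemma hasSmallFixedPointFreeMaps_sphere_of_complex (F : Type*) [NormedAddCommGroup F]
    [NormedSpace ℂ F] : HasSmallFixedPointFreeMaps (sphere (0 : F) 1) := fun δ hδ => by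
  have : Nontrivial Circle := ⟨1, -1, fun h => by norm_num [Circle.ext_iff] at h⟩
  have hnear : ∀ᶠ c : Circle in 𝓝[≠] 1, dist c 1 < δ :=
    mem_nhdsWithin_of_mem_nhds (ball_mem_nhds 1 hδ)
  obtain ⟨c, hcδ, hc : c ≠ 1⟩ := (hnear.and self_mem_nhdsWithin).exists
  let φ (x : sphere (0 : F) 1) : sphere (0 : F) 1 :=
    ⟨(c : ℂ) • (x : F), by simp [norm_smul, Circle.norm_coe]⟩
  have hsub (x : sphere (0 : F) 1) : (φ x : F) - x = ((c : ℂ) - 1) • (x : F) := by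
    rw [sub_smul, one_smul]
  refine ⟨⟨φ, by fun_prop⟩, fun x => ⟨fun h => ?_, ?_⟩⟩
  · have h0 := (hsub x).symm.trans (sub_eq_zero.2 (congrArg Subtype.val h))
    exact hc (Circle.ext (sub_eq_zero.1 ((smul_eq_zero_iff_left (ne_zero_of_mem_unit_sphere x)).1
      h0)))
  · rw [ContinuousMap.coe_mk, Subtype.dist_eq, dist_eq_norm, hsub, norm_smul,
      norm_eq_of_mem_sphere, mul_one, ← dist_eq_norm]
    exact hcδ

section Even

variable {E : Type*} [NormedAddCommGroup E] [InnerProductSpace ℝ E] [FiniteDimensional ℝ E]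

lemma nonempty_linearIsometryEquiv_complex {r : ℕ} (hr : Module.finrank ℝ E = 2 * r) :
    Nonempty (E ≃ₗᵢ[ℝ] EuclideanSpace ℂ (Fin r)) := by
  have : FiniteDimensional ℝ (EuclideanSpace ℂ (Fin r)) := FiniteDimensional.complexToReal _
  exact ⟨(stdOrthonormalBasis ℝ E).equiv (stdOrthonormalBasis ℝ _)
    (finCongr (by rw [hr, finrank_real_of_complex, finrank_euclideanSpace_fin]))⟩

lemma hasSmallFixedPointFreeMaps_sphere (hE : Even (Module.finrank ℝ E)) :
    HasSmallFixedPointFreeMaps (sphere (0 : E) 1) := by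
  obtain ⟨r, hr⟩ := hE.exists_two_nsmul
  obtain ⟨e⟩ := nonempty_linearIsometryEquiv_complex (E := E) hr
  have : FiniteDimensional ℝ (EuclideanSpace ℂ (Fin r)) := FiniteDimensional.complexToReal _
  exact (hasSmallFixedPointFreeMaps_sphere_of_complex _).of_homeomorph
    (e.toHomeomorph.subtype fun x => by simp)

lemma exists_linearIsometry_inner_eq_zero (hE : Even (Module.finrank ℝ E)) :
    ∃ J : E →ₗᵢ[ℝ] E, ∀ x, inner ℝ x (J x) = 0 := by
  obtain ⟨r, hr⟩ := hE.exists_two_nsmul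
  obtain ⟨e⟩ := nonempty_linearIsometryEquiv_complex (E := E) hr
  let J : E →ₗᵢ[ℝ] E :=
    { toFun x := e.symm (Complex.I • e x)
      map_add' := by simp
      map_smul' c x := by
        rw [e.map_smul, smul_comm, e.symm.map_smul, RingHom.id_apply]
      norm_map' x := by simp [norm_smul] }
  refine ⟨J, fun x => ?_⟩
  calc inner ℝ x (J x) = inner ℝ (e x) (Complex.I • e x) := by
        rw [← e.inner_map_map]
        exact congrArg _ (e.apply_symm_apply _)
    _ = ∑ i, inner ℝ (e x i) (Complex.I * e x i) := PiLp.inner_apply _ _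
    _ = 0 := Finset.sum_eq_zero fun i _ => by simp [Complex.inner]; ring

lemma exists_isTangentField_ne_zero_inner_pos [Nontrivial E] (hE : Even (Module.finrank ℝ E))
    (x₀ : sphere (0 : E) 1) {w : E} (hw : w ≠ 0) (hxw : inner ℝ (x₀ : E) w = 0) :
    ∃ X : sphere (0 : E) 1 → E, IsTangentField X ∧ (∀ x, X x ≠ 0) ∧ 0 < inner ℝ w (X x₀) := by
  obtain ⟨J, hJ⟩ := exists_linearIsometry_inner_eq_zero hE
  let v : E := ‖w‖⁻¹ • w
  let R : E ≃ₗᵢ[ℝ] E := (ℝ ∙ (J x₀ - v))ᗮ.reflection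
  have hRJ : R (J x₀) = v := Submodule.reflection_sub <| by
    rw [J.norm_map, norm_eq_of_mem_sphere, norm_smul, norm_inv, norm_norm,
      inv_mul_cancel₀ (norm_ne_zero_iff.2 hw)]
  have hRx₀ : R x₀ = x₀ := by
    refine Submodule.reflection_mem_subspace_eq_self ?_
    rw [Submodule.mem_orthogonal_singleton_iff_inner_left, inner_sub_right, hJ,
      real_inner_smul_right, hxw, mul_zero, sub_zero]
  have hR (x : E) : R (R x) = x := Submodule.reflection_reflection _ x
  refine ⟨fun x => R (J (R x)), ⟨fun x => ?_, fun x => ?_⟩, fun x h => ?_, ?_⟩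
  · exact (R.contDiff.comp (J.contDiff.comp R.contDiff)).contDiffAt.comp (x : E)
      (contDiffAt_coe_radialProj (ne_zero_of_mem_unit_sphere x))
  · rw [← R.inner_map_map, hR, hJ]
  · simpa using (congrArg norm h)
  · beta_reduce
    rw [hRx₀, hRJ, real_inner_smul_right, real_inner_self_eq_norm_sq]
    positivity

end Even

/-! ### Ambient and intrinsic vector fields on the sphere -/

section Intrinsic

variable {E : Type*} [NormedAddCommGroup E] [InnerProductSpace ℝ E] [Nontrivial E] {n : ℕ}
  [Fact (Module.finrank ℝ E = n + 1)]

lemma contMDiffAt_radialProj {m : ℕ∞ω} {x : E} (hx : x ≠ 0) :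
    ContMDiffAt 𝓘(ℝ, E) (𝓡 n) m radialProj x := by
  let U : TopologicalSpace.Opens E := ⟨{0}ᶜ, isOpen_compl_singleton⟩
  have hcoe : ContMDiff 𝓘(ℝ, E) 𝓘(ℝ, E) m fun y : U =>
      ((radialProj (y : E) : sphere (0 : E) 1) : E) :=
    fun y => contMDiffAt_subtype_iff.2 (contDiffAt_coe_radialProj y.2).contMDiffAt
  exact (contMDiffAt_subtype_iff (x := (⟨x, hx⟩ : U))).1
    (hcoe.codRestrict_sphere (fun y => (radialProj (y : E)).2) ⟨x, hx⟩)

lemma mdifferentiableAt_radialProj (x : sphere (0 : E) 1) :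
    MDifferentiableAt 𝓘(ℝ, E) (𝓡 n) radialProj (x : E) :=
  (contMDiffAt_radialProj (ne_zero_of_mem_unit_sphere x)).mdifferentiableAt one_ne_zero

lemma contDiffAt_comp_radialProj {m : ℕ∞ω} {f : sphere (0 : E) 1 → sphere (0 : E) 1}
    (hf : ContMDiff (𝓡 n) (𝓡 n) m f) (x : sphere (0 : E) 1) :
    ContDiffAt ℝ m (fun z => ((f (radialProj z) : sphere (0 : E) 1) : E)) (x : E) :=
  (contMDiff_coe_sphere.contMDiffAt.comp (x : E) (hf.contMDiffAt.comp (x : E)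
    (contMDiffAt_radialProj (ne_zero_of_mem_unit_sphere x)))).contDiffAt

variable (n) in
/-- The tangent vector to the sphere at `x`, considered as an abstract manifold, that corresponds to
the orthogonal projection to the tangent hyperplane of a vector of the ambient space. -/
noncomputable def toTangentSpace (x : sphere (0 : E) 1) : E →L[ℝ] TangentSpace (𝓡 n) x :=
  mfderiv 𝓘(ℝ, E) (𝓡 n) radialProj (x : E)

lemma toTangentSpace_ne_zero {x : sphere (0 : E) 1} {w : E} (hw : inner ℝ (x : E) w = 0)
    (hw0 : w ≠ 0) : toTangentSpace n x w ≠ 0 := fun h => by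
  have hcoe : MDifferentiableAt (𝓡 n) 𝓘(ℝ, E) ((↑) : sphere (0 : E) 1 → E) (radialProj (x : E)) :=
    contMDiff_coe_sphere.mdifferentiable one_ne_zero _
  have hcomp := mfderiv_comp_apply (x : E) hcoe (mdifferentiableAt_radialProj x) w
  rw [mfderiv_eq_fderiv] at hcomp
  exact hw0 (((fderiv_coe_radialProj_apply x hw).symm.trans hcomp).trans
    ((congrArg _ h).trans (map_zero _)))

lemma mfderiv_toTangentSpace {f : sphere (0 : E) 1 → sphere (0 : E) 1}
    (hf : ContMDiff (𝓡 n) (𝓡 n) 1 f) (x : sphere (0 : E) 1) (w : E) :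
    mfderiv (𝓡 n) (𝓡 n) f x (toTangentSpace n x w) =
      toTangentSpace n (f x)
        (fderiv ℝ (fun z => ((f (radialProj z) : sphere (0 : E) 1) : E)) x w) := by
  have hambient := ((contDiffAt_comp_radialProj hf x).differentiableAt
    one_ne_zero).mdifferentiableAt
  have hleft := mfderiv_comp_apply (x : E) (hf.mdifferentiable one_ne_zero (radialProj (x : E)))
    (mdifferentiableAt_radialProj x) w
  have hright := mfderiv_comp_apply (x : E) (mdifferentiableAt_radialProj (n := n) _) hambient w
  have heq : (radialProj ∘ fun z => ((f (radialProj z) : sphere (0 : E) 1) : E)) =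
      f ∘ radialProj := funext fun z => radialProj_coe _
  rw [mfderiv_congr heq, mfderiv_eq_fderiv] at hright
  have h := hleft.symm.trans hright
  rw [radialProj_coe] at h
  exact h

lemma continuous_toTangentSpace {V : sphere (0 : E) 1 → E} (hV : Continuous V) :
    Continuous fun x : sphere (0 : E) 1 =>
      (⟨x, toTangentSpace n x (V x)⟩ : TangentBundle (𝓡 n) (sphere (0 : E) 1)) := by
  have htangent := ContMDiffOn.continuousOn_tangentMapWithin (n := 1) (s := {(0 : E)}ᶜ)
    (fun x hx => (contMDiffAt_radialProj (n := n) hx).contMDiffWithinAt) le_rfl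
    isOpen_compl_singleton.uniqueMDiffOn
  have hV' : Continuous fun x : sphere (0 : E) 1 => (⟨x, V x⟩ : TangentBundle 𝓘(ℝ, E) E) :=
    (tangentBundleModelSpaceHomeomorph 𝓘(ℝ, E)).symm.continuous.comp
      (continuous_subtype_val.prodMk hV)
  refine (htangent.comp_continuous hV' ne_zero_of_mem_unit_sphere).congr fun x => ?_
  refine Bundle.TotalSpace.ext (radialProj_coe x) (heq_of_eq ?_)
  exact congrArg (fun L : E →L[ℝ] EuclideanSpace ℝ (Fin n) => L (V x))
    (mfderivWithin_of_isOpen isOpen_compl_singleton (ne_zero_of_mem_unit_sphere x))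

end Intrinsic

lemma isSemifree_of_prime_card {G X : Type*} [Group G] [MulAction G X]
    (hG : (Nat.card G).Prime) : IsSemifree G X := fun x hx g hg hgx => by
  have : Fact (Nat.card G).Prime := ⟨hG⟩
  refine (MulAction.stabilizer G x).eq_bot_or_eq_top_of_prime_card.elim (fun hbot => ?_)
    fun htop => hx fun h => ?_
  · exact hg ((Subgroup.mem_bot).1 (hbot ▸ MulAction.mem_stabilizer_iff.2 hgx))
  · exact MulAction.mem_stabilizer_iff.1 (htop ▸ Subgroup.mem_top h)

end EquivariantVectorField

section General

open Metric EquivariantVectorField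

theorem exists_nowhere_vanishing_equivariant_vector_field_general {G E : Type*} [Group G]
    [Finite G] [NormedAddCommGroup E] [InnerProductSpace ℝ E] {n : ℕ}
    [Fact (Module.finrank ℝ E = n + 1)] (hn : Odd n) [MulAction G (sphere (0 : E) 1)]
    (hsmooth : ∀ g : G, ContMDiff (𝓡 n) (𝓡 n) 2 fun x : sphere (0 : E) 1 => g • x)
    (hfree : IsSemifree G (sphere (0 : E) 1))
    (hfixed : (MulAction.fixedPoints G (sphere (0 : E) 1)).Nonempty)
    (hmaps : HasSmallFixedPointFreeMaps (MulAction.fixedPoints G (sphere (0 : E) 1))) :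
    ∃ v : (x : sphere (0 : E) 1) → TangentSpace (𝓡 n) x,
      Continuous (fun x => (⟨x, v x⟩ : TangentBundle (𝓡 n) (sphere (0 : E) 1))) ∧
      (∀ x, v x ≠ 0) ∧
      ∀ (g : G) (x : sphere (0 : E) 1),
        mfderiv (𝓡 n) (𝓡 n) (fun y : sphere (0 : E) 1 => g • y) x (v x) = v (g • x) := by
  have hfinrank : Module.finrank ℝ E = n + 1 := Fact.out
  have : Nontrivial E := Module.nontrivial_of_finrank_pos (R := ℝ) (by lia)
  have : FiniteDimensional ℝ E := .of_finrank_pos (by lia)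
  have : ContDiffSphereSMul G E := ⟨fun g x => contDiffAt_comp_radialProj (hsmooth g) x⟩
  obtain ⟨x₀, hx₀⟩ := hfixed
  have hdim : 3 < Module.finrank ℝ E ∨ Module.finrank ℝ E = 2 ∧
      ∃ x ∈ MulAction.fixedPoints G (sphere (0 : E) 1), x ≠ x₀ := by
    obtain ⟨φ, hφ⟩ := hmaps 1 one_pos
    have hφx₀ : (φ ⟨x₀, hx₀⟩).1 ≠ x₀ := fun h => (hφ ⟨x₀, hx₀⟩).1 (Subtype.ext h)
    obtain rfl | hn1 := eq_or_ne n 1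
    · exact .inr ⟨hfinrank, _, (φ ⟨x₀, hx₀⟩).2, hφx₀⟩
    · obtain ⟨m, hm⟩ := hn
      exact .inl (by lia)
  obtain ⟨V, hV, hVe, hVF⟩ := exists_isEquivariantTangentField_ne_zero_on_fixedPoints hmaps
  obtain ⟨X, hX, hX0, hVX⟩ := exists_isTangentField_ne_zero_inner_pos
    (hfinrank ▸ hn.add_one) x₀ (hVF x₀ hx₀) (hV.inner_eq_zero x₀)
  obtain ⟨W, hW, hWt, hWe, hW0⟩ :=
    hVe.exists_ne_zero hfree ⟨x₀, hx₀⟩ hdim hV hVF hX hX0 hVX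
  refine ⟨fun x => toTangentSpace n x (W x), continuous_toTangentSpace hW,
    fun x => toTangentSpace_ne_zero (hWt x) (hW0 x), fun g x => ?_⟩
  beta_reduce
  rw [mfderiv_toTangentSpace ((hsmooth g).of_le one_le_two), hWe]
  rfl

end General

/-- Let `ℤ/p` act smoothly on the standard sphere `S^n` with `n` odd, and
suppose the fixed point set is homeomorphic to a sphere `S^k` of odd dimension `k`.  Then
`S^n` admits a nowhere-vanishing equivariant vector field: a continuous section `v` of the
tangent bundle with `v x ≠ 0` everywhere, such that the differential of each `g ∈ ℤ/p`
carries `v x` to `v (g · x)`. -/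
theorem exists_nowhere_vanishing_equivariant_vector_field (p : ℕ) (hp : p.Prime)
    (n k : ℕ) (hn : Odd n) (hkodd : Odd k)
    (act : ZMod p → ↥(Sph n) → ↥(Sph n))
    (act_zero : ∀ x, act 0 x = x)
    (act_add : ∀ g h x, act (g + h) x = act g (act h x))
    (act_smooth : ∀ g, ContMDiff (𝓡 n) (𝓡 n) (⊤ : ℕ∞) (act g))
    (hhomeo : Nonempty (↥(fixedSet act) ≃ₜ ↥(Sph k))) :
    ∃ v : (x : ↥(Sph n)) → TangentSpace (𝓡 n) x,
      Continuous (fun x : ↥(Sph n) => (⟨x, v x⟩ : TangentBundle (𝓡 n) ↥(Sph n))) ∧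
      (∀ x, v x ≠ 0) ∧
      (∀ (g : ZMod p) (x : ↥(Sph n)),
        mfderiv (𝓡 n) (𝓡 n) (act g) x (v x) = v (act g x)) := by
  let _ : MulAction (Multiplicative (ZMod p)) (Sph n) :=
    { smul g := act g.toAdd
      one_smul := act_zero
      mul_smul g h := act_add g.toAdd h.toAdd }
  have : NeZero p := ⟨hp.ne_zero⟩
  have : Fact (Module.finrank ℝ (EuclideanSpace ℝ (Fin (n + 1))) = n + 1) :=
    ⟨finrank_euclideanSpace_fin⟩
  have hprime : (Nat.card (Multiplicative (ZMod p))).Prime := by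
    rwa [Nat.card_congr Multiplicative.toAdd, Nat.card_zmod]
  obtain ⟨e⟩ := hhomeo
  have hmaps : EquivariantVectorField.HasSmallFixedPointFreeMaps (fixedSet act) :=
    (EquivariantVectorField.hasSmallFixedPointFreeMaps_sphere
      (by rw [finrank_euclideanSpace_fin]; exact hkodd.add_one)).of_homeomorph e
  obtain ⟨x⟩ := (NormedSpace.sphere_nonempty.2 zero_le_one).to_subtype.map e.symm
  exact exists_nowhere_vanishing_equivariant_vector_field_general
    (G := Multiplicative (ZMod p)) hn
    (fun g => (act_smooth g.toAdd).of_le (WithTop.coe_le_coe.2 le_top))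
    (EquivariantVectorField.isSemifree_of_prime_card hprime) ⟨x, x.2⟩ hmaps
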